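/- arXiv:1909.11823 — 2 statements merged into one kernel-verified Lean document; each statement's English description precedes it below -/
import Mathlib

section
/- For the closed-loop error system of the distributed observer-based control, the spectrum can be freely assigned: for any choice of feedback matrices F_i ∈ ℝ^{m_i×n} (i = 1,…,m), any integer q ∈ {1,…,m}, and any multiset Λ of mn + m − 1 complex numbers that is symmetric with respect to the real axis (closed under complex conjugation, with multiplicities), there exist real matrices K_i ∈ ℝ^{n×p_i}, H_{ij} ∈ ℝ^{n×n} (j ∈ 𝒩_i, i = 1,…,m), Ā ∈ ℝ^{(m−1)×(m−1)}, K̄ ∈ ℝ^{(m−1)×p_q}, H̄_j ∈ ℝ^{(m−1)×n} (j ∈ 𝒩_q), and C̄ ∈ ℝ^{n×(m−1)} such that the multiset of eigenvalues of the (mn+m−1)×(mn+m−1) system matrix of the linear system ė_i = (A+K_iC_i)e_i + Σ_{j∈𝒩_i} H_{ij}(e_i − e_j) + Σ_{j=1}^m B_jF_j(e_i − e_j) + δ_{iq} C̄ z (i = 1,…,m), ż = Ā z + K̄ C_q e_q + Σ_{j∈𝒩_q} H̄_j(e_q − e_j), with states e_i ∈ ℝ^n and z ∈ ℝ^{m−1}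 and δ_{iq} the Kronecker delta, equals Λ. -/
open Matrix Finset

/-- The controllability matrix `[B, AB, …, A^{k-1}B]` of the pair `(A, B)`. -/
def ctrbMat {ι κ : Type*} [Fintype ι] [DecidableEq ι]
    (A : Matrix ι ι ℝ) (B : Matrix ι κ ℝ) (k : ℕ) : Matrix ι (Fin k × κ) ℝ :=
  Matrix.of fun i p => ((A ^ (p.1 : ℕ)) * B) i p.2

/-- `(A, B)` is controllable if its controllability matrix has full rank. -/
def Controllable {ι κ : Type*} [Fintype ι] [DecidableEq ι] [Fintype κ]
    (A : Matrix ι ι ℝ) (B : Matrix ι κ ℝ) : Prop :=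
  (ctrbMat A B (Fintype.card ι)).rank = Fintype.card ι

/-- The controllability index: the smallest positive `k` with
`rank [B, AB, …, A^{k-1}B]` full. -/
noncomputable def ctrlIndex {ι κ : Type*} [Fintype ι] [DecidableEq ι] [Fintype κ]
    (A : Matrix ι ι ℝ) (B : Matrix ι κ ℝ) : ℕ :=
  sInf {k | 0 < k ∧ (ctrbMat A B k).rank = Fintype.card ι}

/-- `(C, A)` is observable iff `(Aᵀ, Cᵀ)` is controllable. -/
def Observable {ι κ : Type*} [Fintype ι] [DecidableEq ι] [Fintype κ]
    (C : Matrix κ ι ℝ) (A : Matrix ι ι ℝ) : Prop :=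
  Controllable Aᵀ Cᵀ

namespace SpectrumAssignment

section ResolventNumerator

open Polynomial

lemma C_comp_smul {K σ : Type*} [Semiring K] (a : K) (x : σ → K) :
    (C ∘ (a • x) : σ → K[X]) = C a • (C ∘ x) := by
  ext1; simp

variable {K σ : Type*} [Field K] [Fintype σ] [DecidableEq σ]

/-- The numerator `c adj(X - M) x` of the transfer function `c (X - M)⁻¹ x`. -/
noncomputable def resolventNum (M : Matrix σ σ K) (c x : σ → K) : K[X] :=
  (C ∘ c) ⬝ᵥ ((charmatrix M).adjugate *ᵥ (C ∘ x))

lemma resolventNum_add (M : Matrix σ σ K) (c x y : σ → K) :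
    resolventNum M c (x + y) = resolventNum M c x + resolventNum M c y := by
  simp [resolventNum, mulVec_add, dotProduct_add]

lemma resolventNum_smul (M : Matrix σ σ K) (c : σ → K) (a : K) (x : σ → K) :
    resolventNum M c (a • x) = C a * resolventNum M c x := by
  simp [resolventNum, C_comp_smul, mulVec_smul, dotProduct_smul]

/-- `resolventNum` as a linear map in its last argument. -/
noncomputable def resolventNumLin (M : Matrix σ σ K) (c : σ → K) : (σ → K) →ₗ[K] K[X] where
  toFun := resolventNum M c
  map_add' := resolventNum_add M c
  map_smul' a x := by simp [resolventNum_smul, Polynomial.smul_eq_C_mul]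

lemma det_add_vecMulVec_of_det_ne_zero {R : Type*} [CommRing R] [IsDomain R]
    (A : Matrix σ σ R) (hA : A.det ≠ 0) (u v : σ → R) :
    (A + vecMulVec u v).det = A.det + v ⬝ᵥ (A.adjugate *ᵥ u) := by
  let F := FractionRing R
  let f := algebraMap R F
  have hf : Function.Injective f := IsFractionRing.injective R F
  apply hf
  have hA' : IsUnit (A.map f).det := by
    rw [isUnit_iff_ne_zero, ← RingHom.mapMatrix_apply, ← RingHom.map_det]
    exact (map_ne_zero_iff f hf).2 hA
  have h := det_add_replicateCol_mul_replicateRow (ι := Unit) hA' (f ∘ u) (f ∘ v)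
  have e : f.mapMatrix (A + vecMulVec u v)
      = A.map f + replicateCol Unit (f ∘ u) * replicateRow Unit (f ∘ v) := by
    ext i j
    simp [vecMulVec, Matrix.mul_apply]
  rw [RingHom.map_det, e, h, map_add, RingHom.map_det, RingHom.mapMatrix_apply,
    det_unique (n := Unit), Matrix.add_apply, Matrix.one_apply_eq, mul_add, mul_one]
  congr 1
  have h2 : (replicateRow Unit (f ∘ v) * (A.map f)⁻¹ * replicateCol Unit (f ∘ u)) default default
      = (f ∘ v) ⬝ᵥ ((A.map f)⁻¹ *ᵥ (f ∘ u)) := by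
    rw [dotProduct_mulVec]; rfl
  rw [h2, Matrix.inv_def, smul_mulVec, dotProduct_smul, smul_eq_mul, ← mul_assoc,
    Ring.mul_inverse_cancel _ hA', one_mul, ← RingHom.mapMatrix_apply, ← RingHom.map_adjugate,
    RingHom.map_dotProduct]
  congr 1
  ext i
  simp [RingHom.map_mulVec]

lemma charpoly_add_vecMulVec (M : Matrix σ σ K) (c x : σ → K) :
    (M + vecMulVec x c).charpoly = M.charpoly - resolventNum M c x := by
  have e : charmatrix (M + vecMulVec x c)
      = charmatrix M + vecMulVec (-(C ∘ x)) (C ∘ c) := by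
    ext1 i j
    by_cases h : i = j
    · subst h; simp [charmatrix_apply_eq, vecMulVec]; ring
    · simp [charmatrix_apply_ne _ _ _ h, vecMulVec]; ring
  rw [Matrix.charpoly, e, det_add_vecMulVec_of_det_ne_zero _ (charpoly_monic M).ne_zero]
  simp [resolventNum, mulVec_neg, sub_eq_add_neg, Matrix.charpoly]

lemma resolventNum_degree_lt (M : Matrix σ σ K) (c x : σ → K) :
    (resolventNum M c x).degree < Fintype.card σ := by
  have h := charpoly_add_vecMulVec M c x
  have h2 : resolventNum M c x = M.charpoly - (M + vecMulVec x c).charpoly := by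
    rw [h]; ring
  rw [h2, ← charpoly_degree_eq_dim M]
  exact degree_sub_lt_left (by simp [charpoly_degree_eq_dim]) (charpoly_monic M).ne_zero
    (by simp [(charpoly_monic _).leadingCoeff])

/-- A polynomial solution of `(X - M) P = f x` determines the resolvent numerator. -/
lemma mul_resolventNum_eq (M : Matrix σ σ K) (c x : σ → K) (P : σ → K[X]) (f : K[X])
    (h : charmatrix M *ᵥ P = f • (C ∘ x)) :
    f * resolventNum M c x = M.charpoly * ((C ∘ c) ⬝ᵥ P) := by
  have := congrArg (fun v => (C ∘ c : σ → K[X]) ⬝ᵥ ((charmatrix M).adjugate *ᵥ v)) h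
  simp only [mulVec_mulVec, adjugate_mul, smul_mulVec, one_mulVec, mulVec_smul, dotProduct_smul,
    smul_eq_mul] at this
  exact this.symm

lemma X_mul_resolventNum (M : Matrix σ σ K) (c x : σ → K) :
    X * resolventNum M c x = resolventNum M c (M *ᵥ x) + M.charpoly * C (c ⬝ᵥ x) := by
  have h1 : charmatrix M *ᵥ (C ∘ x) = (X : K[X]) • (C ∘ x) - C ∘ (M *ᵥ x) := by
    ext1 i
    simp [charmatrix, sub_mulVec, RingHom.map_mulVec]
  have h2 := congrArg (fun v => (C ∘ c : σ → K[X]) ⬝ᵥ ((charmatrix M).adjugate *ᵥ v)) h1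
  simp only [mulVec_mulVec, adjugate_mul, smul_mulVec, one_mulVec, mulVec_sub, mulVec_smul,
    dotProduct_sub, dotProduct_smul, smul_eq_mul] at h2
  have h3 : C (c ⬝ᵥ x) = (C ∘ c : σ → K[X]) ⬝ᵥ (C ∘ x) := by
    rw [RingHom.map_dotProduct]
  rw [h3]
  unfold resolventNum Matrix.charpoly
  linear_combination -h2

lemma dvd_mul_resolventNum_sub (M : Matrix σ σ K) (c : σ → K) (p : K[X]) (x : σ → K) :
    M.charpoly ∣ p * resolventNum M c x - resolventNum M c (aeval M p *ᵥ x) := by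
  induction p using Polynomial.induction_on' generalizing x with
  | add p q hp hq =>
    have := dvd_add (hp x) (hq x)
    rw [map_add, add_mulVec, resolventNum_add]
    convert this using 1; ring
  | monomial n a =>
    induction n generalizing x with
    | zero =>
      simp [Algebra.algebraMap_eq_smul_one, smul_mulVec, resolventNum_smul]
    | succ n ih =>
      have h1 := ih (M *ᵥ x)
      have h2 := X_mul_resolventNum M c x
      have h3 : aeval M (monomial (n+1) a) *ᵥ x = aeval M (monomial n a) *ᵥ (M *ᵥ x) := by
        rw [mulVec_mulVec]; congr 1; simp [aeval_monomial, pow_succ, mul_assoc]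
      rw [h3]
      have h4 : (monomial (n+1) a : K[X]) = monomial n a * X := by simp
      have : (monomial (n+1) a : K[X]) * resolventNum M c x
          - resolventNum M c (aeval M (monomial n a) *ᵥ (M *ᵥ x))
          = ((monomial n a : K[X]) * resolventNum M c (M *ᵥ x)
          - resolventNum M c (aeval M (monomial n a) *ᵥ (M *ᵥ x)))
          + M.charpoly * (monomial n a * C (c ⬝ᵥ x)) := by
        rw [h4]; linear_combination (monomial n a : K[X]) * h2
      rw [this]
      exact dvd_add h1 (Dvd.intro _ rfl)

lemma resolventNum_eq_zero_of_dvd (M : Matrix σ σ K) (c x : σ → K)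
    (h : M.charpoly ∣ resolventNum M c x) : resolventNum M c x = 0 :=
  eq_zero_of_dvd_of_degree_lt h (by
    rw [charpoly_degree_eq_dim]; exact resolventNum_degree_lt M c x)

lemma resolventNum_eq_zero_iff (M : Matrix σ σ K) (c x : σ → K) :
    resolventNum M c x = 0 ↔ ∀ k : ℕ, c ⬝ᵥ ((M ^ k) *ᵥ x) = 0 := by
  constructor
  · intro h k
    induction k generalizing x with
    | zero =>
      have h2 := X_mul_resolventNum M c x
      rw [h, mul_zero] at h2
      have h3 : resolventNum M c (M *ᵥ x) = 0 := by
        apply resolventNum_eq_zero_of_dvd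
        exact ⟨- C (c ⬝ᵥ x), by linear_combination -h2⟩
      rw [h3, zero_add, eq_comm, mul_eq_zero] at h2
      simpa using h2.resolve_left (charpoly_monic M).ne_zero
    | succ k ih =>
      have h2 := X_mul_resolventNum M c x
      rw [h, mul_zero] at h2
      have h3 : resolventNum M c (M *ᵥ x) = 0 := by
        apply resolventNum_eq_zero_of_dvd
        exact ⟨- C (c ⬝ᵥ x), by linear_combination -h2⟩
      have := ih (M *ᵥ x) h3
      rwa [mulVec_mulVec, ← pow_succ] at this
  · intro h
    have key : ∀ k : ℕ, X ^ k * resolventNum M c x = resolventNum M c ((M ^ k) *ᵥ x) := by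
      intro k
      induction k with
      | zero => simp
      | succ k ih =>
        have h2 := X_mul_resolventNum M c ((M ^ k) *ᵥ x)
        rw [h k] at h2
        rw [pow_succ', mul_assoc, ih, h2]
        simp [mulVec_mulVec, pow_succ']
    by_contra hne
    have h1 := resolventNum_degree_lt M c ((M ^ (Fintype.card σ)) *ᵥ x)
    rw [← key, degree_mul, degree_X_pow, degree_eq_natDegree hne] at h1
    norm_cast at h1
    omega

lemma charpoly_dvd_mul_resolventNum_iff (M : Matrix σ σ K) (c x : σ → K) (p : K[X]) :
    M.charpoly ∣ p * resolventNum M c x ↔ ∀ k : ℕ, c ⬝ᵥ ((M ^ k * aeval M p) *ᵥ x) = 0 := by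
  have h := dvd_mul_resolventNum_sub M c p x
  rw [dvd_iff_dvd_of_dvd_sub h]
  simp_rw [← mulVec_mulVec]
  rw [← resolventNum_eq_zero_iff]
  exact ⟨resolventNum_eq_zero_of_dvd _ _ _, fun h => h ▸ dvd_zero _⟩

lemma charpoly_dvd_minpoly_pow (M : Matrix σ σ K) :
    M.charpoly ∣ (minpoly K M) ^ (Fintype.card σ) := by
  have h : ∀ i j, M.charpoly ∣ minpoly K M * (charmatrix M).adjugate i j := by
    intro i j
    have := dvd_mul_resolventNum_sub M (Pi.single i 1) (minpoly K M) (Pi.single j 1)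
    rw [minpoly.aeval, zero_mulVec] at this
    have h0 : resolventNum M (Pi.single i 1) (0 : σ → K) = 0 := by
      have := resolventNum_smul M (Pi.single i 1) 0 (0 : σ → K)
      simpa using this
    have h1 : resolventNum M (Pi.single i 1) (Pi.single j 1) = (charmatrix M).adjugate i j := by
      have e : ∀ i : σ, (C ∘ (Pi.single i 1 : σ → K) : σ → K[X]) = Pi.single i 1 := by
        intro i; ext1 k; by_cases hk : k = i
        · subst hk; simp
        · simp [hk]
      simp [resolventNum, e]
    rwa [h0, sub_zero, h1] at this
  choose Q hQ using h
  have h1 : minpoly K M • (charmatrix M).adjugate = M.charpoly • Matrix.of Q := by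
    ext1 i j; simpa using hQ i j
  have h2 := congrArg (fun A => (charmatrix M) * A) h1
  simp only [Matrix.mul_smul, mul_adjugate] at h2
  have h3 : minpoly K M • (1 : Matrix σ σ K[X]) = charmatrix M * Matrix.of Q := by
    have : M.charpoly • (minpoly K M • (1 : Matrix σ σ K[X]))
        = M.charpoly • (charmatrix M * Matrix.of Q) := by
      rw [← h2, smul_comm]; rfl
    exact smul_right_injective _ (charpoly_monic M).ne_zero this
  have h4 := congrArg Matrix.det h3
  rw [det_smul, det_one, mul_one, det_mul] at h4
  exact ⟨_, h4⟩

end ResolventNumerator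

section Scalarization

open Polynomial

variable {K σ β γ : Type*} [Field K] [Fintype σ] [DecidableEq σ] [Fintype β] [Fintype γ]

lemma vecMul_pow_add_mul (M : Matrix σ σ K) (B : Matrix σ β K) (L : Matrix β σ K) (y : σ → K)
    (k : ℕ) (h : ∀ j < k, y ᵥ* ((M + B * L) ^ j * B) = 0) :
    y ᵥ* (M + B * L) ^ k = y ᵥ* M ^ k := by
  induction k with
  | zero => simp
  | succ k ih =>
    rw [pow_succ, Matrix.mul_add, vecMul_add, ← Matrix.mul_assoc, ← vecMul_vecMul _ _ L,
      h k k.lt_succ_self, zero_vecMul, add_zero, ← vecMul_vecMul,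
      ih fun j hj => h j (hj.trans k.lt_succ_self), vecMul_vecMul, ← pow_succ]

lemma pow_add_mul_mulVec (M : Matrix σ σ K) (L : Matrix σ γ K) (C : Matrix γ σ K) (x : σ → K)
    (h : ∀ k : ℕ, (C * (M + L * C) ^ k) *ᵥ x = 0) (k : ℕ) :
    (M + L * C) ^ k *ᵥ x = M ^ k *ᵥ x := by
  induction k with
  | zero => simp
  | succ k ih =>
    rw [pow_succ', Matrix.add_mul, add_mulVec, Matrix.mul_assoc, ← mulVec_mulVec _ L, h k,
      mulVec_zero, add_zero, ← mulVec_mulVec, ih, mulVec_mulVec, ← pow_succ']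

lemma exists_forall_dotProduct_mulVec_ne_zero [Infinite K] {ι : Type*} [Finite ι]
    (D : ι → Matrix γ β K) (hD : ∀ t, D t ≠ 0) :
    ∃ (a : γ → K) (b : β → K), ∀ t, a ⬝ᵥ (D t *ᵥ b) ≠ 0 := by
  classical
  have h1 : ∀ t, ∃ i j, D t i j ≠ 0 := by
    intro t
    by_contra! h
    exact hD t (by ext i j; exact h i j)
  choose i j hij using h1
  obtain ⟨b, hb⟩ := Module.Dual.exists_forall_ne_zero_of_forall_exists
    (fun t => (LinearMap.proj (i t) : (γ → K) →ₗ[K] K) ∘ₗ (D t).mulVecLin)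
    (fun t => ⟨Pi.single (j t) 1, by simpa using hij t⟩)
  obtain ⟨a, ha⟩ := Module.Dual.exists_forall_ne_zero_of_forall_exists
    (fun t => dotProductBilin K K (D t *ᵥ b))
    (fun t => ⟨Pi.single (i t) 1, by simpa using hb t⟩)
  exact ⟨a, b, fun t => by rw [dotProduct_comm]; exact ha t⟩

lemma exists_mul_aeval_mul_ne_zero {γ : Type*} (M : Matrix σ σ K) (B : Matrix σ β K)
    (C : Matrix γ σ K)
    (hctrl : ∀ y, (∀ k : ℕ, y ᵥ* (M ^ k * B) = 0) → y = 0)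
    (hobs : ∀ x, (∀ k : ℕ, (C * M ^ k) *ᵥ x = 0) → x = 0) (r : K[X]) (hr : aeval M r ≠ 0) :
    ∃ k : ℕ, C * M ^ k * aeval M r * B ≠ 0 := by
  classical
  by_contra! h
  have h1 : aeval M r * B = 0 := by
    ext i j
    have : (aeval M r * B) *ᵥ Pi.single j 1 = 0 := by
      apply hobs
      intro k
      rw [mulVec_mulVec, ← Matrix.mul_assoc, h k, zero_mulVec]
    simpa using congrFun this i
  apply hr
  ext i j
  have : Pi.single i 1 ᵥ* aeval M r = 0 := by
    apply hctrl
    intro k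
    have hc : aeval M r * M ^ k = M ^ k * aeval M r := by
      have : M ^ k = aeval M (X ^ k : K[X]) := by simp
      rw [this, ← map_mul, ← map_mul, mul_comm]
    rw [vecMul_vecMul, ← Matrix.mul_assoc, hc, Matrix.mul_assoc, h1, Matrix.mul_zero, vecMul_zero]
  simpa using congrFun this j

lemma dotProduct_aeval_mulVec_eq_zero (M : Matrix σ σ K) (c x : σ → K)
    (h : ∀ k : ℕ, c ⬝ᵥ (M ^ k *ᵥ x) = 0) (p : K[X]) : c ⬝ᵥ (aeval M p *ᵥ x) = 0 := by
  induction p using Polynomial.induction_on' with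
  | add p q hp hq => rw [map_add, add_mulVec, dotProduct_add, hp, hq, add_zero]
  | monomial n a =>
    simp [← C_mul_X_pow_eq_monomial, Algebra.algebraMap_eq_smul_one, smul_mulVec, h]

/-- Scalar input and output directions detecting the whole minimal polynomial. -/
lemma exists_scalar_annihilator [Infinite K] (M : Matrix σ σ K) (B : Matrix σ β K)
    (C : Matrix γ σ K)
    (hctrl : ∀ y, (∀ k : ℕ, y ᵥ* (M ^ k * B) = 0) → y = 0)
    (hobs : ∀ x, (∀ k : ℕ, (C * M ^ k) *ᵥ x = 0) → x = 0) :
    ∃ (a : γ → K) (b : β → K), ∀ p : K[X],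
      M.charpoly ∣ p * resolventNum M (a ᵥ* C) (B *ᵥ b) → minpoly K M ∣ p := by
  classical
  have hμ : minpoly K M ≠ 0 := minpoly.ne_zero (Matrix.isIntegral M)
  let T := (UniqueFactorizationMonoid.normalizedFactors (minpoly K M)).toFinset
  have hT : ∀ t : T, ∃ r, minpoly K M = t * r := fun t =>
    UniqueFactorizationMonoid.dvd_of_mem_normalizedFactors (Multiset.mem_toFinset.1 t.2)
  have hirr : ∀ t : T, Irreducible (t : K[X]) := fun t =>
    UniqueFactorizationMonoid.irreducible_of_normalized_factor _ (Multiset.mem_toFinset.1 t.2)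
  choose r hr using hT
  have hr0 : ∀ t, aeval M (r t) ≠ 0 := by
    intro t h0
    obtain ⟨s, hs⟩ := minpoly.dvd K M h0
    have h2 := hr t
    rw [hs] at h2
    have h3 : minpoly K M * 1 = minpoly K M * (t * s) := by linear_combination h2
    exact (hirr t).not_isUnit (IsUnit.of_mul_eq_one _ (mul_left_cancel₀ hμ h3).symm)
  choose k hk using fun t => exists_mul_aeval_mul_ne_zero M B C hctrl hobs (r t) (hr0 t)
  obtain ⟨a, b, hab⟩ := exists_forall_dotProduct_mulVec_ne_zero _ hk
  refine ⟨a, b, fun p hp => ?_⟩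
  by_contra hnd
  set n := resolventNum M (a ᵥ* C) (B *ᵥ b)
  have hμn : M.charpoly ∣ minpoly K M * n := by
    rw [charpoly_dvd_mul_resolventNum_iff]
    simp
  set g := EuclideanDomain.gcd p (minpoly K M)
  have hg : M.charpoly ∣ g * n := by
    rw [show g = _ from EuclideanDomain.gcd_eq_gcd_ab _ _, add_mul]
    refine dvd_add ?_ ?_
    · rw [mul_right_comm]; exact hp.mul_right _
    · rw [mul_right_comm]; exact hμn.mul_right _
  obtain ⟨h, hh⟩ : g ∣ minpoly K M := EuclideanDomain.gcd_dvd_right _ _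
  have hgp : g ∣ p := EuclideanDomain.gcd_dvd_left _ _
  have hh0 : h ≠ 0 := by rintro rfl; simp at hh; exact hμ hh
  have hhu : ¬ IsUnit h := by
    intro hu
    exact hnd ((hh ▸ (associated_mul_unit_left g h hu).dvd).trans hgp)
  obtain ⟨π, hπ⟩ := UniqueFactorizationMonoid.exists_mem_normalizedFactors hh0 hhu
  have hπT : π ∈ T := by
    rw [Multiset.mem_toFinset]
    exact Multiset.mem_of_le ((UniqueFactorizationMonoid.dvd_iff_normalizedFactors_le_normalizedFactors
      hh0 hμ).1 ⟨g, by rw [hh, mul_comm]⟩) hπ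
  obtain ⟨s, hs⟩ := UniqueFactorizationMonoid.dvd_of_mem_normalizedFactors hπ
  have hrg : r ⟨π, hπT⟩ = g * s := by
    have h1 := hr ⟨π, hπT⟩
    have h2 : π * r ⟨π, hπT⟩ = π * (g * s) := by
      rw [← h1, hh, hs]; ring
    exact mul_left_cancel₀ (hirr ⟨π, hπT⟩).ne_zero h2
  have hd : M.charpoly ∣ r ⟨π, hπT⟩ * n := by
    rw [hrg, mul_right_comm]; exact hg.mul_right _
  apply hab ⟨π, hπT⟩
  have := (charpoly_dvd_mul_resolventNum_iff _ _ _ _).1 hd (k ⟨π, hπT⟩)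
  rw [← dotProduct_mulVec] at this
  simpa [Matrix.mul_assoc, mulVec_mulVec] using this

lemma observable_of_annihilator (M : Matrix σ σ K) (c b : σ → K)
    (h : ∀ p : K[X], M.charpoly ∣ p * resolventNum M c b → minpoly K M ∣ p)
    (hdeg : Fintype.card σ ≤ (minpoly K M).natDegree) (x : σ → K)
    (hx : ∀ k : ℕ, c ⬝ᵥ (M ^ k *ᵥ x) = 0) : x = 0 := by
  let Φ : degreeLT K (Fintype.card σ) →ₗ[K] (σ → K) :=
    { toFun := fun p => c ᵥ* aeval M (p : K[X])
      map_add' := fun p q => by simp [vecMul_add]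
      map_smul' := fun a p => by simp [vecMul_smul] }
  have hinj : Function.Injective Φ := by
    rw [← LinearMap.ker_eq_bot, LinearMap.ker_eq_bot']
    intro p hp
    have h1 : c ᵥ* aeval M (p : K[X]) = 0 := hp
    have h2 : minpoly K M ∣ p := by
      apply h
      rw [charpoly_dvd_mul_resolventNum_iff]
      intro k
      have hc : M ^ k * aeval M (p : K[X]) = aeval M (p : K[X]) * M ^ k := by
        have : M ^ k = aeval M (X ^ k : K[X]) := by simp
        rw [this, ← map_mul, ← map_mul, mul_comm]
      rw [hc, dotProduct_mulVec, ← vecMul_vecMul, h1]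
      simp
    have h3 := mem_degreeLT.1 p.2
    have := eq_zero_of_dvd_of_degree_lt h2 (h3.trans_le (by
      rw [degree_eq_natDegree (minpoly.ne_zero (Matrix.isIntegral M))]; exact_mod_cast hdeg))
    exact Subtype.ext this
  have hfin : Module.finrank K (degreeLT K (Fintype.card σ)) = Module.finrank K (σ → K) := by
    rw [(degreeLTEquiv K (Fintype.card σ)).finrank_eq]; simp
  have : FiniteDimensional K (degreeLT K (Fintype.card σ)) :=
    (degreeLTEquiv K (Fintype.card σ)).symm.finiteDimensional
  have hsurj := (LinearMap.injective_iff_surjective_of_finrank_eq_finrank hfin).1 hinj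
  ext i
  obtain ⟨p, hp⟩ := hsurj (Pi.single i 1)
  have hp' : c ᵥ* aeval M (p : K[X]) = Pi.single i 1 := hp
  have := dotProduct_aeval_mulVec_eq_zero M c x hx p
  rw [dotProduct_mulVec, hp'] at this
  simpa using this

/-- If the minimal polynomial is not of full degree, a rank one output feedback raises its
degree. -/
lemma natDegree_minpoly_lt_of_annihilator (M : Matrix σ σ K) (c b : σ → K)
    (h : ∀ p : K[X], M.charpoly ∣ p * resolventNum M c b → minpoly K M ∣ p)
    (hdeg : (minpoly K M).natDegree < Fintype.card σ) :
    (minpoly K M).natDegree < (minpoly K (M + vecMulVec b c)).natDegree := by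
  set μ := minpoly K M with hμdef
  set n := resolventNum M c b with hn
  have hμm : μ.Monic := minpoly.monic (Matrix.isIntegral M)
  have hμ0 : μ ≠ 0 := hμm.ne_zero
  have hχ0 := (charpoly_monic M).ne_zero
  obtain ⟨κ, hκ⟩ := Matrix.minpoly_dvd_charpoly M
  rw [← hμdef] at hκ
  have hκ0 : κ ≠ 0 := by rintro rfl; simp at hκ; exact hχ0 hκ
  have hκu : ¬ IsUnit κ := by
    intro hu
    have h1 := natDegree_mul hμ0 hκ0
    rw [← hκ, charpoly_natDegree_eq_dim, natDegree_eq_zero_of_isUnit hu] at h1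
    omega
  have hμn : M.charpoly ∣ μ * n := by
    rw [hn, charpoly_dvd_mul_resolventNum_iff]
    simp [hμdef]
  obtain ⟨N, hN⟩ : κ ∣ n := by
    rw [hκ] at hμn
    exact (mul_dvd_mul_iff_left hμ0).1 hμn
  have hcop : IsCoprime μ N := by
    refine isCoprime_of_irreducible_dvd (fun h => hμ0 h.1) ?_
    rintro z hz ⟨r, hr⟩ ⟨s, hs⟩
    have h1 : μ ∣ r := by
      apply h
      refine ⟨s, ?_⟩
      rw [hκ, hN, hs]; linear_combination (-(κ * s)) * hr
    have hr0 : r ≠ 0 := by rintro rfl; simp at hr; exact hμ0 hr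
    have h2 := natDegree_le_of_dvd h1 hr0
    have h3 := natDegree_mul hz.ne_zero hr0
    rw [← hr] at h3
    have := hz.natDegree_pos
    omega
  have hNdeg : N.degree < μ.degree := by
    have h1 := resolventNum_degree_lt M c b
    rw [← charpoly_degree_eq_dim M, ← hn, hN, hκ, mul_comm μ κ, degree_mul, degree_mul] at h1
    exact lt_of_add_lt_add_left h1
  have hmon : (μ - N).Monic := hμm.sub_of_left hNdeg
  have hdegs : (μ - N).natDegree = μ.natDegree := natDegree_eq_of_degree_eq
    (degree_sub_eq_left_of_degree_lt hNdeg)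
  set M' := M + vecMulVec b c with hM'
  have hχ' : M'.charpoly = κ * (μ - N) := by
    rw [hM', charpoly_add_vecMulVec, ← hn, hN, hκ]; ring
  have hn' : resolventNum M' c b = n := by
    have h1 := charpoly_add_vecMulVec M' c ((-1 : K) • b)
    have h2 : M' + vecMulVec ((-1 : K) • b) c = M := by
      rw [hM']; ext i j; simp [vecMulVec]
    rw [h2, resolventNum_smul, hχ', hκ] at h1
    rw [hN]
    simp only [map_neg, map_one] at h1
    linear_combination -h1
  have hdvd : μ - N ∣ minpoly K M' := by
    have h1 : M'.charpoly ∣ minpoly K M' * resolventNum M' c b := by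
      rw [charpoly_dvd_mul_resolventNum_iff]; simp
    rw [hn', hχ', hN, mul_left_comm] at h1
    have h2 := (mul_dvd_mul_iff_left hκ0).1 h1
    have h3 : IsCoprime (μ - N) N := by
      have := hcop.add_mul_right_left (-1)
      simpa [sub_eq_add_neg] using this
    exact h3.dvd_of_dvd_mul_right h2
  by_contra! hle
  have heq : minpoly K M' = μ - N :=
    (eq_of_monic_of_dvd_of_natDegree_le hmon (minpoly.monic (Matrix.isIntegral M')) hdvd
      (by rw [hdegs]; exact hle))
  obtain ⟨π, hπ, hπκ⟩ := WfDvdMonoid.exists_irreducible_factor hκu hκ0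
  have hp := hπ.prime
  have h1 : π ∣ μ := hp.dvd_of_dvd_pow
    ((hπκ.trans (Dvd.intro_left _ hκ.symm)).trans (charpoly_dvd_minpoly_pow M))
  have h2 : π ∣ μ - N := by
    rw [← heq]
    exact hp.dvd_of_dvd_pow
      ((hπκ.trans (Dvd.intro _ hχ'.symm)).trans (charpoly_dvd_minpoly_pow M'))
  have h3 : π ∣ N := (dvd_sub_right h1).1 h2
  exact hπ.not_isUnit (hcop.isUnit_of_dvd' h1 h3)

/-- A controllable and observable system becomes observable through one scalar output after
some static output feedback. -/
lemma exists_feedback_scalar_observable [Infinite K] [DecidableEq γ]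
    (M : Matrix σ σ K) (B : Matrix σ β K)
    (C : Matrix γ σ K)
    (hctrl : ∀ y, (∀ k : ℕ, y ᵥ* (M ^ k * B) = 0) → y = 0)
    (hobs : ∀ x, (∀ k : ℕ, (C * M ^ k) *ᵥ x = 0) → x = 0) :
    ∃ (G : Matrix β γ K) (a : γ → K), ∀ x,
      (∀ k : ℕ, (a ᵥ* C) ⬝ᵥ ((M + B * G * C) ^ k *ᵥ x) = 0) → x = 0 := by
  let f : Matrix β γ K → ℕ := fun G =>
    Fintype.card σ - (minpoly K (M + B * G * C)).natDegree
  obtain ⟨G, hG⟩ : ∃ G, ∀ G', f G ≤ f G' := ⟨Function.argmin f, fun a => Function.argmin_le f a⟩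
  set M₁ := M + B * G * C with hM₁
  have hctrl₁ : ∀ y, (∀ k : ℕ, y ᵥ* (M₁ ^ k * B) = 0) → y = 0 := by
    intro y hy
    apply hctrl
    intro k
    rw [hM₁, Matrix.mul_assoc] at hy
    rw [← vecMul_vecMul, ← vecMul_pow_add_mul M B (G * C) y k fun j _ => hy j, vecMul_vecMul, hy k]
  have hobs₁ : ∀ x, (∀ k : ℕ, (C * M₁ ^ k) *ᵥ x = 0) → x = 0 := by
    intro x hx
    apply hobs
    intro k
    rw [← mulVec_mulVec, ← pow_add_mul_mulVec M (B * G) C x hx k, mulVec_mulVec]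
    exact hx k
  obtain ⟨a, b, hab⟩ := exists_scalar_annihilator M₁ B C hctrl₁ hobs₁
  refine ⟨G, a, ?_⟩
  by_cases hdeg : Fintype.card σ ≤ (minpoly K M₁).natDegree
  · exact observable_of_annihilator M₁ _ _ hab hdeg
  · exfalso
    have h1 := natDegree_minpoly_lt_of_annihilator M₁ _ _ hab (not_le.1 hdeg)
    have h2 : M + B * (G + vecMulVec b a) * C = M₁ + vecMulVec (B *ᵥ b) (a ᵥ* C) := by
      rw [hM₁, Matrix.mul_add, Matrix.add_mul, add_assoc, mul_vecMulVec, vecMulVec_mul]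
    have h3 := hG (G + vecMulVec b a)
    simp only [f, h2] at h3
    rw [← hM₁] at h3
    omega

end Scalarization

section PolePlacement

open Polynomial

variable {K σ β : Type*} [Field K] [Fintype σ] [DecidableEq σ] [Fintype β]

/-- Indicator of the last coordinate. -/
def lastVec (K : Type*) [Field K] (p : ℕ) (k : Fin p) : K := if (k : ℕ) + 1 = p then 1 else 0

/-- The nilpotent shift. -/
def shiftMat (K : Type*) [Field K] (p : ℕ) : Matrix (Fin p) (Fin p) K :=
  Matrix.of fun k l => if (k : ℕ) + 1 = l then 1 else 0

/-- The companion matrix of `X ^ p + ∑ a k X ^ k`. -/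
def companionMat {p : ℕ} (a : Fin p → K) : Matrix (Fin p) (Fin p) K :=
  shiftMat K p + vecMulVec (lastVec K p) (-a)

/-- The vector `(1, X, …, X ^ (p - 1))`. -/
noncomputable def powVec (K : Type*) [Field K] (p : ℕ) (k : Fin p) : K[X] := X ^ (k : ℕ)

/-- The monic polynomial `X ^ p + ∑ a k X ^ k`. -/
noncomputable def monicPoly {p : ℕ} (a : Fin p → K) : K[X] := X ^ p + ∑ k, C (a k) * X ^ (k : ℕ)

lemma charmatrix_shiftMat_mulVec (p : ℕ) :
    charmatrix (shiftMat K p) *ᵥ powVec K p = (X : K[X]) ^ p • (C ∘ lastVec K p) := by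
  ext1 k
  have h : ((shiftMat K p).map C *ᵥ powVec K p) k
      = X ^ ((k : ℕ) + 1) - X ^ p * C (lastVec K p k) := by
    by_cases hk : (k : ℕ) + 1 = p
    · have : ∀ l : Fin p, shiftMat K p k l = 0 := by
        intro l
        simp only [shiftMat, Matrix.of_apply]
        rw [if_neg]
        have := l.2
        omega
      simp [mulVec, dotProduct, this, lastVec, hk]
    · have hk' : (k : ℕ) + 1 < p := by have := k.2; omega
      rw [mulVec, dotProduct, Finset.sum_eq_single ⟨(k : ℕ) + 1, hk'⟩]
      · simp [shiftMat, powVec, lastVec, hk]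
      · intro l _ hl
        have : (k : ℕ) + 1 ≠ l := fun h => hl (Fin.ext h.symm)
        simp [shiftMat, this]
      · simp
  have h2 : (charmatrix (shiftMat K p) *ᵥ powVec K p) k
      = X * powVec K p k - ((shiftMat K p).map C *ᵥ powVec K p) k := by
    simp [charmatrix, sub_mulVec]
  rw [h2, h]
  simp [powVec, pow_succ']

lemma charpoly_shiftMat (p : ℕ) : (shiftMat K p).charpoly = X ^ p := by
  rw [charpoly_of_isUpperTriangular]
  · simp [shiftMat]
  · intro k l h
    simp only [shiftMat, Matrix.of_apply]
    rw [if_neg]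
    have : (l : ℕ) < k := h
    omega

lemma dotProduct_powVec {p : ℕ} (a : Fin p → K) :
    (C ∘ a) ⬝ᵥ powVec K p = ∑ k, C (a k) * X ^ (k : ℕ) := rfl

lemma charpoly_companionMat {p : ℕ} (a : Fin p → K) :
    (companionMat a).charpoly = monicPoly a := by
  have h := mul_resolventNum_eq (shiftMat K p) (-a) (lastVec K p) _ _
    (charmatrix_shiftMat_mulVec p)
  rw [charpoly_shiftMat] at h
  rw [companionMat, charpoly_add_vecMulVec, charpoly_shiftMat,
    mul_left_cancel₀ (pow_ne_zero p X_ne_zero) h, dotProduct_powVec, monicPoly]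
  simp

lemma charmatrix_add_vecMulVec (M : Matrix σ σ K) (c x : σ → K) :
    charmatrix (M + vecMulVec x c) = charmatrix M - vecMulVec (C ∘ x) (C ∘ c) := by
  ext1 i j
  by_cases h : i = j
  · subst h; simp [charmatrix_apply_eq, vecMulVec]; ring
  · simp [charmatrix_apply_ne _ _ _ h, vecMulVec]; ring

lemma charmatrix_companionMat_mulVec {p : ℕ} (a : Fin p → K) :
    charmatrix (companionMat a) *ᵥ powVec K p = monicPoly a • (C ∘ lastVec K p) := by
  rw [companionMat, charmatrix_add_vecMulVec, sub_mulVec, charmatrix_shiftMat_mulVec,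
    vecMulVec_mulVec, dotProduct_powVec, monicPoly]
  ext1 k
  simp
  ring

/-- Characteristic polynomial of the plant with a dynamic compensator in companion form. -/
lemma charpoly_compensated (M : Matrix σ σ K) (B : Matrix σ β K) (c : σ → K) {p : ℕ}
    (a : Fin p → K) (η : Fin p → β → K) (D : β → K) :
    (fromBlocks (M + vecMulVec (B *ᵥ D) c)
      (B * Matrix.of fun i k => η k i - a k * D i)
      (vecMulVec (lastVec K p) c) (companionMat a)).charpoly
    = M.charpoly * monicPoly a
      - (X ^ p * resolventNum M c (B *ᵥ D) + ∑ k : Fin p, X ^ (k : ℕ) * resolventNum M c (B *ᵥ η k)) := by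
  set Cc : Matrix β (Fin p) K := Matrix.of fun i k => η k i - a k * D i
  let W : Matrix (σ ⊕ Fin p) (σ ⊕ Fin p) K := fromBlocks M (B * Cc) 0 (companionMat a)
  let u : σ ⊕ Fin p → K := Sum.elim (B *ᵥ D) (lastVec K p)
  let c' : σ ⊕ Fin p → K := Sum.elim c 0
  have hW : fromBlocks (M + vecMulVec (B *ᵥ D) c) (B * Cc)
      (vecMulVec (lastVec K p) c) (companionMat a) = W + vecMulVec u c' := by
    ext (i | i) (j | j) <;> simp [W, u, c', vecMulVec]
  have hχ : W.charpoly = M.charpoly * monicPoly a := by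
    rw [charpoly_fromBlocks_zero₂₁, charpoly_companionMat]
  let ηX : β → K[X] := fun i => X ^ p * C (D i) + ∑ k : Fin p, X ^ (k : ℕ) * C (η k i)
  have hηX : ηX = (Cc.map C) *ᵥ powVec K p + monicPoly a • (C ∘ D) := by
    ext1 i
    simp only [ηX, monicPoly, mulVec, dotProduct, powVec, Cc, Matrix.map_apply, Matrix.of_apply,
      Pi.add_apply, Pi.smul_apply, smul_eq_mul, Function.comp, add_mul, Finset.sum_mul]
    rw [add_left_comm, ← Finset.sum_add_distrib]
    congr 1
    refine Finset.sum_congr rfl fun k _ => ?_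
    simp; ring
  let P : σ ⊕ Fin p → K[X] :=
    Sum.elim ((charmatrix M).adjugate *ᵥ (B.map C *ᵥ ηX)) (M.charpoly • powVec K p)
  have hBC : ∀ (y : β → K), B.map C *ᵥ (C ∘ y) = C ∘ (B *ᵥ y) := by
    intro y; ext1 i; simp [RingHom.map_mulVec]
  have hP : charmatrix W *ᵥ P = (M.charpoly * monicPoly a) • (C ∘ u) := by
    rw [charmatrix_fromBlocks, fromBlocks_mulVec]
    ext1 (i | i)
    · have : charmatrix M *ᵥ ((charmatrix M).adjugate *ᵥ (B.map C *ᵥ ηX))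
          + (-(B * Cc).map C) *ᵥ (M.charpoly • powVec K p)
          = (M.charpoly * monicPoly a) • (C ∘ (B *ᵥ D)) := by
        rw [mulVec_mulVec, mul_adjugate, smul_mulVec, one_mulVec, hηX, mulVec_add, mulVec_smul,
          hBC, Matrix.map_mul, neg_mulVec, mulVec_smul, mulVec_mulVec, smul_add, smul_smul]
        simp [Matrix.charpoly]
      simpa [P, u] using congrFun this i
    · have := congrFun (congrArg (fun v => M.charpoly • v) (charmatrix_companionMat_mulVec a)) i
      simp only [← mulVec_smul] at this
      simpa [P, u, mul_assoc] using this
  have hn := mul_resolventNum_eq W c' u P _ hP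
  have hne : M.charpoly * monicPoly a ≠ 0 := hχ ▸ (charpoly_monic W).ne_zero
  rw [hχ] at hn
  rw [hW, charpoly_add_vecMulVec, hχ, mul_left_cancel₀ hne hn]
  congr 1
  have h1 : (C ∘ c' : σ ⊕ Fin p → K[X]) ⬝ᵥ P
      = (C ∘ c) ⬝ᵥ ((charmatrix M).adjugate *ᵥ (B.map C *ᵥ ηX)) := by
    simp [dotProduct, P, c']
  have h2 : ηX = (X : K[X]) ^ p • (C ∘ D) + ∑ k : Fin p, (X : K[X]) ^ (k : ℕ) • (C ∘ η k) := by
    ext1 i; simp [ηX, Finset.sum_apply]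
  rw [h1, h2]
  simp only [mulVec_add, mulVec_smul, hBC, dotProduct_add, dotProduct_smul, smul_eq_mul,
    mulVec_sum, dotProduct_sum, resolventNum]

lemma exists_charpoly_compensated (M : Matrix σ σ K) (B : Matrix σ β K) (c : σ → K) {p : ℕ}
    (hc : ∀ x, (∀ k : ℕ, c ⬝ᵥ (M ^ k *ᵥ x) = 0) → x = 0)
    (hcard : Fintype.card β * (p + 1) = Fintype.card σ)
    (hB : ∀ η : Fin (p + 1) → β → K, ∑ k : Fin (p + 1), M ^ (k : ℕ) *ᵥ (B *ᵥ η k) = 0 → η = 0)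
    (χ : K[X]) (hχ : χ.Monic) (hdeg : χ.natDegree = Fintype.card σ + p) :
    ∃ (D : β → K) (Ac : Matrix (Fin p) (Fin p) K) (Bc : Fin p → K) (Cc : Matrix β (Fin p) K),
      (fromBlocks (M + vecMulVec (B *ᵥ D) c) (B * Cc) (vecMulVec Bc c) Ac).charpoly = χ := by
  classical
  have hM0 := (charpoly_monic M).ne_zero
  let Φ : ((Fin p → K) × (Fin (p + 1) → β → K)) →ₗ[K] K[X] :=
    { toFun := fun z => (∑ k, C (z.1 k) * X ^ (k : ℕ)) * M.charpoly
        - ∑ k : Fin (p + 1), X ^ (k : ℕ) * resolventNum M c (B *ᵥ z.2 k)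
      map_add' := fun z w => by
        simp only [Prod.fst_add, Prod.snd_add, Pi.add_apply, map_add, mulVec_add, resolventNum_add,
          add_mul, mul_add, Finset.sum_add_distrib]
        ring
      map_smul' := fun t z => by
        simp only [Prod.smul_fst, Prod.smul_snd, Pi.smul_apply, smul_eq_mul, map_mul, mulVec_smul,
          resolventNum_smul, RingHom.id_apply, smul_eq_C_mul, mul_sub, Finset.mul_sum,
          Finset.sum_mul]
        congr 1 <;> exact Finset.sum_congr rfl fun k _ => by ring }
  have hmem : ∀ z, Φ z ∈ degreeLT K (Fintype.card σ + p) := by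
    intro z
    refine Submodule.sub_mem _ ?_ ?_
    · rw [Finset.sum_mul]
      refine Submodule.sum_mem _ fun k _ => ?_
      rw [mem_degreeLT]
      refine (degree_mul_le _ _).trans_lt ?_
      rw [charpoly_degree_eq_dim]
      refine (add_le_add_left (degree_C_mul_X_pow_le _ _) _).trans_lt ?_
      have := k.2
      norm_cast; omega
    · refine Submodule.sum_mem _ fun k _ => ?_
      rw [mem_degreeLT]
      by_cases h0 : resolventNum M c (B *ᵥ z.2 k) = 0
      · rw [h0, mul_zero, degree_zero]; exact WithBot.bot_lt_coe _
      have h1 := resolventNum_degree_lt M c (B *ᵥ z.2 k)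
      rw [degree_mul, degree_X_pow]
      rw [degree_eq_natDegree h0] at h1 ⊢
      have := k.2
      norm_cast at h1 ⊢; omega
  let Ψ := Φ.codRestrict _ hmem
  have hinj : Function.Injective Ψ := by
    rw [← LinearMap.ker_eq_bot, LinearMap.ker_eq_bot']
    rintro ⟨a, η⟩ h
    have h1 : (∑ k, C (a k) * X ^ (k : ℕ)) * M.charpoly
        - ∑ k : Fin (p + 1), X ^ (k : ℕ) * resolventNum M c (B *ᵥ η k) = 0 := congrArg Subtype.val h
    have h2 : M.charpoly ∣ ∑ k : Fin (p + 1), X ^ (k : ℕ) * resolventNum M c (B *ᵥ η k) :=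
      ⟨_, by rw [← sub_eq_zero.1 h1, mul_comm]⟩
    have h3 : resolventNum M c (∑ k : Fin (p + 1), M ^ (k : ℕ) *ᵥ (B *ᵥ η k))
        = ∑ k : Fin (p + 1), resolventNum M c (M ^ (k : ℕ) *ᵥ (B *ᵥ η k)) :=
      map_sum (resolventNumLin M c) _ _
    have h4 : M.charpoly ∣ resolventNum M c (∑ k : Fin (p + 1), M ^ (k : ℕ) *ᵥ (B *ᵥ η k)) := by
      rw [h3, ← dvd_sub_right h2, ← Finset.sum_sub_distrib]
      refine Finset.dvd_sum fun k _ => ?_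
      simpa using dvd_mul_resolventNum_sub M c (X ^ (k : ℕ)) (B *ᵥ η k)
    have h5 := hB η (hc _ ((resolventNum_eq_zero_iff M c _).1
      (resolventNum_eq_zero_of_dvd M c _ h4)))
    subst h5
    have h0 : resolventNum M c (0 : σ → K) = 0 := map_zero (resolventNumLin M c)
    simp only [Pi.zero_apply, mulVec_zero, h0, mul_zero, Finset.sum_const_zero, sub_zero,
      mul_eq_zero, hM0, or_false] at h1
    have h6 : a = 0 := by
      ext j
      have := congrArg (fun f => coeff f (j : ℕ)) h1
      simpa [finsetSum_coeff, coeff_X_pow, Fin.val_inj] using this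
    subst h6
    rfl
  have : FiniteDimensional K (degreeLT K (Fintype.card σ + p)) :=
    (degreeLTEquiv K (Fintype.card σ + p)).symm.finiteDimensional
  have hfin : Module.finrank K ((Fin p → K) × (Fin (p + 1) → β → K))
      = Module.finrank K (degreeLT K (Fintype.card σ + p)) := by
    rw [(degreeLTEquiv K (Fintype.card σ + p)).finrank_eq]
    simp [Module.finrank_pi_fintype]
    rw [mul_comm] at hcard
    omega
  have hsurj := (LinearMap.injective_iff_surjective_of_finrank_eq_finrank hfin).1 hinj
  have htarget : χ - X ^ p * M.charpoly ∈ degreeLT K (Fintype.card σ + p) := by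
    rw [mem_degreeLT]
    have hd : (X ^ p * M.charpoly).degree = ((Fintype.card σ + p : ℕ) : WithBot ℕ) := by
      rw [degree_mul, degree_X_pow, charpoly_degree_eq_dim, add_comm]; rfl
    have hd' : χ.degree = ((Fintype.card σ + p : ℕ) : WithBot ℕ) := by
      rw [degree_eq_natDegree hχ.ne_zero, hdeg]
    refine (degree_sub_lt_left (hd'.trans hd.symm) hχ.ne_zero ?_).trans_eq hd'
    rw [hχ.leadingCoeff, ((monic_X_pow p).mul (charpoly_monic M)).leadingCoeff]
  obtain ⟨⟨a, η⟩, hz⟩ := hsurj ⟨_, htarget⟩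
  have hz' : (∑ k, C (a k) * X ^ (k : ℕ)) * M.charpoly
        - ∑ k : Fin (p + 1), X ^ (k : ℕ) * resolventNum M c (B *ᵥ η k) = χ - X ^ p * M.charpoly :=
    congrArg Subtype.val hz
  refine ⟨η (Fin.last p), companionMat a, lastVec K p, _,
    (charpoly_compensated M B c a (fun k => η k.castSucc) (η (Fin.last p))).trans ?_⟩
  rw [Fin.sum_univ_castSucc] at hz'
  simp only [Fin.val_castSucc, Fin.val_last] at hz'
  rw [monicPoly]
  linear_combination hz'

end PolePlacement

section Semicontinuity

open Filter Topology

variable {σ γ : Type*} [Fintype σ] [DecidableEq σ]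

lemma eventually_rank_le {X ι κ : Type*} [Fintype ι] [Fintype κ] [TopologicalSpace X]
    (A : X → Matrix ι κ ℂ) (x₀ : X) (hA : ContinuousAt A x₀) :
    ∀ᶠ x in 𝓝 x₀, (A x₀).rank ≤ (A x).rank := by
  classical
  let Φ : Matrix ι κ ℂ →ₗ[ℂ] ((κ → ℂ) →L[ℂ] (ι → ℂ)) :=
    (LinearMap.toContinuousLinearMap : ((κ → ℂ) →ₗ[ℂ] (ι → ℂ)) ≃ₗ[ℂ] _).toLinearMap ∘ₗ
      (Matrix.toLin' : Matrix ι κ ℂ ≃ₗ[ℂ] _).toLinearMap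
  have hΦ : Continuous Φ := Φ.continuous_of_finiteDimensional
  have h := (hΦ.continuousAt.comp hA).preimage_mem_nhds
    ((isOpen_setOfPred_nat_le_rank (𝕜 := ℂ) (E := κ → ℂ) (F := ι → ℂ)
      (A x₀).rank).mem_nhds (x := Φ (A x₀)) ?_)
  · filter_upwards [h] with x hx
    have hx' : ((A x₀).rank : Cardinal) ≤ LinearMap.rank (A x).mulVecLin := hx
    rw [LinearMap.rank, ← Module.finrank_eq_rank] at hx'
    exact_mod_cast hx'
  · change ((A x₀).rank : Cardinal) ≤ LinearMap.rank (A x₀).mulVecLin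
    rw [LinearMap.rank, ← Module.finrank_eq_rank]
    exact le_rfl

/-- The unobservable subspace of the pair `(C, M)`. -/
noncomputable def unobs (C : Matrix γ σ ℂ) (M : Matrix σ σ ℂ) : Submodule ℂ (σ → ℂ) :=
  ⨅ k : ℕ, LinearMap.ker (C * M ^ k).mulVecLin

lemma mem_unobs {C : Matrix γ σ ℂ} {M : Matrix σ σ ℂ} {x : σ → ℂ} :
    x ∈ unobs C M ↔ ∀ k : ℕ, (C * M ^ k) *ᵥ x = 0 := by
  simp [unobs]

lemma mulVec_mem_unobs {C : Matrix γ σ ℂ} {M : Matrix σ σ ℂ} {x : σ → ℂ} (hx : x ∈ unobs C M) :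
    M *ᵥ x ∈ unobs C M := by
  rw [mem_unobs] at hx ⊢
  intro k
  rw [mulVec_mulVec, Matrix.mul_assoc, ← pow_succ]
  exact hx (k + 1)

/-- The observability matrix with `K` block rows. -/
def obsMat (C : Matrix γ σ ℂ) (M : Matrix σ σ ℂ) (K : ℕ) : Matrix (Fin K × γ) σ ℂ :=
  Matrix.of fun r s => (C * M ^ (r.1 : ℕ)) r.2 s

lemma obsMat_mulVec (C : Matrix γ σ ℂ) (M : Matrix σ σ ℂ) (K : ℕ) (x : σ → ℂ) (r : Fin K × γ) :
    (obsMat C M K *ᵥ x) r = ((C * M ^ (r.1 : ℕ)) *ᵥ x) r.2 := rfl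

lemma obsMat_mulVec_eq_zero_iff (C : Matrix γ σ ℂ) (M : Matrix σ σ ℂ) (K : ℕ) (x : σ → ℂ) :
    obsMat C M K *ᵥ x = 0 ↔ ∀ k < K, (C * M ^ k) *ᵥ x = 0 := by
  constructor
  · intro h k hk
    ext r
    exact congrFun h (⟨k, hk⟩, r)
  · intro h
    ext r
    exact congrFun (h r.1 r.1.2) r.2

lemma exists_forall_ker_obsMat_eq_unobs (C : Matrix γ σ ℂ) (M : Matrix σ σ ℂ) :
    ∃ K₀, ∀ K, K₀ ≤ K → LinearMap.ker (obsMat C M K).mulVecLin = unobs C M := by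
  let f : ℕ →o (Submodule ℂ (σ → ℂ))ᵒᵈ :=
    ⟨fun K => OrderDual.toDual (LinearMap.ker (obsMat C M K).mulVecLin), by
      intro a b hab x hx
      change x ∈ LinearMap.ker (obsMat C M b).mulVecLin at hx
      change x ∈ LinearMap.ker (obsMat C M a).mulVecLin
      rw [LinearMap.mem_ker, mulVecLin_apply, obsMat_mulVec_eq_zero_iff] at hx ⊢
      exact fun k hk => hx k (hk.trans_le hab)⟩
  obtain ⟨K₀, hK₀⟩ := IsArtinian.monotone_stabilizes f
  have key : ∀ K, K₀ ≤ K → LinearMap.ker (obsMat C M K₀).mulVecLin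
      = LinearMap.ker (obsMat C M K).mulVecLin := hK₀
  refine ⟨K₀, fun K hK => ?_⟩
  rw [← key K hK]
  ext x
  rw [mem_unobs]
  constructor
  · intro hx k
    rw [key (max K₀ (k + 1)) (le_max_left _ _), LinearMap.mem_ker, mulVecLin_apply,
      obsMat_mulVec_eq_zero_iff] at hx
    exact hx k (lt_of_lt_of_le (Nat.lt_succ_self k) (le_max_right _ _))
  · intro hx
    rw [LinearMap.mem_ker, mulVecLin_apply, obsMat_mulVec_eq_zero_iff]
    exact fun k _ => hx k

lemma rank_obsMat_add_le (C : Matrix γ σ ℂ) (M : Matrix σ σ ℂ) (K : ℕ) :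
    (obsMat C M K).rank + Module.finrank ℂ (unobs C M) ≤ Fintype.card σ := by
  have h1 := LinearMap.finrank_range_add_finrank_ker (obsMat C M K).mulVecLin
  have h2 : unobs C M ≤ LinearMap.ker (obsMat C M K).mulVecLin := by
    intro x hx
    rw [LinearMap.mem_ker, mulVecLin_apply, obsMat_mulVec_eq_zero_iff]
    exact fun k _ => mem_unobs.1 hx k
  have h3 := Submodule.finrank_mono h2
  rw [Module.finrank_fintype_fun_eq_card] at h1
  unfold Matrix.rank
  omega

lemma rank_obsMat_add_eq (C : Matrix γ σ ℂ) (M : Matrix σ σ ℂ) (K : ℕ)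
    (hK : LinearMap.ker (obsMat C M K).mulVecLin = unobs C M) :
    (obsMat C M K).rank + Module.finrank ℂ (unobs C M) = Fintype.card σ := by
  have h1 := LinearMap.finrank_range_add_finrank_ker (obsMat C M K).mulVecLin
  rw [Module.finrank_fintype_fun_eq_card, hK] at h1
  exact h1

lemma continuous_obsMat (C : Matrix γ σ ℂ) (M : ℝ → Matrix σ σ ℂ) (hM : Continuous M) (K : ℕ) :
    Continuous fun t => obsMat C (M t) K := by
  refine continuous_matrix fun r s => ?_
  exact (continuous_const.matrix_mul (hM.pow _)).matrix_elem _ _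

lemma eventually_finrank_unobs_le [Fintype γ] (C : Matrix γ σ ℂ) (M : ℝ → Matrix σ σ ℂ) (hM : Continuous M) :
    ∀ᶠ t in 𝓝 0, Module.finrank ℂ (unobs C (M t)) ≤ Module.finrank ℂ (unobs C (M 0)) := by
  obtain ⟨K, hK⟩ := exists_forall_ker_obsMat_eq_unobs C (M 0)
  filter_upwards [eventually_rank_le _ 0 (continuous_obsMat C M hM K).continuousAt] with t ht
  have h1 := rank_obsMat_add_le C (M t) K
  have h2 := rank_obsMat_add_eq C (M 0) K (hK K le_rfl)
  omega

/-- The first order variation of `M ^ k ξ` along the perturbation `vecMulVec v w` of `M`. -/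
noncomputable def variation (M : Matrix σ σ ℂ) (v : σ → ℂ) (l s : ℂ) : ℕ → σ → ℂ
  | 0 => 0
  | k + 1 => l • variation M v l s k + s • (M ^ k *ᵥ v)

lemma pow_mulVec_eq_variation (M : Matrix σ σ ℂ) (v w ξ : σ → ℂ) (l : ℂ) (hξ : M *ᵥ ξ = l • ξ)
    (t : ℂ) (k : ℕ) :
    (M + t • vecMulVec v w) ^ k *ᵥ ξ
      = l ^ k • ξ + t • variation (M + t • vecMulVec v w) v l (w ⬝ᵥ ξ) k := by
  induction k with
  | zero => simp [variation]
  | succ k ih =>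
    rw [pow_succ, ← mulVec_mulVec, add_mulVec, hξ, smul_mulVec, vecMulVec_mulVec, mulVec_add,
      mulVec_smul, ih, variation, mulVec_smul]
    simp only [op_smul_eq_smul, mulVec_smul]
    module

lemma continuous_variation (M : ℝ → Matrix σ σ ℂ) (hM : Continuous M) (v : σ → ℂ) (l s : ℂ)
    (k : ℕ) : Continuous fun t => variation (M t) v l s k := by
  induction k with
  | zero => exact continuous_const
  | succ k ih =>
    exact (ih.const_smul l).add (((hM.pow k).matrix_mulVec continuous_const).const_smul s)

/-- If the dimension of the unobservable subspace does not drop along a rank one perturbation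
moving an unobservable eigenvector, the perturbation direction is constrained. -/
lemma exists_of_finrank_unobs_le [Fintype γ] (C : Matrix γ σ ℂ) (M : Matrix σ σ ℂ) (v w ξ : σ → ℂ) (l : ℂ)
    (hξ : M *ᵥ ξ = l • ξ) (hCξ : C *ᵥ ξ = 0)
    (hmin : ∀ᶠ t : ℝ in 𝓝 0, Module.finrank ℂ (unobs C M)
      ≤ Module.finrank ℂ (unobs C (M + (t : ℂ) • vecMulVec v w))) :
    ∃ y, C *ᵥ y = 0 ∧ M *ᵥ y - l • y - (w ⬝ᵥ ξ) • v ∈ unobs C M := by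
  obtain ⟨K₀, hK₀⟩ := exists_forall_ker_obsMat_eq_unobs C M
  let N : ℝ → Matrix σ σ ℂ := fun t => M + (t : ℂ) • vecMulVec v w
  have hN : Continuous N := by
    exact continuous_const.add (Complex.continuous_ofReal.smul continuous_const)
  have hN0 : N 0 = M := by simp [N]
  let g : ℝ → Fin (K₀ + 1) × γ → ℂ := fun t r =>
    (C *ᵥ variation (N t) v l (w ⬝ᵥ ξ) r.1) r.2
  let A : ℝ → Matrix (Fin (K₀ + 1) × γ) (σ ⊕ Unit) ℂ := fun t =>
    fromCols (obsMat C (N t) (K₀ + 1)) (replicateCol Unit (g t))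
  have hA : Continuous A := by
    refine continuous_matrix fun r s => ?_
    rcases s with s | s
    · exact (continuous_obsMat C N hN _).matrix_elem _ _
    · exact (continuous_apply r.2).comp
        (continuous_const.matrix_mulVec (continuous_variation N hN v l _ r.1))
  have hrank : ∀ t : ℝ, t ≠ 0 → (A t).rank ≤ (obsMat C (N t) (K₀ + 1)).rank := by
    intro t ht
    have hg : g t = obsMat C (N t) (K₀ + 1) *ᵥ ((t : ℂ)⁻¹ • ξ) := by
      ext r
      rw [obsMat_mulVec, mulVec_smul, ← mulVec_mulVec, pow_mulVec_eq_variation M v w ξ l hξ,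
        mulVec_add, mulVec_smul, mulVec_smul, hCξ, smul_zero, zero_add, smul_smul,
        inv_mul_cancel₀ (by exact_mod_cast ht), one_smul]
    have : A t = obsMat C (N t) (K₀ + 1)
        * fromCols (1 : Matrix σ σ ℂ) (replicateCol Unit ((t : ℂ)⁻¹ • ξ)) := by
      simp only [A, mul_fromCols, Matrix.mul_one, hg]
      rw [replicateCol_mulVec]
    rw [this]
    exact rank_mul_le_left _ _
  have hle : (A 0).rank ≤ (obsMat C M (K₀ + 1)).rank := by
    obtain ⟨ε, hε, h⟩ := Metric.eventually_nhds_iff.1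
      ((eventually_rank_le A 0 hA.continuousAt).and hmin)
    have hε2 : dist (ε / 2) 0 < ε := by
      rw [Real.dist_eq, sub_zero, abs_of_pos (half_pos hε)]; exact half_lt_self hε
    obtain ⟨h1, h2⟩ := h hε2
    have h3 := hrank (ε / 2) (half_pos hε).ne'
    have h4 := rank_obsMat_add_le C (N (ε / 2)) (K₀ + 1)
    have h5 := rank_obsMat_add_eq C M (K₀ + 1) (hK₀ _ (Nat.le_succ _))
    change Module.finrank ℂ (unobs C M) ≤ Module.finrank ℂ (unobs C (N (ε / 2))) at h2
    omega
  have hsub : LinearMap.range (obsMat C M (K₀ + 1)).mulVecLin ≤ LinearMap.range (A 0).mulVecLin := by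
    rintro _ ⟨x, rfl⟩
    refine ⟨Sum.elim x 0, ?_⟩
    simp [A, hN0, fromCols_mulVec]
  have heq := Submodule.eq_of_le_of_finrank_le hsub hle
  have hg0 : g 0 ∈ LinearMap.range (A 0).mulVecLin := by
    refine ⟨Sum.elim 0 1, ?_⟩
    ext r
    simp [A, mulVec, dotProduct]
  rw [← heq] at hg0
  obtain ⟨y, hy⟩ := hg0
  have hy' : ∀ k, k < K₀ + 1 → (C * M ^ k) *ᵥ y = C *ᵥ variation M v l (w ⬝ᵥ ξ) k := by
    intro k hk
    ext r
    have := congrFun hy (⟨k, hk⟩, r)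
    simpa [g, hN0, obsMat_mulVec] using this
  refine ⟨y, by simpa [variation] using hy' 0 (Nat.succ_pos _), ?_⟩
  rw [← hK₀ K₀ le_rfl, LinearMap.mem_ker, mulVecLin_apply, obsMat_mulVec_eq_zero_iff]
  intro k hk
  have h1 := hy' k (by omega)
  have h2 := hy' (k + 1) (by omega)
  rw [variation, mulVec_add, mulVec_smul, ← h1, mulVec_smul] at h2
  rw [mulVec_sub, mulVec_sub, mulVec_smul, mulVec_smul, mulVec_mulVec, Matrix.mul_assoc,
    ← pow_succ, h2, ← mulVec_mulVec v]
  abel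

end Semicontinuity

section Network

open Filter Topology

lemma exists_eigenvector_mem {σ : Type*} [Fintype σ] (M : Matrix σ σ ℂ)
    (U : Submodule ℂ (σ → ℂ)) (hU : ∀ x ∈ U, M *ᵥ x ∈ U) (hne : U ≠ ⊥) :
    ∃ ξ ∈ U, ξ ≠ 0 ∧ ∃ l : ℂ, M *ᵥ ξ = l • ξ := by
  have : Nontrivial U := Submodule.nontrivial_iff_ne_bot.2 hne
  obtain ⟨l, hl⟩ := Module.End.exists_eigenvalue (M.mulVecLin.restrict hU)
  obtain ⟨x, hx⟩ := hl.exists_hasEigenvector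
  refine ⟨x, x.2, fun h => hx.2 (Subtype.ext h), l, ?_⟩
  exact congrArg Subtype.val hx.apply_eq_smul

/-- A map sending `U ≤ S` into `U` does not increase the dimension of `S` modulo `U`. -/
lemma finrank_map_sup_le {V : Type*} [AddCommGroup V] [Module ℂ V] [FiniteDimensional ℂ V]
    (f : V →ₗ[ℂ] V) (S U : Submodule ℂ V) (hUS : U ≤ S) (hU : U.map f ≤ U) :
    Module.finrank ℂ (S.map f ⊔ U : Submodule ℂ V) ≤ Module.finrank ℂ S := by
  obtain ⟨W, hW⟩ := Submodule.exists_isCompl U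
  have hS : S = U ⊔ W ⊓ S := by
    rw [← sup_inf_assoc_of_le W hUS, hW.sup_eq_top, top_inf_eq]
  have h1 : S.map f ⊔ U ≤ (W ⊓ S).map f ⊔ U := by
    refine sup_le ?_ le_sup_right
    conv_lhs => rw [hS]
    rw [Submodule.map_sup]
    exact sup_le (hU.trans le_sup_right) le_sup_left
  have h2 := Submodule.finrank_mono h1
  have h3 := Submodule.finrank_sup_add_finrank_inf_eq ((W ⊓ S).map f) U
  have h4 := Submodule.finrank_map_le f (W ⊓ S)
  have h5 := Submodule.finrank_sup_add_finrank_inf_eq U (W ⊓ S)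
  rw [← hS, ← inf_assoc, hW.inf_eq_bot, bot_inf_eq, finrank_bot] at h5
  omega

variable {ι ν : Type*} [DecidableEq ι] {γ : ι → Type*}

/-- The outputs of the agents in `Z`, complexified. -/
def outMat (Ct : ∀ i, Matrix (γ i) (ι × ν) ℝ) (Z : Finset ι) :
    Matrix (Σ i, γ i) (ι × ν) ℂ :=
  Matrix.of fun r s => if r.1 ∈ Z then (Ct r.1 r.2 s : ℂ) else 0

lemma outMat_mulVec_eq_zero_iff [Fintype ι] [Fintype ν]
    (Ct : ∀ i, Matrix (γ i) (ι × ν) ℝ) (Z : Finset ι) (x : ι × ν → ℂ) :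
    outMat Ct Z *ᵥ x = 0 ↔ ∀ i ∈ Z, (Ct i).map Complex.ofRealHom *ᵥ x = 0 := by
  constructor
  · intro h i hi
    ext r
    simpa [outMat, mulVec, dotProduct, hi] using congrFun h ⟨i, r⟩
  · intro h
    ext ⟨i, r⟩
    by_cases hi : i ∈ Z
    · simpa [outMat, mulVec, dotProduct, hi] using congrFun (h i hi) r
    · simp [outMat, mulVec, dotProduct, hi]

variable [DecidableEq ν] [∀ i, Fintype (γ i)]

/-- The closed loop matrix when agent `i` feeds its output `Ct i` back into its own block through
the gain `G i`. -/
def netMat (M₀ : Matrix (ι × ν) (ι × ν) ℝ) (Ct : ∀ i, Matrix (γ i) (ι × ν) ℝ)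
    (G : ∀ i, Matrix ν (γ i) ℝ) : Matrix (ι × ν) (ι × ν) ℝ :=
  M₀ + Matrix.of fun p s => (G p.1 * Ct p.1) p.2 s

lemma map_netMat_add_smul_single (M₀ : Matrix (ι × ν) (ι × ν) ℝ)
    (Ct : ∀ i, Matrix (γ i) (ι × ν) ℝ) (G : ∀ i, Matrix ν (γ i) ℝ) [∀ i, DecidableEq (γ i)]
    (i : ι) (a : ν) (r : γ i) (t : ℝ) :
    (netMat M₀ Ct
        (G + t • (Pi.single i (Matrix.single a r 1) : ∀ i, Matrix ν (γ i) ℝ))).map Complex.ofRealHom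
      = (netMat M₀ Ct G).map Complex.ofRealHom
        + (t : ℂ) • vecMulVec (Pi.single (i, a) 1) (fun s => (Ct i r s : ℂ)) := by
  ext ⟨j, b⟩ s
  by_cases hj : j = i
  · subst hj
    by_cases hb : b = a
    · subst hb
      simp [netMat, vecMulVec, Matrix.add_mul, add_assoc]
    · simp [netMat, vecMulVec, Matrix.add_mul, hb]
  · simp [netMat, vecMulVec, Matrix.add_mul, hj]

variable [Fintype ι] [Fintype ν]

lemma eventually_forall_finrank_unobs_le (M₀ : Matrix (ι × ν) (ι × ν) ℝ)
    (Ct : ∀ i, Matrix (γ i) (ι × ν) ℝ) (G : ∀ i, Matrix ν (γ i) ℝ) [∀ i, DecidableEq (γ i)]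
    (i : ι) (a : ν) (r : γ i) :
    ∀ᶠ t : ℝ in 𝓝 0, ∀ Z, Module.finrank ℂ (unobs (outMat Ct Z) ((netMat M₀ Ct
        (G + t • (Pi.single i (Matrix.single a r 1) : ∀ i, Matrix ν (γ i) ℝ))).map
          Complex.ofRealHom))
      ≤ Module.finrank ℂ (unobs (outMat Ct Z) ((netMat M₀ Ct G).map Complex.ofRealHom)) := by
  rw [eventually_all]
  intro Z
  have hcont : Continuous fun t : ℝ => (netMat M₀ Ct G).map Complex.ofRealHom
        + (t : ℂ) • vecMulVec (Pi.single (i, a) (1 : ℂ)) (fun s => (Ct i r s : ℂ)) :=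
    continuous_const.add (Complex.continuous_ofReal.smul continuous_const)
  filter_upwards [eventually_finrank_unobs_le (outMat Ct Z) _ hcont] with t ht
  rw [map_netMat_add_smul_single]
  rw [Complex.ofReal_zero, zero_smul, add_zero] at ht
  exact ht

/-- Generic gains make the network observable through every nonempty set of agents. -/
lemma exists_forall_unobs_eq_bot (M₀ : Matrix (ι × ν) (ι × ν) ℝ)
    (Ct : ∀ i, Matrix (γ i) (ι × ν) ℝ) (P : (∀ i, Matrix ν (γ i) ℝ) → Prop)
    (hP : ∃ G, P G)
    (hPopen : ∀ G δ, P G → ∀ᶠ t : ℝ in 𝓝 0, P (G + t • δ))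
    (hjoint : ∀ (ξ : ι × ν → ℂ) (l : ℂ), M₀.map Complex.ofRealHom *ᵥ ξ = l • ξ →
      (∀ i, (Ct i).map Complex.ofRealHom *ᵥ ξ = 0) → ξ = 0)
    (hdim : ∀ Z : Finset ι, Z.Nonempty → Z ≠ univ →
      Module.finrank ℂ (LinearMap.ker (outMat Ct Z).mulVecLin)
        < Fintype.card ({i // i ∉ Z} × ν)) :
    ∃ G, P G ∧ ∀ Z : Finset ι, Z.Nonempty →
      unobs (outMat Ct Z) ((netMat M₀ Ct G).map Complex.ofRealHom) = ⊥ := by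
  classical
  let MC : (∀ i, Matrix ν (γ i) ℝ) → Matrix (ι × ν) (ι × ν) ℂ :=
    fun G => (netMat M₀ Ct G).map Complex.ofRealHom
  let d : (∀ i, Matrix ν (γ i) ℝ) → Finset ι → ℕ :=
    fun G Z => Module.finrank ℂ (unobs (outMat Ct Z) (MC G))
  have : Nonempty {G // P G} := let ⟨G, hG⟩ := hP; ⟨⟨G, hG⟩⟩
  obtain ⟨⟨G, hG⟩, hmin⟩ : ∃ G : {G // P G}, ∀ G' : {G // P G}, ∑ Z, d G Z ≤ ∑ Z, d G' Z :=
    ⟨Function.argmin fun G : {G // P G} => ∑ Z, d G Z,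
      fun a => Function.argmin_le (fun G : {G // P G} => ∑ Z, d G Z) a⟩
  refine ⟨G, hG, ?_⟩
  by_contra! hex
  have hconst : ∀ (i : ι) (a : ν) (r : γ i) (Z : Finset ι), ∀ᶠ t : ℝ in 𝓝 0,
      Module.finrank ℂ (unobs (outMat Ct Z) (MC G)) ≤ Module.finrank ℂ (unobs (outMat Ct Z)
        (MC G + (t : ℂ) • vecMulVec (Pi.single (i, a) 1) (fun s => (Ct i r s : ℂ)))) := by
    intro i a r Z
    filter_upwards [eventually_forall_finrank_unobs_le M₀ Ct G i a r, hPopen G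
      (Pi.single i (Matrix.single a r 1)) hG] with t ht hPt
    have h1 := hmin ⟨_, hPt⟩
    have h2 := (Finset.sum_eq_sum_iff_of_le fun Y _ => ht Y).1
      (le_antisymm (Finset.sum_le_sum fun Y _ => ht Y) h1) Z (mem_univ _)
    rw [← map_netMat_add_smul_single]
    exact h2.ge
  obtain ⟨Z₀, hZ₀⟩ := hex
  obtain ⟨Z, -, hZmax⟩ := (Set.toFinite {Z : Finset ι | Z.Nonempty ∧
    unobs (outMat Ct Z) (MC G) ≠ ⊥}).exists_le_maximal hZ₀
  obtain ⟨⟨hZne, hUne⟩, hZmax⟩ := hZmax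
  set U := unobs (outMat Ct Z) (MC G) with hU
  obtain ⟨ξ, hξU, hξ0, l, hξ⟩ := exists_eigenvector_mem (MC G) U
    (fun x hx => mulVec_mem_unobs hx) hUne
  have hξZ : outMat Ct Z *ᵥ ξ = 0 := by simpa using mem_unobs.1 hξU 0
  have hpow : ∀ k : ℕ, MC G ^ k *ᵥ ξ = l ^ k • ξ := by
    intro k
    induction k with
    | zero => simp
    | succ k ih => rw [pow_succ', ← mulVec_mulVec, ih, mulVec_smul, hξ, smul_smul, pow_succ]
  have hout : ∀ i, i ∉ Z → (Ct i).map Complex.ofRealHom *ᵥ ξ ≠ 0 := by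
    intro i hi h0
    have hmem : insert i Z ∈ {Z : Finset ι | Z.Nonempty ∧ unobs (outMat Ct Z) (MC G) ≠ ⊥} := by
      refine ⟨⟨i, mem_insert_self _ _⟩, fun hbot => hξ0 ?_⟩
      rw [← Submodule.mem_bot ℂ, ← hbot, mem_unobs]
      intro k
      rw [← mulVec_mulVec, hpow, mulVec_smul]
      have : outMat Ct (insert i Z) *ᵥ ξ = 0 := by
        rw [outMat_mulVec_eq_zero_iff] at hξZ ⊢
        intro j hj
        rcases mem_insert.1 hj with rfl | hj
        · exact h0
        · exact hξZ j hj
      rw [this, smul_zero]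
    exact hi (hZmax hmem (subset_insert i Z) (mem_insert_self i Z))
  have hZuniv : Z ≠ univ := by
    rintro rfl
    apply hξ0
    have hall := (outMat_mulVec_eq_zero_iff Ct _ ξ).1 hξZ
    refine hjoint ξ l ?_ fun i => hall i (mem_univ i)
    rw [← hξ]
    ext ⟨i, a⟩
    have h1 : (∑ s, ((G i * Ct i) a s : ℂ) * ξ s) = 0 := by
      have h2 : ((G i).map Complex.ofRealHom * (Ct i).map Complex.ofRealHom) *ᵥ ξ = 0 := by
        rw [← mulVec_mulVec, hall i (mem_univ i), mulVec_zero]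
      rw [← Matrix.map_mul] at h2
      exact congrFun h2 a
    simp [MC, netMat, mulVec, dotProduct, add_mul, Finset.sum_add_distrib, h1]
  set S := LinearMap.ker (outMat Ct Z).mulVecLin with hS
  let f : (ι × ν → ℂ) →ₗ[ℂ] (ι × ν → ℂ) := (MC G).mulVecLin - l • LinearMap.id
  have hmemT : ∀ (i : ι) (a : ν), i ∉ Z → (Pi.single (i, a) 1 : ι × ν → ℂ) ∈ S.map f ⊔ U := by
    intro i a hi
    obtain ⟨r, hr⟩ := Function.ne_iff.1 (hout i hi)
    obtain ⟨y, hy, hyU⟩ := exists_of_finrank_unobs_le (outMat Ct Z) (MC G) (Pi.single (i, a) 1)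
      (fun s => (Ct i r s : ℂ)) ξ l hξ hξZ (hconst i a r Z)
    have hs : (fun s => (Ct i r s : ℂ)) ⬝ᵥ ξ ≠ 0 := hr
    have h1 : ((fun s => (Ct i r s : ℂ)) ⬝ᵥ ξ) • (Pi.single (i, a) 1 : ι × ν → ℂ)
        ∈ S.map f ⊔ U := by
      have h2 : f y ∈ S.map f := Submodule.mem_map_of_mem hy
      have h3 := Submodule.sub_mem _ (Submodule.mem_sup_left (T := U) h2)
        (Submodule.mem_sup_right (S := S.map f) hyU)
      convert h3 using 1
      simp [f]
    exact (Submodule.smul_mem_iff _ hs).1 h1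
  have hUS : U ≤ S := fun x hx => by
    rw [hS, LinearMap.mem_ker, mulVecLin_apply]
    simpa using mem_unobs.1 hx 0
  have hfU : U.map f ≤ U := by
    rintro _ ⟨x, hx, rfl⟩
    exact U.sub_mem (mulVec_mem_unobs hx) (U.smul_mem l hx)
  have hle := finrank_map_sup_le f S U hUS hfU
  have hlt : Module.finrank ℂ S < _ := hdim Z hZne hZuniv
  have hcard : Fintype.card ({i // i ∉ Z} × ν)
      ≤ Module.finrank ℂ (S.map f ⊔ U : Submodule ℂ (ι × ν → ℂ)) := by
    have hli : LinearIndependent ℂ fun p : {i // i ∉ Z} × ν =>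
        (Pi.basisFun ℂ (ι × ν)) ((p.1 : ι), p.2) := by
      refine (Pi.basisFun ℂ (ι × ν)).linearIndependent.comp (fun p : {i // i ∉ Z} × ν =>
        ((p.1 : ι), p.2)) ?_
      rintro ⟨⟨i, hi⟩, a⟩ ⟨⟨j, hj⟩, b⟩ h
      simpa using h
    rw [← finrank_span_eq_card hli]
    refine Submodule.finrank_mono (Submodule.span_le.2 ?_)
    rintro _ ⟨p, rfl⟩
    simpa using hmemT p.1 p.2 p.1.2
  omega

end Network

section ErrorNetwork

lemma vecMul_ctrbMat_injective {ι κ : Type*} [Fintype ι] [DecidableEq ι] [Fintype κ]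
    {A : Matrix ι ι ℝ} {B : Matrix ι κ ℝ} (h : Controllable A B) (y : ι → ℝ)
    (hy : ∀ k : ℕ, y ᵥ* (A ^ k * B) = 0) : y = 0 := by
  have hli : LinearIndependent ℝ (ctrbMat A B (Fintype.card ι)).row := by
    rw [linearIndependent_iff_card_eq_finrank_span, Set.finrank, ← Matrix.rank_eq_finrank_span_row]
    exact h.symm
  refine Matrix.vecMul_injective_iff.2 hli ?_
  ext p
  simp only [zero_vecMul]
  exact congrFun (hy p.1) p.2

variable {ι ν : Type*} [Fintype ι] [DecidableEq ι] [Fintype ν]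

/-- The uncontrolled part of the error dynamics, with `W j` the feedback applied at channel `j`. -/
def baseMat (A : Matrix ν ν ℝ) (W : ι → Matrix ν ν ℝ) : Matrix (ι × ν) (ι × ν) ℝ :=
  Matrix.of fun p s => (if p.1 = s.1 then (A + ∑ j, W j) p.2 s.2 else 0) - W s.1 p.2 s.2

lemma baseMat_mulVec_const (A : Matrix ν ν ℝ) (W : ι → Matrix ν ν ℝ) (x : ν → ℂ) (p : ι × ν) :
    ((baseMat A W).map Complex.ofRealHom *ᵥ fun s => x s.2) p
      = (A.map Complex.ofRealHom *ᵥ x) p.2 := by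
  simp only [baseMat, mulVec, dotProduct, Fintype.sum_prod_type, map_apply, of_apply, map_sub,
    sub_mul, Finset.sum_sub_distrib, apply_ite Complex.ofRealHom, map_zero, ite_mul, zero_mul,
    Matrix.add_apply, Matrix.sum_apply, map_add, map_sum]
  rw [Finset.sum_eq_single p.1 (by intro j _ hj; simp [hj.symm]) (by simp)]
  simp only [if_true, add_mul, Finset.sum_add_distrib, Finset.sum_mul]
  rw [Finset.sum_comm (s := univ) (t := univ) (f := fun i j =>
    Complex.ofRealHom (W i p.2 j) * x j)]
  ring

lemma eq_of_reflTransGen {α β : Type*} {adj : β → β → Prop} (f : β → α)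
    (h : ∀ i j, adj j i → f i = f j) {i j : β} (hij : Relation.ReflTransGen adj i j) :
    f j = f i := by
  induction hij with
  | refl => rfl
  | tail _ hbc ih => rw [h _ _ hbc, ih]

variable [DecidableEq ν] {κ : ι → Type*}

lemma eq_zero_of_observable {κ : Type*} [Fintype κ] {A : Matrix ν ν ℝ} {C : Matrix κ ν ℝ}
    (h : Observable C A) (x : ν → ℂ) (l : ℂ) (hA : A.map Complex.ofRealHom *ᵥ x = l • x)
    (hC : C.map Complex.ofRealHom *ᵥ x = 0) : x = 0 := by
  have hpow : ∀ k : ℕ, (C * A ^ k).map Complex.ofRealHom *ᵥ x = 0 := by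
    intro k
    have h1 : (A.map Complex.ofRealHom) ^ k *ᵥ x = l ^ k • x := by
      induction k with
      | zero => simp
      | succ k ih =>
        rw [pow_succ', ← mulVec_mulVec, ih, mulVec_smul, hA, smul_smul, pow_succ]
    rw [Matrix.map_mul, ← mulVec_mulVec]
    change _ *ᵥ (Complex.ofRealHom.mapMatrix (A ^ k) *ᵥ x) = 0
    rw [map_pow]
    change _ *ᵥ ((A.map Complex.ofRealHom) ^ k *ᵥ x) = 0
    rw [h1, mulVec_smul, hC, smul_zero]
  have key : ∀ y : ν → ℝ, (∀ k : ℕ, (C * A ^ k) *ᵥ y = 0) → y = 0 := by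
    intro y hy
    refine vecMul_ctrbMat_injective h y fun k => ?_
    rw [← transpose_pow, ← transpose_mul, vecMul_transpose, hy]
  have hre := key (fun s => (x s).re) fun k => by
    ext r
    simpa [mulVec, dotProduct] using congrArg Complex.re (congrFun (hpow k) r)
  have him := key (fun s => (x s).im) fun k => by
    ext r
    simpa [mulVec, dotProduct] using congrArg Complex.im (congrFun (hpow k) r)
  ext s
  exact Complex.ext (congrFun hre s) (congrFun him s)

/-- The signals available to agent `i`: its own measured output and the differences between its
own state and the states of its neighbours. -/
def agentOut (C : ∀ i, Matrix (κ i) ν ℝ) (adj : ι → ι → Prop) [DecidableRel adj] (i : ι) :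
    Matrix (κ i ⊕ (ι × ν)) (ι × ν) ℝ :=
  Matrix.of fun r s => match r with
    | Sum.inl a => if s.1 = i then C i a s.2 else 0
    | Sum.inr (j, b) => if adj j i then (Pi.single (i, b) 1 - Pi.single (j, b) 1 : _ → ℝ) s else 0

lemma agentOut_mulVec_eq_zero_iff (C : ∀ i, Matrix (κ i) ν ℝ) (adj : ι → ι → Prop)
    [DecidableRel adj] (i : ι) (x : ι × ν → ℂ) :
    (agentOut C adj i).map Complex.ofRealHom *ᵥ x = 0 ↔
      (C i).map Complex.ofRealHom *ᵥ (fun b => x (i, b)) = 0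
        ∧ ∀ j, adj j i → ∀ b, x (i, b) = x (j, b) := by
  have h1 : ∀ a, ((agentOut C adj i).map Complex.ofRealHom *ᵥ x) (Sum.inl a)
      = ((C i).map Complex.ofRealHom *ᵥ (fun b => x (i, b))) a := by
    intro a
    simp [agentOut, mulVec, dotProduct, Fintype.sum_prod_type, apply_ite Complex.ofReal, ite_mul]
  have h2 : ∀ j b, ((agentOut C adj i).map Complex.ofRealHom *ᵥ x) (Sum.inr (j, b))
      = if adj j i then x (i, b) - x (j, b) else 0 := by
    intro j b
    by_cases h : adj j i
    · simp [agentOut, mulVec, dotProduct, h, Pi.single_apply, apply_ite Complex.ofReal, sub_mul,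
        Finset.sum_sub_distrib]
    · simp [agentOut, mulVec, dotProduct, h]
  constructor
  · intro h
    refine ⟨funext fun a => (h1 a).symm.trans (congrFun h _), fun j hj b => ?_⟩
    have := h2 j b
    rw [h, if_pos hj] at this
    exact sub_eq_zero.1 this.symm
  · rintro ⟨h3, h4⟩
    ext r
    rcases r with a | ⟨j, b⟩
    · rw [h1, h3]; rfl
    · rw [h2]
      split_ifs with h
      · rw [h4 j h b, sub_self]; rfl
      · rfl

lemma eq_zero_of_forall_agentOut (A : Matrix ν ν ℝ) (W : ι → Matrix ν ν ℝ)
    (C : ∀ i, Matrix (κ i) ν ℝ) (adj : ι → ι → Prop) [DecidableRel adj]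
    (hconn : ∀ i j, Relation.ReflTransGen adj i j)
    (hobs : ∀ (x : ν → ℂ) (l : ℂ), A.map Complex.ofRealHom *ᵥ x = l • x →
      (∀ i, (C i).map Complex.ofRealHom *ᵥ x = 0) → x = 0)
    (ξ : ι × ν → ℂ) (l : ℂ) (hξ : (baseMat A W).map Complex.ofRealHom *ᵥ ξ = l • ξ)
    (hC : ∀ i, (agentOut C adj i).map Complex.ofRealHom *ᵥ ξ = 0) : ξ = 0 := by
  simp only [agentOut_mulVec_eq_zero_iff] at hC
  have hconst : ∀ i j b, ξ (j, b) = ξ (i, b) := fun i j b =>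
    eq_of_reflTransGen (fun i => ξ (i, b)) (fun i j h => (hC i).2 j h b) (hconn i j)
  ext ⟨i, b⟩
  have hξi : ξ = fun s => ξ (i, s.2) := by
    ext s
    exact hconst i s.1 s.2
  have hzero : (fun b => ξ (i, b)) = 0 := by
    refine hobs _ l ?_ fun j => ?_
    · ext b
      rw [← baseMat_mulVec_const A W _ (i, b), ← hξi, hξ]
      rfl
    · have := (hC j).1
      rwa [funext fun b => hconst i j b] at this
  exact congrFun hzero b

lemma finrank_ker_outMat_agentOut_lt (C : ∀ i, Matrix (κ i) ν ℝ) (adj : ι → ι → Prop)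
    [DecidableRel adj] (hconn : ∀ i j, Relation.ReflTransGen adj i j) (hC : ∀ i, C i ≠ 0)
    (Z : Finset ι) (hZ : Z.Nonempty) (hZ' : Z ≠ univ) :
    Module.finrank ℂ (LinearMap.ker (outMat (agentOut C adj) Z).mulVecLin)
      < Fintype.card ({i // i ∉ Z} × ν) := by
  obtain ⟨i₀, hi₀⟩ : ∃ i, i ∉ Z := by simpa [Finset.eq_univ_iff_forall] using hZ'
  set S := LinearMap.ker (outMat (agentOut C adj) Z).mulVecLin with hS
  have hmem : ∀ x ∈ S, ∀ i ∈ Z, (C i).map Complex.ofRealHom *ᵥ (fun b => x (i, b)) = 0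
        ∧ ∀ j, adj j i → ∀ b, x (i, b) = x (j, b) := by
    intro x hx i hi
    rw [hS, LinearMap.mem_ker, mulVecLin_apply, outMat_mulVec_eq_zero_iff] at hx
    exact (agentOut_mulVec_eq_zero_iff C adj i x).1 (hx i hi)
  let ρ : S →ₗ[ℂ] ({i // i ∉ Z} × ν → ℂ) :=
    (LinearMap.funLeft ℂ ℂ fun p : {i // i ∉ Z} × ν => ((p.1 : ι), p.2)) ∘ₗ S.subtype
  have hρ : Function.Injective ρ := by
    rw [← LinearMap.ker_eq_bot, LinearMap.ker_eq_bot']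
    rintro ⟨x, hx⟩ hx0
    have hout : ∀ i, i ∉ Z → ∀ b, x (i, b) = 0 := fun i hi b => congrFun hx0 (⟨i, hi⟩, b)
    ext ⟨i, b⟩
    change x (i, b) = 0
    induction hconn i₀ i with
    | refl => exact hout i₀ hi₀ b
    | @tail j k _ hjk ih =>
      by_cases hk : k ∈ Z
      · rw [(hmem x hx k hk).2 j hjk b, ih]
      · exact hout k hk b
  obtain ⟨j, z, hj, hz, hjz⟩ : ∃ j z, j ∉ Z ∧ z ∈ Z ∧ adj j z := by
    obtain ⟨z₀, hz₀⟩ := hZ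
    by_contra! hno
    have : ∀ i, Relation.ReflTransGen adj i₀ i → i ∉ Z := by
      intro i hi
      induction hi with
      | refl => exact hi₀
      | tail _ hbc ih => exact fun hc => hno _ _ ih hc hbc
    exact this z₀ (hconn i₀ z₀) hz₀
  obtain ⟨a, b, hab⟩ : ∃ a b, C z a b ≠ 0 := by
    by_contra! h
    exact hC z (Matrix.ext h)
  have hrange : LinearMap.range ρ < ⊤ := by
    refine lt_top_iff_ne_top.2 fun htop => ?_
    obtain ⟨⟨x, hx⟩, hxb⟩ : (Pi.single (⟨j, hj⟩, b) 1 : {i // i ∉ Z} × ν → ℂ)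
        ∈ LinearMap.range ρ := htop ▸ Submodule.mem_top
    have hxj : ∀ b', x (z, b') = if b' = b then 1 else 0 := by
      intro b'
      rw [(hmem x hx z hz).2 j hjz b']
      refine (congrFun hxb (⟨j, hj⟩, b')).trans ?_
      simp [Pi.single_apply]
    have h := congrFun (hmem x hx z hz).1 a
    simp only [mulVec, dotProduct, hxj] at h
    exact hab (by simpa using h)
  have h1 := Submodule.finrank_lt hrange.ne
  rwa [LinearMap.finrank_range_of_inj hρ, Module.finrank_fintype_fun_eq_card] at h1

end ErrorNetwork

section SpanningTree

lemma exists_parent {ι : Type*} (adj : ι → ι → Prop) (q : ι)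
    (hconn : ∀ i, Relation.ReflTransGen adj q i) :
    ∃ (par : ι → ι) (d : ι → ℕ), ∀ i, i ≠ q → adj (par i) i ∧ d i = d (par i) + 1 := by
  classical
  let R : ℕ → Set ι := fun k => Nat.rec (motive := fun _ => Set ι) {q} (fun _ s => {i | ∃ j ∈ s, adj j i}) k
  have hR : ∀ i, ∃ k, i ∈ R k := by
    intro i
    induction hconn i with
    | refl => exact ⟨0, rfl⟩
    | tail _ hbc ih =>
      obtain ⟨k, hk⟩ := ih
      exact ⟨k + 1, _, hk, hbc⟩
  have hpar : ∀ i, ∃ j, i ≠ q → adj j i ∧ Nat.find (hR i) = Nat.find (hR j) + 1 := by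
    intro i
    by_cases hi : i = q
    · exact ⟨i, fun h => absurd hi h⟩
    · have h1 := Nat.find_spec (hR i)
      rcases hk : Nat.find (hR i) with _ | k
      · rw [hk] at h1
        exact absurd h1 hi
      · rw [hk] at h1
        obtain ⟨j, hj, hji⟩ := h1
        refine ⟨j, fun _ => ⟨hji, ?_⟩⟩
        have h2 : Nat.find (hR j) ≤ k := Nat.find_min' _ hj
        have h3 : Nat.find (hR i) ≤ Nat.find (hR j) + 1 :=
          Nat.find_min' _ ⟨j, Nat.find_spec (hR j), hji⟩
        omega
  choose par hp using hpar
  exact ⟨par, fun i => Nat.find (hR i), hp⟩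

variable {ι K : Type*} [Fintype ι] [DecidableEq ι] [Field K]

/-- Weighted Laplacian of the tree with root `q` and parent map `par`. -/
def treeMat (q : ι) (par : ι → ι) (h : ι → K) : Matrix ι ι K :=
  Matrix.of fun i j => if i = q then 0 else h i * ((if j = i then 1 else 0) - if j = par i then 1 else 0)

lemma vecMul_treeMat (q : ι) (par : ι → ι) (h : ι → K) (x : ι → K) (j : ι) (hj : j ≠ q ∨ x q = 0) :
    (x ᵥ* treeMat q par h) j
      = h j * x j - ∑ c with c ≠ q ∧ par c = j, h c * x c := by
  have h1 : ∀ i, x i * treeMat q par h i j = (if j = i then h i * x i else 0)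
      - (if i ≠ q ∧ par i = j then h i * x i else 0)
      - (if j = i ∧ i = q then h i * x i else 0) := by
    intro i
    by_cases hi : i = q
    · by_cases hji : j = i <;> simp [treeMat, hi, hji]
    · simp only [treeMat, of_apply, hi, if_false, ne_eq, not_false_eq_true, true_and, and_false,
        sub_zero, eq_comm (a := par i)]
      split_ifs <;> ring
  simp only [vecMul, dotProduct, h1, Finset.sum_sub_distrib, Finset.sum_filter]
  have h2 : ∑ i, (if j = i ∧ i = q then h i * x i else 0) = 0 := by
    refine Finset.sum_eq_zero fun i _ => ?_
    split_ifs with hi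
    · rcases hj with hj | hj
      · exact absurd (hi.1.trans hi.2) hj
      · rw [hi.2, hj, mul_zero]
    · rfl
  rw [h2, sub_zero]
  simp

lemma eq_zero_of_vecMul_treeMat (q : ι) (par : ι → ι) (d : ι → ℕ)
    (hd : ∀ i, i ≠ q → d i = d (par i) + 1) (h : ι → K) (hinj : Function.Injective h)
    (h0 : ∀ i, h i ≠ 0) (x : ι → K) (l : K) (hx : x ᵥ* treeMat q par h = l • x)
    (hq : x q = 0) : x = 0 := by
  classical
  have hrel : ∀ j, (h j - l) * x j = ∑ c with c ≠ q ∧ par c = j, h c * x c := by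
    intro j
    have := congrFun hx j
    rw [vecMul_treeMat q par h x j (Or.inr hq), Pi.smul_apply, smul_eq_mul] at this
    linear_combination this
  have hleaf : ∀ j, x j ≠ 0 → h j ≠ l → ∃ c, c ≠ q ∧ par c = j ∧ x c ≠ 0 := by
    intro j hj hl
    have h1 : ∑ c with c ≠ q ∧ par c = j, h c * x c ≠ 0 := by
      rw [← hrel]
      exact mul_ne_zero (sub_ne_zero.2 hl) hj
    obtain ⟨c, hc, hc0⟩ := Finset.exists_ne_zero_of_sum_ne_zero h1
    obtain ⟨hc1, hc2⟩ := (Finset.mem_filter.1 hc).2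
    exact ⟨c, hc1, hc2, right_ne_zero_of_mul hc0⟩
  by_contra hne
  obtain ⟨i₀, hi₀⟩ := Function.ne_iff.1 hne
  have hsupp : ({i | x i ≠ 0} : Finset ι).Nonempty := ⟨i₀, by simpa using hi₀⟩
  obtain ⟨k, hk, hkmax⟩ := Finset.exists_max_image _ d hsupp
  obtain ⟨a, ha, hamin⟩ := Finset.exists_min_image _ d hsupp
  simp only [Finset.mem_filter, Finset.mem_univ, true_and] at hk hkmax ha hamin
  have hdeep : ∀ j, x j ≠ 0 → d j = d k → h j = l := by
    intro j hj hjk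
    by_contra hl
    obtain ⟨c, hcq, rfl, hc⟩ := hleaf j hj hl
    have := hkmax c hc
    have := hd c hcq
    omega
  have hkl := hdeep k hk rfl
  have huniq : ∀ t i j, x i ≠ 0 → x j ≠ 0 → d i = d j → d i + t = d k → i = j := by
    intro t
    induction t with
    | zero =>
      intro i j hi hj hij hik
      exact hinj ((hdeep i hi hik).trans (hdeep j hj (hij ▸ hik)).symm)
    | succ t ih =>
      have hchild : ∀ j, x j ≠ 0 → d j + (t + 1) = d k → ∃ c, c ≠ q ∧ par c = j ∧ x c ≠ 0 := by
        intro j hj hjk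
        refine hleaf j hj fun hl => ?_
        have := hinj (hl.trans hkl.symm)
        subst this
        omega
      intro i j hi hj hij hik
      obtain ⟨c, hcq, rfl, hc⟩ := hchild i hi hik
      obtain ⟨c', hcq', rfl, hc'⟩ := hchild j hj (hij ▸ hik)
      have h1 := hd c hcq
      have h2 := hd c' hcq'
      rw [ih c c' hc hc' (by omega) (by omega)]
  have haq : a ≠ q := by
    rintro rfl
    exact ha hq
  have hpar : x (par a) = 0 := by
    by_contra hp
    have := hamin _ hp
    have := hd a haq
    omega
  have hsum := hrel (par a)
  rw [hpar, mul_zero, Finset.sum_eq_single a] at hsum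
  · exact mul_ne_zero (h0 a) ha hsum.symm
  · intro c hc hca
    obtain ⟨hcq, hpc⟩ := (Finset.mem_filter.1 hc).2
    by_contra hc0
    have h1 := hd a haq
    have h2 := hd c hcq
    rw [hpc] at h2
    have h3 := hkmax a ha
    exact hca (huniq (d k - d a) c a (right_ne_zero_of_mul hc0) ha (by omega) (by omega))
  · intro hna
    exact absurd (Finset.mem_filter.2 ⟨Finset.mem_univ _, haq, rfl⟩) hna

lemma dotProduct_pow_mulVec_eq_zero (M : Matrix ι ι K) (y x : ι → K)
    (h : ∀ k < Fintype.card ι, y ⬝ᵥ (M ^ k *ᵥ x) = 0) (k : ℕ) : y ⬝ᵥ (M ^ k *ᵥ x) = 0 := by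
  rcases isEmpty_or_nonempty ι with hι | hι
  · exact Finset.sum_of_isEmpty _
  rw [Matrix.pow_eq_aeval_mod_charpoly, Polynomial.aeval_eq_sum_range' (n := Fintype.card ι)]
  · rw [sum_mulVec, dotProduct_sum]
    refine Finset.sum_eq_zero fun i hi => ?_
    rw [smul_mulVec, dotProduct_smul, h i (Finset.mem_range.1 hi), smul_zero]
  · rw [← M.charpoly_natDegree_eq_dim]
    refine Polynomial.natDegree_modByMonic_lt _ M.charpoly_monic fun h1 => ?_
    have := M.charpoly_natDegree_eq_dim
    rw [h1, Polynomial.natDegree_one] at this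
    exact Fintype.card_ne_zero this.symm

lemma det_krylov_treeMat_ne_zero {p : ℕ} (q : Fin (p + 1)) (par : Fin (p + 1) → Fin (p + 1))
    (d : Fin (p + 1) → ℕ) (hd : ∀ i, i ≠ q → d i = d (par i) + 1) (h : Fin (p + 1) → ℝ)
    (hinj : Function.Injective h) (h0 : ∀ i, h i ≠ 0) :
    (Matrix.of fun i k : Fin (p + 1) => (treeMat q par h ^ (k : ℕ)) i q).det ≠ 0 := by
  intro hdet
  obtain ⟨y, hy0, hy⟩ := exists_vecMul_eq_zero_iff.2 hdet
  set L := treeMat q par h with hL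
  have hall : ∀ k : ℕ, y ⬝ᵥ (L ^ k *ᵥ Pi.single q 1) = 0 := by
    refine dotProduct_pow_mulVec_eq_zero L y _ fun k hk => ?_
    rw [Fintype.card_fin] at hk
    rw [mulVec_single_one]
    exact congrFun hy ⟨k, hk⟩
  have hmap : L.map Complex.ofRealHom = treeMat q par fun i => (h i : ℂ) := by
    ext i j
    simp [hL, treeMat, apply_ite Complex.ofReal]
  let U := unobs (replicateRow Unit (Pi.single q 1)) (L.map Complex.ofRealHom)ᵀ
  have hmem : (fun i => (y i : ℂ)) ∈ U := by
    refine mem_unobs.2 fun k => ?_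
    ext u
    have h1 := congrArg Complex.ofReal (hall k)
    rw [← mulVec_mulVec, ← transpose_pow, mulVec_transpose]
    change (replicateRow Unit (Pi.single q 1) *ᵥ
      (fun i => (y i : ℂ)) ᵥ* (Complex.ofRealHom.mapMatrix L) ^ k) u = 0
    rw [← map_pow]
    rw [mulVec_single_one] at h1
    simpa [mulVec, vecMul, dotProduct, Pi.single_apply] using h1
  have hUne : U ≠ ⊥ := by
    intro hbot
    rw [hbot, Submodule.mem_bot] at hmem
    exact hy0 (funext fun i => Complex.ofReal_eq_zero.1 (congrFun hmem i))
  obtain ⟨ξ, hξU, hξ0, l, hξ⟩ := exists_eigenvector_mem _ U (fun x hx => mulVec_mem_unobs hx) hUne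
  rw [mulVec_transpose, hmap] at hξ
  refine hξ0 (eq_zero_of_vecMul_treeMat q par d hd _ (fun i j hij => hinj ?_) ?_ ξ l hξ ?_)
  · exact Complex.ofReal_injective hij
  · exact fun i => Complex.ofReal_ne_zero.2 (h0 i)
  · have := congrFun (mem_unobs.1 hξU 0) ()
    simpa [mulVec] using this

end SpanningTree

section Krylov

lemma ctrbMat_smul {σ β : Type*} [Fintype σ] [DecidableEq σ] [Fintype β] [DecidableEq β]
    (M : Matrix σ σ ℝ) (B : Matrix σ β ℝ) (s : ℝ) (k : ℕ) :
    ctrbMat (s • M) B k = ctrbMat M B k *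
      (diagonal fun r => s ^ (r.1 : ℕ) : Matrix (Fin k × β) (Fin k × β) ℝ) := by
  ext i r
  rw [mul_diagonal]
  simp [ctrbMat, smul_pow, mul_comm]

lemma det_ctrbMat_add_mul_ne_zero {β : Type*} [Fintype β] [DecidableEq β] {k : ℕ}
    {M : Matrix (Fin k × β) (Fin k × β) ℝ} {B : Matrix (Fin k × β) β ℝ}
    (h : (ctrbMat M B k).det ≠ 0) (L : Matrix β (Fin k × β) ℝ) :
    (ctrbMat (M + B * L) B k).det ≠ 0 := by
  intro hdet
  obtain ⟨y, hy0, hy⟩ := exists_vecMul_eq_zero_iff.2 hdet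
  refine h (exists_vecMul_eq_zero_iff.1 ⟨y, hy0, ?_⟩)
  have hy' : ∀ j < k, y ᵥ* ((M + B * L) ^ j * B) = 0 := fun j hj => by
    ext b
    exact congrFun hy (⟨j, hj⟩, b)
  ext ⟨j, b⟩
  have := vecMul_pow_add_mul M B L y j fun i hi => hy' i (hi.trans j.2)
  change (y ᵥ* (M ^ (j : ℕ) * B)) b = 0
  rw [← vecMul_vecMul, ← this, vecMul_vecMul, hy' j j.2]
  rfl

lemma continuous_netMat {ι ν : Type*} {γ : ι → Type*} [∀ i, Fintype (γ i)]
    (M₀ : Matrix (ι × ν) (ι × ν) ℝ)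
    (Ct : ∀ i, Matrix (γ i) (ι × ν) ℝ) (G δ : ∀ i, Matrix ν (γ i) ℝ) :
    Continuous fun t : ℝ => netMat M₀ Ct (G + t • δ) := by
  refine continuous_matrix fun p s => ?_
  simp only [netMat, Matrix.add_apply, of_apply, Matrix.mul_apply, Pi.add_apply, Pi.smul_apply,
    Matrix.smul_apply]
  fun_prop

variable {ι ν : Type*} [Fintype ι] [DecidableEq ι] [Fintype ν] [DecidableEq ν]
  {κ : ι → Type*} [∀ i, Fintype (κ i)]

/-- The input matrix of the state of agent `q`. -/
def blockIn (ν : Type*) [DecidableEq ν] (q : ι) : Matrix (ι × ν) ν ℝ :=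
  Matrix.of fun s b => if s = (q, b) then 1 else 0

lemma mul_agentOut_apply {μ : Type*} (C : ∀ i, Matrix (κ i) ν ℝ) (adj : ι → ι → Prop)
    [DecidableRel adj] (i : ι) (G : Matrix μ (κ i ⊕ (ι × ν)) ℝ) (k : μ) (j : ι) (l : ν) :
    (G * agentOut C adj i) k (j, l)
      = (if j = i then (G.submatrix id Sum.inl * C i) k l
          + (∑ j' with adj j' i, G.submatrix id (fun b => Sum.inr (j', b))) k l else 0)
        - if adj j i then G k (Sum.inr (j, l)) else 0 := by
  have h1 : ∑ a, G k (Sum.inl a) * agentOut C adj i (Sum.inl a) (j, l)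
      = if j = i then (G.submatrix id Sum.inl * C i) k l else 0 := by
    split_ifs with h <;> simp [agentOut, Matrix.mul_apply, h]
  have h2 : ∀ j' b, G k (Sum.inr (j', b)) * agentOut C adj i (Sum.inr (j', b)) (j, l)
      = (if b = l then (if adj j' i then if j = i then G k (Sum.inr (j', b)) else 0 else 0) else 0)
        - if b = l then (if j' = j then if adj j' i then G k (Sum.inr (j', b)) else 0 else 0)
          else 0 := by
    intro j' b
    by_cases hb : b = l
    · subst hb
      by_cases ha : adj j' i
      · simp [agentOut, ha, Pi.single_apply, mul_sub, eq_comm]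
      · simp [agentOut, ha]
    · simp [agentOut, hb, Pi.single_apply, Ne.symm hb]
  rw [Matrix.mul_apply, Fintype.sum_sum_type, h1, Fintype.sum_prod_type]
  simp only [h2, Finset.sum_sub_distrib, Finset.sum_ite_eq', Finset.mem_univ, if_true]
  rw [← add_sub_assoc]
  congr 1
  split_ifs with h
  · rw [Matrix.sum_apply, Finset.sum_filter]
    simp
  · simp

lemma continuous_det_ctrbMat {β : Type*} [Fintype β] [DecidableEq β] {k : ℕ}
    (M : ℝ → Matrix (Fin k × β) (Fin k × β) ℝ) (hM : Continuous M) (B : Matrix (Fin k × β) β ℝ) :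
    Continuous fun t => (ctrbMat (M t) B k).det := by
  refine Continuous.matrix_det (continuous_matrix fun i r => ?_)
  exact ((hM.pow _).matrix_mul continuous_const).matrix_elem _ _

end Krylov

section Existence

open Filter Topology
open scoped Kronecker

variable {p : ℕ} {ν : Type*} [Fintype ν] [DecidableEq ν] {κ : Fin (p + 1) → Type*}
  [∀ i, Fintype (κ i)]

lemma exists_det_ctrbMat_netMat_ne_zero (M₀ : Matrix (Fin (p + 1) × ν) (Fin (p + 1) × ν) ℝ)
    (C : ∀ i, Matrix (κ i) ν ℝ) (adj : Fin (p + 1) → Fin (p + 1) → Prop) [DecidableRel adj]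
    (hconn : ∀ i j, Relation.ReflTransGen adj i j) (q : Fin (p + 1)) :
    ∃ G, (ctrbMat (netMat M₀ (agentOut C adj) G) (blockIn ν q) (p + 1)).det ≠ 0 := by
  obtain ⟨par, d, hpar⟩ := exists_parent adj q (hconn q)
  let h : Fin (p + 1) → ℝ := fun i => (i : ℕ) + 1
  have hinj : Function.Injective h := fun i j hij => Fin.ext (by simpa [h] using hij)
  have h0 : ∀ i, h i ≠ 0 := fun i => by positivity
  have hL := det_krylov_treeMat_ne_zero q par d (fun i hi => (hpar i hi).2) h hinj h0
  set L := treeMat q par h with hLdef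
  set N := L ⊗ₖ (1 : Matrix ν ν ℝ) with hN
  let G₀ : ∀ i, Matrix ν (κ i ⊕ (Fin (p + 1) × ν)) ℝ := fun i => Matrix.of fun a r =>
    match r with
    | Sum.inl _ => 0
    | Sum.inr (j, b) => if i ≠ q ∧ j = par i ∧ a = b then h i else 0
  have hG₀ : ∀ i a s, (G₀ i * agentOut C adj i) a s = N (i, a) s := by
    rintro i a ⟨j, l⟩
    have h1 : (∑ j' with adj j' i, (G₀ i).submatrix id (fun b => Sum.inr (j', b))) a l
        = if i ≠ q ∧ a = l then h i else 0 := by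
      rw [Matrix.sum_apply]
      by_cases hi : i = q
      · simp [G₀, hi]
      · by_cases ha : a = l
        · simp [G₀, hi, ha, Finset.sum_ite_eq', (hpar i hi).1]
        · simp [G₀, ha]
    have h2 : (G₀ i).submatrix id Sum.inl = (0 : Matrix ν (κ i) ℝ) := rfl
    rw [mul_agentOut_apply, h1, h2, hN, kroneckerMap_apply, one_apply]
    by_cases hi : i = q
    · simp [G₀, hLdef, treeMat, hi]
    · by_cases ha : a = l
      · by_cases hj : j = par i
        · simp [G₀, hLdef, treeMat, hi, ha, hj, (hpar i hi).1, mul_sub]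
        · simp [G₀, hLdef, treeMat, hi, ha, hj]
      · simp [G₀, ha]
  have hNpow : ∀ k : ℕ, N ^ k = (L ^ k) ⊗ₖ (1 : Matrix ν ν ℝ) := by
    intro k
    induction k with
    | zero => simp
    | succ k ih => rw [pow_succ, ih, hN, ← mul_kronecker_mul, one_mul, pow_succ]
  have hdetN : (ctrbMat N (blockIn ν q) (p + 1)).det ≠ 0 := by
    have : ctrbMat N (blockIn ν q) (p + 1) =
        (Matrix.of fun i k : Fin (p + 1) => (L ^ (k : ℕ)) i q) ⊗ₖ (1 : Matrix ν ν ℝ) := by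
      ext ⟨i, a⟩ ⟨k, b⟩
      simp [ctrbMat, hNpow, Matrix.mul_apply, blockIn, kroneckerMap_apply]
    rw [this, det_kronecker]
    simpa using pow_ne_zero _ hL
  have hcont : Continuous fun s : ℝ => (ctrbMat (s • M₀ + N) (blockIn ν q) (p + 1)).det :=
    continuous_det_ctrbMat _ ((continuous_id.smul continuous_const).add continuous_const) _
  have hev : ∀ᶠ s : ℝ in 𝓝[≠] 0, (ctrbMat (s • M₀ + N) (blockIn ν q) (p + 1)).det ≠ 0 := by
    refine (hcont.continuousAt.eventually_ne ?_).filter_mono nhdsWithin_le_nhds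
    simpa using hdetN
  obtain ⟨s, hs, hs0⟩ := (hev.and self_mem_nhdsWithin).exists
  refine ⟨s⁻¹ • G₀, fun hdet => hs ?_⟩
  have : s • M₀ + N = s • netMat M₀ (agentOut C adj) (s⁻¹ • G₀) := by
    ext ⟨i, a⟩ s'
    have hs1 : s ≠ 0 := hs0
    simp [netMat, hG₀, mul_add, hs1]
  rw [this, ctrbMat_smul, det_mul, hdet, zero_mul]

end Existence

section Assembly

open Polynomial in
lemma exists_monic_map_roots_eq (Λ : Multiset ℂ) (hΛ : Λ.map (starRingEnd ℂ) = Λ) :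
    ∃ χ : ℝ[X], χ.Monic ∧ χ.natDegree = Multiset.card Λ ∧ (χ.map (algebraMap ℝ ℂ)).roots = Λ := by
  set P : ℂ[X] := (Λ.map fun z => X - C z).prod with hP
  have hmonic : P.Monic := monic_multiset_prod_of_monic _ _ fun z _ => monic_X_sub_C z
  have hconj : P.map (starRingEnd ℂ) = P := by
    conv_rhs => rw [hP, ← hΛ]
    rw [hP, Polynomial.map_multiset_prod, Multiset.map_map, Multiset.map_map]
    simp
  have hlift : P ∈ lifts (algebraMap ℝ ℂ) := by
    rw [lifts_iff_coeff_lifts]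
    intro k
    obtain ⟨r, hr⟩ := Complex.conj_eq_iff_real.1 (by
      rw [← coeff_map, hconj] : (starRingEnd ℂ) (P.coeff k) = P.coeff k)
    exact ⟨r, hr.symm⟩
  obtain ⟨χ, hχ, hdeg, hχm⟩ := lifts_and_natDegree_eq_and_monic hlift hmonic
  refine ⟨χ, hχm, ?_, ?_⟩
  · rw [hdeg, natDegree_multiset_prod_X_sub_C_eq_card]
  · rw [hχ, hP, roots_multiset_prod_X_sub_C]

lemma eq_zero_of_unobs_eq_bot {ι ν : Type*} [Fintype ι] [DecidableEq ι] [Fintype ν] [DecidableEq ν]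
    {γ : ι → Type*} (Ct : ∀ i, Matrix (γ i) (ι × ν) ℝ) (M : Matrix (ι × ν) (ι × ν) ℝ) (q : ι)
    (h : unobs (outMat Ct {q}) (M.map Complex.ofRealHom) = ⊥) (x : ι × ν → ℝ)
    (hx : ∀ k : ℕ, (Ct q * M ^ k) *ᵥ x = 0) : x = 0 := by
  have hmem : (fun s => (x s : ℂ)) ∈ unobs (outMat Ct {q}) (M.map Complex.ofRealHom) := by
    refine mem_unobs.2 fun k => ?_
    rw [← mulVec_mulVec, outMat_mulVec_eq_zero_iff]
    intro i hi
    obtain rfl := Finset.mem_singleton.1 hi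
    rw [mulVec_mulVec]
    change ((Ct i).map Complex.ofRealHom * (Complex.ofRealHom.mapMatrix M) ^ k) *ᵥ _ = 0
    rw [← map_pow, RingHom.mapMatrix_apply, ← Matrix.map_mul]
    ext r
    simpa [mulVec, dotProduct] using congrArg Complex.ofReal (congrFun (hx k) r)
  rw [h, Submodule.mem_bot] at hmem
  exact funext fun s => Complex.ofReal_eq_zero.1 (congrFun hmem s)

lemma netMat_add_single {ι ν : Type*} [DecidableEq ι] [Fintype ν] [DecidableEq ν]
    {γ : ι → Type*} [∀ i, Fintype (γ i)] (M₀ : Matrix (ι × ν) (ι × ν) ℝ)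
    (Ct : ∀ i, Matrix (γ i) (ι × ν) ℝ) (G : ∀ i, Matrix ν (γ i) ℝ) (q : ι)
    (Y : Matrix ν (γ q) ℝ) :
    netMat M₀ Ct (G + Pi.single q Y) = netMat M₀ Ct G + blockIn ν q * (Y * Ct q) := by
  ext ⟨i, a⟩ s
  have h : (blockIn ν q * (Y * Ct q)) (i, a) s = if i = q then (Y * Ct q) a s else 0 := by
    rw [Matrix.mul_apply]
    by_cases hi : i = q <;> simp [blockIn, hi]
  rw [Matrix.add_apply, h]
  by_cases hi : i = q
  · subst hi
    simp [netMat, Matrix.add_mul, add_assoc]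
  · simp [netMat, hi]

variable {p : ℕ} {ν : Type*} [Fintype ν] [DecidableEq ν] {κ : Fin (p + 1) → Type*}
  [∀ i, Fintype (κ i)] [∀ i, DecidableEq (κ i)]

lemma exists_charpoly_network (A : Matrix ν ν ℝ) (W : Fin (p + 1) → Matrix ν ν ℝ)
    (C : ∀ i, Matrix (κ i) ν ℝ) (adj : Fin (p + 1) → Fin (p + 1) → Prop) [DecidableRel adj]
    (hconn : ∀ i j, Relation.ReflTransGen adj i j) (hC : ∀ i, C i ≠ 0)
    (hobs : ∀ (x : ν → ℂ) (l : ℂ), A.map Complex.ofRealHom *ᵥ x = l • x →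
      (∀ i, (C i).map Complex.ofRealHom *ᵥ x = 0) → x = 0)
    (q : Fin (p + 1)) (χ : Polynomial ℝ) (hχ : χ.Monic)
    (hdeg : χ.natDegree = Fintype.card (Fin (p + 1) × ν) + p) :
    ∃ (G : ∀ i, Matrix ν (κ i ⊕ (Fin (p + 1) × ν)) ℝ) (Ac : Matrix (Fin p) (Fin p) ℝ)
      (J : Matrix (Fin p) (κ q ⊕ (Fin (p + 1) × ν)) ℝ) (Cc : Matrix ν (Fin p) ℝ),
      (fromBlocks (netMat (baseMat A W) (agentOut C adj) G) (blockIn ν q * Cc)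
        (J * agentOut C adj q) Ac).charpoly = χ := by
  set Ct := agentOut C adj with hCt
  obtain ⟨G, hG, hGobs⟩ := exists_forall_unobs_eq_bot (baseMat A W) Ct
    (fun G => (ctrbMat (netMat (baseMat A W) Ct G) (blockIn ν q) (p + 1)).det ≠ 0)
    (exists_det_ctrbMat_netMat_ne_zero _ C adj hconn q)
    (fun G δ hG => (continuous_det_ctrbMat _ (continuous_netMat _ Ct G δ) _).continuousAt.eventually_ne
      (by simpa using hG))
    (eq_zero_of_forall_agentOut A W C adj hconn hobs)
    (finrank_ker_outMat_agentOut_lt C adj hconn hC)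
  set M := netMat (baseMat A W) Ct G with hM
  have hctrl : ∀ y, (∀ k : ℕ, y ᵥ* (M ^ k * blockIn ν q) = 0) → y = 0 := by
    intro y hy
    refine eq_zero_of_vecMul_eq_zero hG ?_
    ext r
    exact congrFun (hy r.1) r.2
  obtain ⟨X, a, hX⟩ := exists_feedback_scalar_observable M (blockIn ν q) (Ct q) hctrl
    (eq_zero_of_unobs_eq_bot Ct M q (hGobs {q} (Finset.singleton_nonempty q)))
  obtain ⟨D, Ac, Bc, Cc, hchar⟩ := exists_charpoly_compensated (M + blockIn ν q * X * Ct q)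
    (blockIn ν q) (a ᵥ* Ct q) hX (by simp [mul_comm]) (fun η hη => by
      have hdet := det_ctrbMat_add_mul_ne_zero hG (X * Ct q)
      rw [← Matrix.mul_assoc] at hdet
      have h0 : (fun r : Fin (p + 1) × ν => η r.1 r.2) = 0 := by
        refine eq_zero_of_mulVec_eq_zero hdet ?_
        rw [← hη]
        ext s
        simp [mulVec, dotProduct, ctrbMat, Fintype.sum_prod_type, Finset.sum_apply]
      exact funext fun k => funext fun b => congrFun h0 (k, b)) χ hχ hdeg
  refine ⟨G + Pi.single q (X + vecMulVec D a), Ac, vecMulVec Bc a, Cc, ?_⟩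
  rw [← hchar, netMat_add_single, Matrix.add_mul, Matrix.mul_add, ← Matrix.mul_assoc, ← add_assoc,
    vecMulVec_mul, vecMulVec_mul, mul_vecMulVec]

end Assembly

end SpectrumAssignment

open SpectrumAssignment

/-- For the closed-loop error system of the distributed
observer-based control, the spectrum can be freely assigned. -/
theorem spectrum_assignment_closed_loop_error_system
    {n m : ℕ} (hn : 0 < n) (hm : 1 < m)
    (mdim pdim : Fin m → ℕ)
    (A : Matrix (Fin n) (Fin n) ℝ)
    (B : ∀ i : Fin m, Matrix (Fin n) (Fin (mdim i)) ℝ)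
    (C : ∀ i : Fin m, Matrix (Fin (pdim i)) (Fin n) ℝ)
    (adj : Fin m → Fin m → Prop) [DecidableRel adj]
    (hself : ∀ i, adj i i)
    (hconn : ∀ i j : Fin m, Relation.ReflTransGen adj i j)
    (hBne : ∀ i, B i ≠ 0) (hCne : ∀ i, C i ≠ 0)
    (hjc : Controllable A
      (Matrix.of fun k (p : Σ i : Fin m, Fin (mdim i)) => B p.1 k p.2))
    (hjo : Observable
      (Matrix.of fun (p : Σ i : Fin m, Fin (pdim i)) k => C p.1 p.2 k) A)
    (F : ∀ i : Fin m, Matrix (Fin (mdim i)) (Fin n) ℝ)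
    (q : Fin m)
    (Λ : Multiset ℂ)
    (hcard : Multiset.card Λ = m * n + m - 1)
    (hsymm : Λ.map (starRingEnd ℂ) = Λ) :
    ∃ (K : ∀ i : Fin m, Matrix (Fin n) (Fin (pdim i)) ℝ)
      (H : Fin m → Fin m → Matrix (Fin n) (Fin n) ℝ)
      (Abar : Matrix (Fin (m - 1)) (Fin (m - 1)) ℝ)
      (Kbar : Matrix (Fin (m - 1)) (Fin (pdim q)) ℝ)
      (Hbar : Fin m → Matrix (Fin (m - 1)) (Fin n) ℝ)
      (Cbar : Matrix (Fin n) (Fin (m - 1)) ℝ),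
      (Matrix.charpoly
        ((Matrix.of (fun (p p' : (Fin m × Fin n) ⊕ Fin (m - 1)) =>
          match p, p' with
          | Sum.inl (i, k), Sum.inl (j, l) =>
              (if i = j then
                  (A + K i * C i) k l
                  + (∑ j' ∈ Finset.univ.filter (fun j' => adj j' i), H i j') k l
                  + (∑ j' : Fin m, B j' * F j') k l
                else 0)
              - (if adj j i then H i j k l else 0)
              - (B j * F j) k l
          | Sum.inl (i, k), Sum.inr l => if i = q then Cbar k l else 0
          | Sum.inr k, Sum.inl (j, l) =>
              (if j = q then
                  (Kbar * C q) k l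
                  + (∑ j' ∈ Finset.univ.filter (fun j' => adj j' q), Hbar j') k l
                else 0)
              - (if adj j q then Hbar j k l else 0)
          | Sum.inr k, Sum.inr l => Abar k l)).map (algebraMap ℝ ℂ))).roots = Λ := by
  obtain ⟨p, rfl⟩ : ∃ p, m = p + 1 := ⟨m - 1, by omega⟩
  obtain ⟨χ, hχ, hdeg, hroots⟩ := exists_monic_map_roots_eq Λ hsymm
  obtain ⟨G, Ac, J, Cc, hchar⟩ := exists_charpoly_network A (fun j => B j * F j) C adj hconn hCne
    (fun x l hx hCx => eq_zero_of_observable hjo x l hx (by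
      ext ⟨i, r⟩
      exact congrFun (hCx i) r)) q χ hχ (by
        rw [hdeg, hcard, Fintype.card_prod, Fintype.card_fin, Fintype.card_fin]; omega)
  refine ⟨fun i => (G i).submatrix id Sum.inl,
    fun i j => (G i).submatrix id fun b => Sum.inr (j, b), Ac, J.submatrix id Sum.inl,
    fun j => J.submatrix id fun b => Sum.inr (j, b), Cc, ?_⟩
  rw [charpoly_map, ← hroots, ← hchar]
  congr 3
  ext (⟨i, k⟩ | k) (⟨j, l⟩ | l)
  · refine Eq.trans ?_ (congrArg (baseMat A (fun j => B j * F j) (i, k) (j, l) + ·)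
      (mul_agentOut_apply C adj i (G i) k j l).symm)
    by_cases hij : i = j
    · subst hij
      simp only [baseMat, of_apply, if_true, Matrix.add_apply, submatrix_apply, id]
      ring
    · simp only [baseMat, of_apply, hij, Ne.symm hij, if_false, submatrix_apply, id]
      ring
  · rw [fromBlocks_apply₁₂, Matrix.mul_apply]
    by_cases hi : i = q <;> simp [blockIn, hi]
  · exact (mul_agentOut_apply C adj q J k j l).symm
  · rfl
end

section
/- There exist real matrices K_i ∈ ℝ^{n×p_i} and H_{ij} ∈ ℝ^{n×n} (j ∈ 𝒩_i, i = 1,…,m) such that for every q ∈ {1,…,m}, the open-loop error system ė_i = (A+K_iC_i)e_i + Σ_{j∈𝒩_i} H_{ij}(e_i − e_j) + Σ_{j=1}^m B_jF_j(e_i − e_j) + δ_{iq} ũ_q (i = 1,…,m), with composite state ε = col{e_1,…,e_m} ∈ ℝ^{nm}, input ũ_q ∈ ℝ^n entering only channel q, and output ỹ_q = col{C_q e_q, e_q − e_{j^q_1}, …, e_q − e_{j^q_{k_q}}} where {j^q_1,…,j^q_{k_q}} = 𝒩_q, is controllable by ũ_q with controllability index m and observable through ỹ_q. Equivalently, with M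 = Ã + Σ_{i=1}^m B̃_i(K_i Ĉ_i + H_i C̃_i), the pair (M, B̃_q) is controllable with controllability index m and the pair (col{Ĉ_q, C̃_q}, M) is observable, for every q ∈ {1,…,m}. -/
open Matrix Finset

/-- `B̃ᵢ = bᵢ ⊗ Iₙ`. -/
def Btil (n : ℕ) {m : ℕ} (i : Fin m) : Matrix (Fin m × Fin n) (Fin n) ℝ :=
  Matrix.of fun p l => if p.1 = i ∧ p.2 = l then (1 : ℝ) else 0

/-- `Ã = I_m ⊗ (A + Σⱼ BⱼFⱼ) − Q`, where the `(i,j)` block of `Q` is `BⱼFⱼ`. -/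
def Atil {n m : ℕ} {mdim : Fin m → ℕ} (A : Matrix (Fin n) (Fin n) ℝ)
    (B : ∀ i : Fin m, Matrix (Fin n) (Fin (mdim i)) ℝ)
    (F : ∀ i : Fin m, Matrix (Fin (mdim i)) (Fin n) ℝ) :
    Matrix (Fin m × Fin n) (Fin m × Fin n) ℝ :=
  Matrix.of fun p p' =>
    (if p.1 = p'.1 then (A + ∑ j : Fin m, B j * F j) p.2 p'.2 else 0)
      - (B p'.1 * F p'.1) p.2 p'.2

/-- `C̃ᵢ`, the stack of the matrices `C_{ij} = c_{ij} ⊗ Iₙ` over the neighbors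
`j ∈ 𝒩ᵢ`, where `c_{ij}` has `+1` in position `i`, `−1` in position `j`
(so `c_{ii} = 0` for the self-loop). -/
def Ctil (n : ℕ) {m : ℕ} (adj : Fin m → Fin m → Prop) [DecidableRel adj] (i : Fin m) :
    Matrix ({j // adj j i} × Fin n) (Fin m × Fin n) ℝ :=
  Matrix.of fun r p =>
    ((if p.1 = i then (1 : ℝ) else 0) - (if p.1 = (r.1 : Fin m) then 1 else 0))
      * (if r.2 = p.2 then 1 else 0)

/-- `Hᵢ = [H_{ij¹} … H_{ijᵏ}]`, the row block of the matrices `H_{ij}`, `j ∈ 𝒩ᵢ`. -/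
def Hblk {n m : ℕ} (adj : Fin m → Fin m → Prop) [DecidableRel adj]
    (H : Fin m → Fin m → Matrix (Fin n) (Fin n) ℝ) (i : Fin m) :
    Matrix (Fin n) ({j // adj j i} × Fin n) ℝ :=
  Matrix.of fun k r => H i (r.1 : Fin m) k r.2

section Observability

/-- `g` observes the dynamics `f` from the first `k` outputs. -/
def ObservesUpTo {𝕜 V W : Type*} [Field 𝕜] [AddCommGroup V] [Module 𝕜 V] [AddCommGroup W]
    [Module 𝕜 W] (g : V →ₗ[𝕜] W) (f : Module.End 𝕜 V) (k : ℕ) : Prop :=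
  ∀ x, (∀ j < k, g ((f ^ j) x) = 0) → x = 0

theorem observesUpTo_finrank_of_forall {𝕜 V W : Type*} [Field 𝕜] [AddCommGroup V] [Module 𝕜 V]
    [FiniteDimensional 𝕜 V] [AddCommGroup W] [Module 𝕜 W] {g : V →ₗ[𝕜] W} {f : Module.End 𝕜 V}
    (h : ∀ x, (∀ j, g ((f ^ j) x) = 0) → x = 0) :
    ObservesUpTo g f (Module.finrank 𝕜 V) := by
  intro x hx
  refine h x fun j => ?_
  rcases Nat.eq_zero_or_pos (Module.finrank 𝕜 V) with h0 | hpos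
  · have := Module.finrank_zero_iff.1 h0
    rw [Subsingleton.elim ((f ^ j) x) 0, map_zero]
  have hdeg : (Polynomial.X ^ j %ₘ f.charpoly).natDegree < Module.finrank 𝕜 V := by
    rw [← LinearMap.charpoly_natDegree f]
    refine Polynomial.natDegree_modByMonic_lt _ (LinearMap.charpoly_monic f) fun h1 => ?_
    have := LinearMap.charpoly_natDegree f
    rw [h1, Polynomial.natDegree_one] at this
    omega
  rw [LinearMap.pow_eq_aeval_mod_charpoly, Polynomial.aeval_eq_sum_range' hdeg,
    LinearMap.sum_apply, map_sum]
  refine Finset.sum_eq_zero fun i hi => ?_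
  rw [LinearMap.smul_apply, map_smul, hx i (Finset.mem_range.1 hi), smul_zero]

/-- The Popov–Belevitch–Hautus test: no eigenvector is invisible at the output. -/
theorem observesUpTo_finrank_of_eigenvector {𝕜 V W : Type*} [Field 𝕜] [IsAlgClosed 𝕜]
    [AddCommGroup V] [Module 𝕜 V] [FiniteDimensional 𝕜 V] [AddCommGroup W] [Module 𝕜 W]
    {g : V →ₗ[𝕜] W} {f : Module.End 𝕜 V}
    (h : ∀ (μ : 𝕜) x, f x = μ • x → g x = 0 → x = 0) :
    ObservesUpTo g f (Module.finrank 𝕜 V) := by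
  refine observesUpTo_finrank_of_forall ?_
  let U : Submodule 𝕜 V :=
    { carrier := {x | ∀ j, g ((f ^ j) x) = 0}
      add_mem' := fun ha hb j => by rw [map_add, map_add, ha j, hb j, add_zero]
      zero_mem' := fun j => by rw [map_zero, map_zero]
      smul_mem' := fun c x hx j => by rw [map_smul, map_smul, hx j, smul_zero] }
  have hU : ∀ x ∈ U, f x ∈ U := fun x hx j => by
    have := hx (j + 1)
    rwa [pow_succ] at this
  intro x hx
  by_contra hne
  have : Nontrivial U := ⟨⟨⟨x, hx⟩, 0, fun h0 => hne (congrArg Subtype.val h0)⟩⟩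
  obtain ⟨μ, hμ⟩ := Module.End.exists_eigenvalue (LinearMap.restrict f hU)
  obtain ⟨y, hy⟩ := hμ.exists_hasEigenvector
  refine hy.2 (Subtype.ext (h μ y ?_ (y.2 0)))
  exact congrArg Subtype.val hy.apply_eq_smul

theorem ObservesUpTo.eigenvector_eq_zero {𝕜 V W : Type*} [Field 𝕜] [AddCommGroup V] [Module 𝕜 V]
    [AddCommGroup W] [Module 𝕜 W] {g : V →ₗ[𝕜] W} {f : Module.End 𝕜 V} {k : ℕ}
    (h : ObservesUpTo g f k) {μ : 𝕜} {x : V} (hf : f x = μ • x) (hg : g x = 0) : x = 0 := by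
  have hpow : ∀ j, (f ^ j) x = μ ^ j • x := fun j => by
    induction j with
    | zero => simp
    | succ j ih => rw [pow_succ', Module.End.mul_apply, ih, map_smul, hf, smul_smul, pow_succ]
  exact h x fun j _ => by rw [hpow, map_smul, hg, smul_zero]

open Topology in
theorem eventually_injective_add_smul {V W : Type*} [NormedAddCommGroup V] [NormedSpace ℂ V]
    [FiniteDimensional ℂ V] [NormedAddCommGroup W] [NormedSpace ℂ W] (f₀ f₁ : V →ₗ[ℂ] W)
    (h : Function.Injective f₀) : ∀ᶠ s : ℝ in 𝓝 0, Function.Injective (f₀ + (s : ℂ) • f₁) := by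
  let F : ℝ → V →L[ℂ] W := fun s =>
    LinearMap.toContinuousLinearMap f₀ + (s : ℂ) • LinearMap.toContinuousLinearMap f₁
  have hF : Continuous F := by fun_prop
  have hopen := (ContinuousLinearMap.isOpen_injective (𝕜 := ℂ) (E := V) (F := W)).preimage hF
  exact hopen.mem_nhds (by simpa [F] using h)

open Topology in
theorem ObservesUpTo.eventually_add_smul {V W : Type*} [NormedAddCommGroup V] [NormedSpace ℂ V]
    [FiniteDimensional ℂ V] [NormedAddCommGroup W] [NormedSpace ℂ W]
    {g : V →ₗ[ℂ] W} {f₀ : Module.End ℂ V} {k : ℕ} (h : ObservesUpTo g f₀ k)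
    (f₁ : Module.End ℂ V) :
    ∀ᶠ s : ℝ in 𝓝 0, ObservesUpTo g (f₀ + (s : ℂ) • f₁) k := by
  let G := LinearMap.toContinuousLinearMap g
  let Φ : ℝ → V →L[ℂ] V := fun s =>
    LinearMap.toContinuousLinearMap f₀ + (s : ℂ) • LinearMap.toContinuousLinearMap f₁
  have hΦ : Continuous Φ := by fun_prop
  let F : ℝ → V →L[ℂ] (Fin k → W) := fun s =>
    ∑ j : Fin k, (ContinuousLinearMap.single ℂ (fun _ : Fin k => W) j).comp
      (G.comp (Φ s ^ (j : ℕ)))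
  have hF : Continuous F := by fun_prop
  have hpow : ∀ (s : ℝ) (j : ℕ) (x : V),
      (Φ s ^ j) x = ((f₀ + (s : ℂ) • f₁) ^ j) x := fun s j x => by
    induction j with
    | zero => simp
    | succ j ih =>
      rw [pow_succ', pow_succ', Module.End.mul_apply, ← ih]
      rfl
  have happ : ∀ s x (j : Fin k), F s x j = g (((f₀ + (s : ℂ) • f₁) ^ (j : ℕ)) x) := by
    intro s x j
    simp only [F, _root_.sum_apply, Finset.sum_apply,
      ContinuousLinearMap.comp_apply, ContinuousLinearMap.single_apply, hpow]
    rw [Finset.sum_eq_single j]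
    · simp [G]
    · intro i _ hij
      simp [Ne.symm hij]
    · simp
  have hiff : ∀ s, Function.Injective (F s) ↔ ObservesUpTo g (f₀ + (s : ℂ) • f₁) k := by
    intro s
    rw [injective_iff_map_eq_zero]
    refine forall_congr' fun x => imp_congr_left ?_
    rw [funext_iff, Fin.forall_iff]
    exact forall₂_congr fun j hj => by rw [happ s x ⟨j, hj⟩]; rfl
  have hopen := (ContinuousLinearMap.isOpen_injective (𝕜 := ℂ) (E := V)
    (F := Fin k → W)).preimage hF
  have hmem : (0 : ℝ) ∈ F ⁻¹' {L | Function.Injective L} := (hiff 0).2 (by simpa using h)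
  filter_upwards [hopen.mem_nhds hmem] with s hs using (hiff s).1 hs

end Observability

section Graph

variable {V : Type*} [Fintype V]

/-- Breadth-first search from `q`: every other vertex has a predecessor one step closer. -/
theorem exists_depth_parent {V : Type*} (r : V → V → Prop) (q : V)
    (h : ∀ i, Relation.ReflTransGen r q i) :
    ∃ (dep : V → ℕ) (par : V → V),
      ∀ i, i ≠ q → r (par i) i ∧ dep (par i) + 1 = dep i := by
  classical
  let P : ℕ → V → Prop := fun k i => Nat.rec (motive := fun _ => V → Prop) (fun i => i = q)
    (fun _ S i => ∃ j, S j ∧ r j i) k i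
  have hP : ∀ i, ∃ k, P k i := fun i => by
    induction h i with
    | refl => exact ⟨0, rfl⟩
    | tail _ hbc ih => exact ⟨ih.choose + 1, _, ih.choose_spec, hbc⟩
  have key : ∀ i, ∃ p, i ≠ q → r p i ∧ Nat.find (hP p) + 1 = Nat.find (hP i) := fun i => by
    by_cases hi : i = q
    · exact ⟨q, fun h' => absurd hi h'⟩
    obtain ⟨k, hk⟩ : ∃ k, Nat.find (hP i) = k + 1 := by
      refine Nat.exists_eq_succ_of_ne_zero fun h0 => hi ?_
      have := Nat.find_spec (hP i)
      rwa [h0] at this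
    have hspec := Nat.find_spec (hP i)
    rw [hk] at hspec
    obtain ⟨p, hp, hpi⟩ := hspec
    refine ⟨p, fun _ => ⟨hpi, ?_⟩⟩
    have h1 : Nat.find (hP p) ≤ k := Nat.find_min' _ hp
    have h2 : Nat.find (hP i) ≤ Nat.find (hP p) + 1 :=
      Nat.find_min' (hP i) ⟨p, Nat.find_spec (hP p), hpi⟩
    omega
  choose par hpar using key
  exact ⟨fun i => Nat.find (hP i), par, hpar⟩

/-- The in-degree Laplacian of a directed graph, applied to a vertex function. -/
def graphLap {V E : Type*} [Fintype V] [AddCommGroup E] (adj : V → V → Prop) [DecidableRel adj]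
    (y : V → E) (i : V) : E :=
  ∑ j, if adj j i then y i - y j else 0

theorem map_graphLap {E E' : Type*} [AddCommGroup E] [AddCommGroup E'] (adj : V → V → Prop)
    [DecidableRel adj] (φ : E →+ E') (y : V → E) (i : V) :
    φ (graphLap adj y i) = graphLap adj (fun j => φ (y j)) i := by
  simp only [graphLap, map_sum]
  exact Finset.sum_congr rfl fun j _ => by split_ifs <;> simp

theorem graphLap_add {E : Type*} [AddCommGroup E] (adj : V → V → Prop) [DecidableRel adj]
    (y z : V → E) (i : V) : graphLap adj (y + z) i = graphLap adj y i + graphLap adj z i := by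
  simp only [graphLap, ← Finset.sum_add_distrib]
  exact Finset.sum_congr rfl fun j _ => by split_ifs <;> [(simp; abel); simp]

theorem graphLap_smul {E R : Type*} [AddCommGroup E] [Ring R] [Module R E] (adj : V → V → Prop)
    [DecidableRel adj] (c : R) (y : V → E) (i : V) :
    graphLap adj (c • y) i = c • graphLap adj y i := by
  simp only [graphLap, Finset.smul_sum]
  exact Finset.sum_congr rfl fun j _ => by split_ifs <;> simp [smul_sub]

/-- The Laplacian with row `i` weighted by `d i`, as a complex-linear map. -/
def weightedLap (E : Type*) [AddCommGroup E] [Module ℂ E] (adj : V → V → Prop) [DecidableRel adj]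
    (d : V → ℝ) : Module.End ℂ (V → E) where
  toFun z i := (d i : ℂ) • graphLap adj z i
  map_add' y z := funext fun i => by rw [graphLap_add, smul_add, Pi.add_apply]
  map_smul' c z := funext fun i => by
    rw [graphLap_smul, RingHom.id_apply, Pi.smul_apply, smul_comm]

theorem weightedLap_apply {E : Type*} [AddCommGroup E] [Module ℂ E] (adj : V → V → Prop)
    [DecidableRel adj] (d : V → ℝ) (z : V → E) (i : V) :
    weightedLap E adj d z i = (d i : ℂ) • graphLap adj z i := rfl

variable {adj : V → V → Prop} [DecidableRel adj] {q : V}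

/-- Where a function attains its minimum and is superharmonic, it agrees with its neighbours. -/
theorem eq_of_graphLap_nonneg {y : V → ℝ} {i : V} (hmin : ∀ j, y i ≤ y j)
    (hi : 0 ≤ graphLap adj y i) {j : V} (hj : adj j i) : y j = y i := by
  have hle : ∀ j ∈ (Finset.univ : Finset V), (if adj j i then y i - y j else 0) ≤ 0 := by
    intro j _
    split_ifs
    · linarith [hmin j]
    · exact le_rfl
  have hz : ∑ j, (if adj j i then y i - y j else 0) = 0 :=
    le_antisymm (Finset.sum_nonpos hle) hi
  have := (Finset.sum_eq_zero_iff_of_nonpos hle).1 hz j (Finset.mem_univ j)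
  rw [if_pos hj] at this
  linarith

/-- The minimum principle for superharmonic functions. -/
theorem nonneg_of_graphLap_nonneg (hq : ∀ i, Relation.ReflTransGen adj q i) {S : Finset V}
    (hqS : q ∉ S) {y : V → ℝ} (hoff : ∀ i, i ∉ S → 0 ≤ y i)
    (hS : ∀ i ∈ S, 0 ≤ graphLap adj y i) (i : V) : 0 ≤ y i := by
  obtain ⟨a, -, ha⟩ := Finset.exists_min_image Finset.univ y ⟨i, Finset.mem_univ i⟩
  have hmin : ∀ j, y a ≤ y j := fun j => ha j (Finset.mem_univ j)
  by_contra! hneg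
  have hay : y a < 0 := (hmin i).trans_lt hneg
  have key : ∀ b, Relation.ReflTransGen adj b a → y b = y a := by
    intro b hb
    induction hb using Relation.ReflTransGen.head_induction_on with
    | refl => rfl
    | head h _ ih =>
      rename_i b c _
      have hcS : c ∈ S := by
        by_contra hc
        linarith [hoff c hc]
      rw [← ih]
      exact eq_of_graphLap_nonneg (fun j => ih ▸ hmin j) (hS c hcS) h
  linarith [hoff q hqS, key q (hq a)]

theorem eq_zero_of_graphLap_eq_zero (hq : ∀ i, Relation.ReflTransGen adj q i) {S : Finset V}
    (hqS : q ∉ S) {z : V → ℂ} (hoff : ∀ i, i ∉ S → z i = 0)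
    (hS : ∀ i ∈ S, graphLap adj z i = 0) : z = 0 := by
  have aux : ∀ φ : ℂ →+ ℝ, ∀ i, 0 ≤ φ (z i) := fun φ i =>
    nonneg_of_graphLap_nonneg hq hqS (y := fun i => φ (z i))
      (fun i hi => by rw [hoff i hi, map_zero])
      (fun i hi => by rw [← map_graphLap, hS i hi, map_zero]) i
  funext i
  have h1 := aux Complex.reAddGroupHom i
  have h2 := aux (-Complex.reAddGroupHom) i
  have h3 := aux Complex.imAddGroupHom i
  have h4 := aux (-Complex.imAddGroupHom) i
  simp at h1 h2 h3 h4
  exact Complex.ext (le_antisymm h2 h1) (le_antisymm h4 h3)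

/-- A nonnegative superharmonic function on `S` vanishing at the in-neighbours of `q` vanishes at
every vertex whose path `nxt` towards `q` stays in `S` after one step. -/
theorem eq_zero_of_path {nxt : V → V} {dst : V → ℕ}
    (hnxt : ∀ i, i ≠ q → adj i (nxt i) ∧ dst (nxt i) + 1 = dst i) {S : Finset V}
    {y : V → ℝ} (h0 : ∀ i, 0 ≤ y i) (hS : ∀ i ∈ S, 0 ≤ graphLap adj y i)
    (hr : ∀ r, adj r q → y r = 0) (hclosed : ∀ i ∈ S, nxt i ≠ q → nxt i ∈ S)
    (i : V) (hiq : i ≠ q) (hi : nxt i ≠ q → nxt i ∈ S) : y i = 0 := by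
  induction hd : dst i generalizing i with
  | zero => have := (hnxt i hiq).2; omega
  | succ d ih =>
    by_cases hn : nxt i = q
    · exact hr i (hn ▸ (hnxt i hiq).1)
    · have hz : y (nxt i) = 0 := by
        refine ih (nxt i) hn (hclosed _ (hi hn)) ?_
        have := (hnxt i hiq).2
        omega
      rw [eq_of_graphLap_nonneg (fun j => hz ▸ h0 j) (hS _ (hi hn)) (hnxt i hiq).1, hz]

open Topology in
/-- On a vertex set from which every vertex has a path to `q`, positive row weights can be chosen
so that the Laplacian grounded outside the set is observed at the in-neighbours of `q`. -/
theorem exists_weights_observed [DecidableEq V] (hq : ∀ i, Relation.ReflTransGen adj q i)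
    {nxt : V → V} {dst : V → ℕ}
    (hnxt : ∀ i, i ≠ q → adj i (nxt i) ∧ dst (nxt i) + 1 = dst i) (S : Finset V) (hqS : q ∉ S)
    (hclosed : ∀ i ∈ S, nxt i ≠ q → nxt i ∈ S) :
    ∃ d : V → ℝ, (∀ i ∈ S, 0 < d i) ∧ ∀ (μ : ℂ) (z : V → ℂ), (∀ i, i ∉ S → z i = 0) →
      (∀ i ∈ S, (d i : ℂ) • graphLap adj z i = μ • z i) → (∀ r, adj r q → z r = 0) → z = 0 := by
  induction S using Finset.induction_on_max_value dst with
  | empty => exact ⟨1, by simp, fun μ z hz _ _ => funext fun i => hz i (Finset.notMem_empty i)⟩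
  | insert k S hkS hmax ih =>
    have hqS' : q ∉ S := fun h => hqS (Finset.mem_insert_of_mem h)
    have hkq : k ≠ q := fun h => hqS (h ▸ Finset.mem_insert_self k S)
    have hclosed' : ∀ i ∈ S, nxt i ≠ q → nxt i ∈ S := by
      intro i hi hne
      refine (Finset.mem_insert.1 (hclosed i (Finset.mem_insert_of_mem hi) hne)).resolve_left ?_
      intro hk
      have h1 := (hnxt i (fun h => hqS' (h ▸ hi))).2
      have h2 := hmax i hi
      rw [hk] at h1
      omega
    obtain ⟨d, hd, hobs⟩ := ih hqS' hclosed'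
    let f₀ : Module.End ℂ (V → ℂ) := weightedLap ℂ adj fun i => if i ∈ S then d i else 0
    let f₁ : Module.End ℂ (V → ℂ) := weightedLap ℂ adj (Pi.single k 1)
    let g : (V → ℂ) →ₗ[ℂ] (V → ℂ) :=
      LinearMap.pi fun i => (if i ∉ insert k S ∨ adj i q then (1 : ℂ) else 0) • LinearMap.proj i
    have hg : ∀ z, g z = 0 ↔ (∀ i, i ∉ insert k S → z i = 0) ∧ ∀ r, adj r q → z r = 0 := by
      intro z
      rw [← forall_and, funext_iff]
      refine forall_congr' fun i => ?_
      simp only [g, LinearMap.pi_apply, LinearMap.smul_apply, LinearMap.proj_apply]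
      by_cases h : i ∉ insert k S ∨ adj i q
      · rw [if_pos h, one_smul]
        exact ⟨fun h' => ⟨fun _ => h', fun _ => h'⟩, fun h' => h.elim h'.1 h'.2⟩
      · rw [if_neg h, zero_smul]
        exact ⟨fun _ => ⟨fun h' => absurd (Or.inl h') h, fun h' => absurd (Or.inr h') h⟩,
          fun _ => rfl⟩
    have hbase : ObservesUpTo g f₀ (Module.finrank ℂ (V → ℂ)) := by
      refine observesUpTo_finrank_of_eigenvector fun μ z hf hz => ?_
      obtain ⟨hoff, hr⟩ := (hg z).1 hz
      have hrow : ∀ i ∈ S, (d i : ℂ) • graphLap adj z i = μ • z i := by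
        intro i hi
        have := congrFun hf i
        rwa [weightedLap_apply, if_pos hi] at this
      have hzk : μ = 0 ∨ z k = 0 := by
        have := congrFun hf k
        rw [weightedLap_apply, if_neg hkS] at this
        simpa using this.symm
      have hoff' : z k = 0 → ∀ i, i ∉ S → z i = 0 := by
        intro h0 i hi
        by_cases hik : i = k
        · rw [hik, h0]
        · exact hoff i (by simp [hik, hi])
      rcases hzk with rfl | h0
      · have hlap : ∀ i ∈ S, graphLap adj z i = 0 := by
          intro i hi
          have := hrow i hi
          rw [zero_smul, smul_eq_zero] at this
          exact this.resolve_left (by exact_mod_cast (hd i hi).ne')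
        by_cases h0 : z k = 0
        · exact eq_zero_of_graphLap_eq_zero hq hqS' (hoff' h0) hlap
        exfalso
        let φ : ℂ →+ ℝ := Complex.reAddGroupHom.comp (AddMonoidHom.mulLeft (z k)⁻¹)
        have hφ : φ (z k) = 1 := by simp [φ, h0]
        have hlap' : ∀ i ∈ S, 0 ≤ graphLap adj (fun i => φ (z i)) i := fun i hi => by
          rw [← map_graphLap, hlap i hi, map_zero]
        have hnonneg := nonneg_of_graphLap_nonneg hq hqS' (y := fun i => φ (z i)) (by
          intro i hi
          by_cases hik : i = k
          · simp only [hik, hφ, zero_le_one]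
          · simp only [hoff i (by simp [hik, hi]), map_zero, le_refl]) hlap'
        have := eq_zero_of_path hnxt hnonneg hlap' (fun r hr' => by
          simp only [hr r hr', map_zero]) hclosed' k hkq (fun hn => by
            refine (Finset.mem_insert.1
              (hclosed k (Finset.mem_insert_self k S) hn)).resolve_left fun hk => ?_
            have := (hnxt k hkq).2
            rw [hk] at this
            omega)
        simp only [hφ, one_ne_zero] at this
      · exact hobs μ z (hoff' h0) hrow hr
    obtain ⟨s, hs, hspos⟩ := (((hbase.eventually_add_smul f₁).filter_mono
      (nhdsWithin_le_nhds (s := Set.Ioi 0))).and self_mem_nhdsWithin).exists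
    refine ⟨Function.update d k s, fun i hi => ?_, fun μ z hoff hrow hr => ?_⟩
    · rcases Finset.mem_insert.1 hi with rfl | hi
      · simpa using hspos
      · rw [Function.update_of_ne (fun h : i = k => hkS (h ▸ hi))]
        exact hd i hi
    · refine hs.eigenvector_eq_zero (μ := μ) (funext fun i => ?_) ((hg z).2 ⟨hoff, hr⟩)
      simp only [f₀, f₁, LinearMap.add_apply, LinearMap.smul_apply, Pi.add_apply, Pi.smul_apply,
        weightedLap_apply]
      by_cases hik : i = k
      · subst hik
        have := hrow i (Finset.mem_insert_self i S)
        rw [Function.update_self] at this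
        rw [← this]
        simp [hkS]
      · by_cases hi : i ∈ S
        · have := hrow i (Finset.mem_insert_of_mem hi)
          rw [Function.update_of_ne hik] at this
          rw [← this]
          simp [hi, hik]
        · simp [hi, hik, hoff i (by simp [hik, hi])]

/-- Left eigenvectors of the Laplacian of an out-tree rooted at `q` do not vanish at `q`, when the
weights are distinct and the root weight is the weight `0` of its empty in-neighbourhood. -/
theorem tree_left_eigenvector_eq_zero [DecidableEq V] {par : V → V} {dep : V → ℕ}
    (hpar : ∀ i, i ≠ q → dep (par i) + 1 = dep i) {d : V → ℂ} (hd : Function.Injective d)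
    (hdq : d q = 0) {μ : ℂ} {w : V → ℂ} (hwq : w q = 0)
    (hw : ∀ j, d j * w j - ∑ c, (if c ≠ q ∧ par c = j then d c * w c else 0) = μ * w j) :
    w = 0 := by
  by_contra hne
  obtain ⟨i₀, hi₀⟩ := Function.ne_iff.1 hne
  have hne' : (Finset.univ.filter fun i => w i ≠ 0).Nonempty := ⟨i₀, by simpa using hi₀⟩
  obtain ⟨k, hk, hkmax⟩ := Finset.exists_max_image _ dep hne'
  obtain ⟨l, hl, hlmin⟩ := Finset.exists_min_image _ dep hne'
  simp only [Finset.mem_filter, Finset.mem_univ, true_and] at hk hkmax hl hlmin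
  have hsupq : ∀ {j}, w j ≠ 0 → j ≠ q := fun hj h => hj (h ▸ hwq)
  have leaf : ∀ j, w j ≠ 0 → (∀ c, c ≠ q → par c = j → w c = 0) → μ = d j := by
    intro j hj hc
    have h1 := hw j
    rw [Finset.sum_eq_zero, sub_zero] at h1
    · exact (mul_right_cancel₀ hj h1).symm
    · intro c _
      split_ifs with h
      · rw [hc c h.1 h.2, mul_zero]
      · rfl
  have hμ : μ = d k := leaf k hk fun c hcq hck => by
    by_contra h
    have h1 := hkmax c h
    have h2 := hpar c hcq
    rw [hck] at h2
    omega
  have anc : ∀ t j, w j ≠ 0 → dep j + t = dep k → par^[t] k = j := by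
    intro t
    induction t with
    | zero =>
      intro j hj ht
      refine hd (hμ.symm.trans (leaf j hj fun c hcq hcj => ?_))
      by_contra h
      have h1 := hkmax c h
      have h2 := hpar c hcq
      rw [hcj] at h2
      omega
    | succ t ih =>
      intro j hj ht
      by_cases hc : ∀ c, c ≠ q → par c = j → w c = 0
      · have : k = j := hd (hμ.symm.trans (leaf j hj hc))
        rw [this] at ht
        omega
      · push Not at hc
        obtain ⟨c, hcq, hcj, hwc⟩ := hc
        have h2 := hpar c hcq
        rw [hcj] at h2
        rw [Function.iterate_succ_apply', ih c hwc (by omega), hcj]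
  have uniq : ∀ c c', w c ≠ 0 → w c' ≠ 0 → dep c = dep c' → c = c' := by
    intro c c' hc hc' hcc
    have h1 := hkmax c hc
    exact (anc (dep k - dep c) c hc (by omega)).symm.trans
      (anc (dep k - dep c) c' hc' (by omega))
  have hlq := hsupq hl
  have hp : w (par l) = 0 := by
    by_contra h
    have h1 := hlmin _ h
    have h2 := hpar l hlq
    omega
  have h1 := hw (par l)
  rw [hp, mul_zero, mul_zero, zero_sub, neg_eq_zero, Finset.sum_eq_single l] at h1
  · rw [if_pos ⟨hlq, rfl⟩] at h1
    rcases mul_eq_zero.1 h1 with h | h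
    · exact hlq (hd (h.trans hdq.symm))
    · exact hl h
  · intro c _ hcl
    split_ifs with h
    · by_contra hwc
      have hwc' : w c ≠ 0 := right_ne_zero_of_mul hwc
      refine hcl (uniq c l hwc' hl ?_)
      have h2 := hpar c h.1
      rw [h.2] at h2
      have h3 := hpar l hlq
      omega
    · rfl
  · simp

section Cascade

variable {E : Type*} [NormedAddCommGroup E] [NormedSpace ℂ E] [FiniteDimensional ℂ E]

/-- The output map reading the in-neighbours of `q`. -/
def neighborProj (E : Type*) [AddCommGroup E] [Module ℂ E] (adj : V → V → Prop)
    [DecidableRel adj] (q : V) : (V → E) →ₗ[ℂ] (V → E) :=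
  LinearMap.pi fun i => if adj i q then LinearMap.proj i else 0

theorem neighborProj_eq_zero_iff {V : Type*} {adj : V → V → Prop} [DecidableRel adj] {q : V}
    {E : Type*} [AddCommGroup E] [Module ℂ E] {z : V → E} :
    neighborProj E adj q z = 0 ↔ ∀ r, adj r q → z r = 0 := by
  rw [funext_iff]
  refine forall_congr' fun i => ?_
  simp only [neighborProj, LinearMap.pi_apply]
  by_cases h : adj i q <;> simp [h]

/-- Erase the entry at `q`. -/
def eraseAt (E : Type*) [AddCommGroup E] [Module ℂ E] [DecidableEq V] (q : V) :
    (V → E) →ₗ[ℂ] (V → E) :=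
  LinearMap.pi fun i => if i = q then 0 else LinearMap.proj i

theorem eraseAt_self {V : Type*} [DecidableEq V] {q : V} {E : Type*} [AddCommGroup E]
    [Module ℂ E] (x : V → E) :
    eraseAt E q x q = 0 := by
  simp [eraseAt]

theorem eraseAt_of_ne {V : Type*} [DecidableEq V] {q : V} {E : Type*} [AddCommGroup E]
    [Module ℂ E] (x : V → E)
    {i : V} (hi : i ≠ q) : eraseAt E q x i = x i := by
  simp [eraseAt, hi]

/-- Use `l i` away from `q` and `l₀` at `q`. -/
def splitAt {U E : Type*} [AddCommGroup U] [Module ℂ U] [AddCommGroup E] [Module ℂ E]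
    [DecidableEq V] (q : V) (l₀ : U →ₗ[ℂ] E) (l : U →ₗ[ℂ] (V → E)) : U →ₗ[ℂ] (V → E) :=
  LinearMap.pi fun i => if i = q then l₀ else LinearMap.proj i ∘ₗ l

theorem splitAt_self {V : Type*} {q : V} {U E : Type*} [AddCommGroup U] [Module ℂ U]
    [AddCommGroup E] [Module ℂ E] [DecidableEq V] (l₀ : U →ₗ[ℂ] E) (l : U →ₗ[ℂ] (V → E)) (x : U) :
    splitAt q l₀ l x q = l₀ x := by
  simp [splitAt]

theorem splitAt_of_ne {V : Type*} {q : V} {U E : Type*} [AddCommGroup U] [Module ℂ U]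
    [AddCommGroup E] [Module ℂ E] [DecidableEq V] (l₀ : U →ₗ[ℂ] E) (l : U →ₗ[ℂ] (V → E)) (x : U) {i : V} (hi : i ≠ q) :
    splitAt q l₀ l x i = l x i := by
  simp [splitAt, hi]

/-- Apply `l i` to the `i`-th entry. -/
def diagMap {E : Type*} [AddCommGroup E] [Module ℂ E] (l : V → Module.End ℂ E) :
    (V → E) →ₗ[ℂ] (V → E) :=
  LinearMap.pi fun i => l i ∘ₗ LinearMap.proj i

theorem diagMap_apply {V : Type*} {E : Type*} [AddCommGroup E] [Module ℂ E] (l : V → Module.End ℂ E)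
    (x : V → E) (i : V) : diagMap l x i = l i (x i) := rfl

open Topology in
/-- With weights `d` as in `exists_weights_observed`, the grounded Laplacian remains observed at
the in-neighbours of `q` after a small perturbation acting in each fibre. -/
theorem eventually_observed_grounded [DecidableEq V] {d : V → ℝ} (hself : adj q q)
    (hobs : ∀ (μ : ℂ) (z : V → ℂ), z q = 0 →
      (∀ i, i ≠ q → (d i : ℂ) • graphLap adj z i = μ • z i) → (∀ r, adj r q → z r = 0) → z = 0)
    (a : Module.End ℂ E) :
    ∀ᶠ s : ℝ in 𝓝 0, ∀ (μ : ℂ) (z : V → E),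
      (∀ i, i ≠ q → (d i : ℂ) • graphLap adj z i + (s : ℂ) • a (z i) = μ • z i) →
      (∀ r, adj r q → z r = 0) → z = 0 := by
  have hbase : ObservesUpTo (neighborProj E adj q) (splitAt q 0 (weightedLap E adj d))
      (Module.finrank ℂ (V → E)) := by
    refine observesUpTo_finrank_of_eigenvector fun μ z hf hz => ?_
    rw [neighborProj_eq_zero_iff] at hz
    funext i
    refine (Module.forall_dual_apply_eq_zero_iff ℂ (z i)).1 fun ψ => ?_
    refine congrFun (hobs μ (fun i => ψ (z i)) (by simp [hz q hself]) (fun i hi => ?_)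
      (fun r hr => by simp [hz r hr])) i
    have h1 := congrFun hf i
    rw [splitAt_of_ne _ _ _ hi, weightedLap_apply] at h1
    have h2 := map_graphLap adj (ψ : E →ₗ[ℂ] ℂ).toAddMonoidHom z i
    simp only [LinearMap.toAddMonoidHom_coe] at h2
    rw [← h2, ← map_smul, h1, Pi.smul_apply, map_smul]
  filter_upwards [hbase.eventually_add_smul (splitAt q 0 (diagMap fun _ => a))] with s hs μ z hz hr
  refine hs.eigenvector_eq_zero (μ := μ) (funext fun i => ?_) (neighborProj_eq_zero_iff.2 hr)
  simp only [LinearMap.add_apply, LinearMap.smul_apply, Pi.add_apply, Pi.smul_apply]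
  by_cases hi : i = q
  · rw [hi, splitAt_self, splitAt_self, hr q hself]
    simp
  · rw [splitAt_of_ne _ _ _ hi, splitAt_of_ne _ _ _ hi, weightedLap_apply, diagMap_apply, hz i hi]

/-- Without fibre dynamics in the network, the sources `r i v` can be reconstructed from the
in-neighbours of `q`. -/
theorem eq_zero_of_static_network [DecidableEq V] (hq : ∀ i, Relation.ReflTransGen adj q i)
    {nxt : V → V} {dst : V → ℕ}
    (hnxt : ∀ i, i ≠ q → adj i (nxt i) ∧ dst (nxt i) + 1 = dst i)
    {d : V → ℝ} (hd : ∀ i, i ≠ q → 0 < d i) {r : V → Module.End ℂ E} {v : E} {φ : E →ₗ[ℝ] ℝ}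
    (hφ : ∀ i, 0 ≤ φ (r i v) ∧ (φ (r i v) = 0 → r i v = 0))
    {z : V → E} (hzq : z q = 0) (hz : ∀ i, i ≠ q → (d i : ℂ) • graphLap adj z i + r i v = 0)
    (hzr : ∀ j, adj j q → z j = 0) : (∀ i, i ≠ q → r i v = 0) ∧ z = 0 := by
  have hmem : ∀ i ∈ Finset.univ.erase q, i ≠ q := fun i hi => Finset.ne_of_mem_erase hi
  have hlap : ∀ i, i ≠ q → d i * graphLap adj (fun j => -φ (z j)) i = φ (r i v) := by
    intro i hi
    have h1 := congrArg φ (eq_neg_of_add_eq_zero_right (hz i hi))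
    have h2 := map_graphLap adj (-φ).toAddMonoidHom z i
    simp only [LinearMap.toAddMonoidHom_coe, LinearMap.neg_apply] at h2
    rw [Complex.coe_smul, map_neg, map_smul, smul_eq_mul] at h1
    rw [← h2, h1]
    ring
  have hsup : ∀ i ∈ Finset.univ.erase q, 0 ≤ graphLap adj (fun j => -φ (z j)) i := by
    intro i hi
    have := (hφ i).1
    rw [← hlap i (hmem i hi)] at this
    exact nonneg_of_mul_nonneg_right this (hd i (hmem i hi))
  have hnonneg := nonneg_of_graphLap_nonneg hq (Finset.notMem_erase q _)
    (y := fun j => -φ (z j)) (fun i hi => by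
      have : i = q := by simpa using hi
      simp [this, hzq]) hsup
  have hy : (fun j => -φ (z j)) = 0 := by
    funext i
    by_cases hi : i = q
    · simp [hi, hzq]
    · exact eq_zero_of_path hnxt hnonneg hsup (fun j hj => by simp [hzr j hj])
        (fun i _ h => by simpa using h) i hi (fun h => by simpa using h)
  have hrv : ∀ i, i ≠ q → r i v = 0 := by
    intro i hi
    refine (hφ i).2 ?_
    rw [← hlap i hi, hy]
    simp [graphLap]
  refine ⟨hrv, funext fun i => (Module.forall_dual_apply_eq_zero_iff ℂ (z i)).1 fun ψ => ?_⟩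
  refine congrFun (eq_zero_of_graphLap_eq_zero hq (Finset.notMem_erase q Finset.univ)
    (z := fun i => ψ (z i)) (fun i hi => ?_) fun i hi => ?_) i
  · have : i = q := by simpa using hi
    simp [this, hzq]
  · have h1 := hz i (hmem i hi)
    rw [hrv i (hmem i hi), add_zero, smul_eq_zero] at h1
    have h2 := map_graphLap adj (ψ : E →ₗ[ℂ] ℂ).toAddMonoidHom z i
    simp only [LinearMap.toAddMonoidHom_coe] at h2
    rw [← h2, h1.resolve_left (by exact_mod_cast (hd i (hmem i hi)).ne'), map_zero]

open Topology in
/-- The static reconstruction persists when the network is fast compared with a mode `μ`. -/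
theorem eventually_eq_zero_of_mode [DecidableEq V]
    (hq : ∀ i, Relation.ReflTransGen adj q i) {nxt : V → V} {dst : V → ℕ}
    (hnxt : ∀ i, i ≠ q → adj i (nxt i) ∧ dst (nxt i) + 1 = dst i)
    {d : V → ℝ} (hd : ∀ i, i ≠ q → 0 < d i) {r : V → Module.End ℂ E}
    (hr : ∀ v, ∃ φ : E →ₗ[ℝ] ℝ, ∀ i, 0 ≤ φ (r i v) ∧ (φ (r i v) = 0 → r i v = 0))
    {a : Module.End ℂ E} (hjoint : ∀ (μ : ℂ) v, a v = μ • v → (∀ i, r i v = 0) → v = 0)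
    (a' : Module.End ℂ E) (μ : ℂ) :
    ∀ᶠ s : ℝ in 𝓝 0, ∀ x : V → E, a (x q) = μ • x q → r q (x q) = 0 →
      (∀ i, i ≠ q → (d i : ℂ) • graphLap adj (eraseAt E q x) i + r i (x q)
        + (s : ℂ) • (a' (x i) - μ • x i) = 0) →
      (∀ j, adj j q → eraseAt E q x j = 0) → x = 0 := by
  let p : (V → E) →ₗ[ℂ] E := LinearMap.proj q
  let Ψ₀ : (V → E) →ₗ[ℂ] E × E × (V → E) × (V → E) :=
    ((a - μ • LinearMap.id) ∘ₗ p).prod ((r q ∘ₗ p).prod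
      ((splitAt q 0 (weightedLap E adj d ∘ₗ eraseAt E q + LinearMap.pi fun i => r i ∘ₗ p)).prod
        (neighborProj E adj q ∘ₗ eraseAt E q)))
  let Ψ₁ : (V → E) →ₗ[ℂ] E × E × (V → E) × (V → E) :=
    (0 : (V → E) →ₗ[ℂ] E).prod ((0 : (V → E) →ₗ[ℂ] E).prod
      ((splitAt q 0 (diagMap fun _ => a' - μ • LinearMap.id)).prod 0))
  have happ : ∀ (s : ℝ) x, (Ψ₀ + (s : ℂ) • Ψ₁) x = 0 ↔ a (x q) = μ • x q ∧ r q (x q) = 0 ∧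
      (∀ i, i ≠ q → (d i : ℂ) • graphLap adj (eraseAt E q x) i + r i (x q)
        + (s : ℂ) • (a' (x i) - μ • x i) = 0) ∧
      ∀ j, adj j q → eraseAt E q x j = 0 := by
    intro s x
    simp only [Ψ₀, Ψ₁, p, LinearMap.add_apply, LinearMap.smul_apply, LinearMap.prod_apply,
      Function.prod_apply, LinearMap.comp_apply, LinearMap.zero_apply, Prod.smul_mk, Prod.mk_add_mk,
      Prod.mk_eq_zero, smul_zero, add_zero, neighborProj_eq_zero_iff, LinearMap.sub_apply,
      LinearMap.id_apply, LinearMap.proj_apply, sub_eq_zero]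
    refine and_congr_right fun _ => and_congr_right fun _ => and_congr_left fun _ => ?_
    rw [funext_iff]
    refine forall_congr' fun i => ?_
    by_cases hi : i = q
    · simp [hi, splitAt_self]
    · simp [hi, splitAt_of_ne, weightedLap_apply, diagMap_apply]
  have hinj : Function.Injective Ψ₀ := by
    rw [injective_iff_map_eq_zero]
    intro x hx
    have h0 := (happ 0 x).1 (by simpa using hx)
    simp only [Complex.ofReal_zero, zero_smul, add_zero] at h0
    obtain ⟨h1, h2, h3, h4⟩ := h0
    obtain ⟨φ, hφ⟩ := hr (x q)
    obtain ⟨h5, h6⟩ := eq_zero_of_static_network hq hnxt hd hφ (eraseAt_self x) h3 h4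
    have hv : x q = 0 := hjoint μ _ h1 fun i => by
      by_cases hi : i = q
      · rwa [hi]
      · exact h5 i hi
    funext i
    by_cases hi : i = q
    · rw [hi, hv, Pi.zero_apply]
    · rw [← eraseAt_of_ne x hi, h6]
  filter_upwards [eventually_injective_add_smul Ψ₀ Ψ₁ hinj] with s hs x h1 h2 h3 h4
  exact (injective_iff_map_eq_zero _).1 hs x ((happ s x).2 ⟨h1, h2, h3, h4⟩)

open Topology in
/-- Gains making the networked error dynamics observable from `q`. -/
theorem exists_gains_observed [DecidableEq V] (hself : adj q q)
    (hq : ∀ i, Relation.ReflTransGen adj q i) (hq' : ∀ i, Relation.ReflTransGen adj i q)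
    {r : V → Module.End ℂ E}
    (hr : ∀ v, ∃ φ : E →ₗ[ℝ] ℝ, ∀ i, 0 ≤ φ (r i v) ∧ (φ (r i v) = 0 → r i v = 0))
    {a : Module.End ℂ E} (hjoint : ∀ (μ : ℂ) v, a v = μ • v → (∀ i, r i v = 0) → v = 0)
    (b : V → Module.End ℂ E) :
    ∃ h ρ : V → ℝ, ∀ M : (V → E) → (V → E),
      (∀ e i, M e i = a (e i) + (ρ i : ℂ) • r i (e i) + (h i : ℂ) • graphLap adj e i
        + ∑ j, b j (e i - e j)) →
      ∀ e, (∀ k, r q ((M^[k] e) q) = 0 ∧ ∀ j, adj j q → (M^[k] e) q = (M^[k] e) j) → e = 0 := by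
  obtain ⟨dst, nxt, hnxt⟩ := exists_depth_parent (fun i j => adj j i) q
    fun i => Relation.reflTransGen_swap.2 (hq' i)
  obtain ⟨d, hd, hobs⟩ := exists_weights_observed hq hnxt (Finset.univ.erase q)
    (Finset.notMem_erase q _) (fun i _ h => by simpa using h)
  replace hd : ∀ i, i ≠ q → 0 < d i := fun i hi => hd i (by simpa using hi)
  replace hobs : ∀ (μ : ℂ) (z : V → ℂ), z q = 0 →
      (∀ i, i ≠ q → (d i : ℂ) • graphLap adj z i = μ • z i) →
      (∀ r, adj r q → z r = 0) → z = 0 := fun μ z h1 h2 h3 =>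
    hobs μ z (fun i hi => by
      have : i = q := by simpa using hi
      rw [this, h1]) (fun i hi => h2 i (Finset.ne_of_mem_erase hi)) h3
  let a' : Module.End ℂ E := a + ∑ j, b j
  have hfin := Module.End.finite_hasEigenvalue a
  have hmodes : ∀ᶠ s : ℝ in 𝓝 0, ∀ μ ∈ {μ | a.HasEigenvalue μ}, ∀ x : V → E,
      a (x q) = μ • x q → r q (x q) = 0 →
      (∀ i, i ≠ q → (d i : ℂ) • graphLap adj (eraseAt E q x) i + r i (x q)
        + (s : ℂ) • (a' (x i) - μ • x i) = 0) →
      (∀ j, adj j q → eraseAt E q x j = 0) → x = 0 :=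
    (Filter.eventually_all_finite hfin).2 fun μ _ =>
      eventually_eq_zero_of_mode hq hnxt hd hr hjoint a' μ
  obtain ⟨s, ⟨hs₁, hs₂⟩, hs⟩ := ((((eventually_observed_grounded hself hobs a').and
    hmodes).filter_mono (nhdsWithin_le_nhds (s := Set.Ioi 0))).and self_mem_nhdsWithin).exists
  have hs0 : (s : ℂ) ≠ 0 := by exact_mod_cast (Set.mem_Ioi.1 hs).ne'
  let p : (V → E) →ₗ[ℂ] E := LinearMap.proj q
  let f₀ : Module.End ℂ (V → E) := splitAt q (a ∘ₗ p) ((s : ℂ)⁻¹ •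
    (weightedLap E adj d ∘ₗ eraseAt E q + (LinearMap.pi fun i => r i ∘ₗ p)
      + (s : ℂ) • diagMap fun _ => a'))
  let f₁ : Module.End ℂ (V → E) := splitAt q (-(∑ j, b j ∘ₗ LinearMap.proj j) ∘ₗ eraseAt E q)
    ((s : ℂ)⁻¹ • diagMap r)
  let g : (V → E) →ₗ[ℂ] E × (V → E) :=
    (r q ∘ₗ p).prod (neighborProj E adj q ∘ₗ eraseAt E q)
  have hg : ∀ x, g x = 0 ↔ r q (x q) = 0 ∧ ∀ j, adj j q → eraseAt E q x j = 0 := by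
    intro x
    simp only [g, p, LinearMap.prod_apply, Function.prod_apply, LinearMap.comp_apply,
      Prod.mk_eq_zero, neighborProj_eq_zero_iff, LinearMap.proj_apply]
  have hf₀ : ∀ x i, i ≠ q → f₀ x i = (s : ℂ)⁻¹ • ((d i : ℂ) • graphLap adj (eraseAt E q x) i
      + r i (x q) + (s : ℂ) • a' (x i)) := fun x i hi => by
    simp only [f₀, splitAt_of_ne _ _ _ hi]
    rfl
  have hbase : ObservesUpTo g f₀ (Module.finrank ℂ (V → E)) := by
    refine observesUpTo_finrank_of_eigenvector fun μ x hf hx => ?_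
    obtain ⟨hxq, hxr⟩ := (hg x).1 hx
    have hav : a (x q) = μ • x q := by
      have := congrFun hf q
      rwa [splitAt_self] at this
    have hrow : ∀ i, i ≠ q → (d i : ℂ) • graphLap adj (eraseAt E q x) i
        + r i (x q) + (s : ℂ) • a' (x i) = (s : ℂ) • μ • x i := by
      intro i hi
      have := congrFun hf i
      rw [hf₀ x i hi, inv_smul_eq_iff₀ hs0] at this
      exact this
    by_cases hv : x q = 0
    · have hz := hs₁ (s * μ) (eraseAt E q x) (fun i hi => by
        have := hrow i hi
        rw [hv, map_zero, add_zero] at this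
        rw [eraseAt_of_ne x hi, this, mul_smul]) hxr
      funext i
      by_cases hi : i = q
      · rw [hi, hv, Pi.zero_apply]
      · rw [← eraseAt_of_ne x hi, hz]
    · have hμ : a.HasEigenvalue μ :=
        Module.End.hasEigenvalue_of_hasEigenvector
          ⟨Module.End.mem_eigenspace_iff.2 hav, hv⟩
      refine hs₂ μ hμ x hav hxq (fun i hi => ?_) hxr
      rw [smul_sub, ← add_sub_assoc, hrow i hi, sub_self]
  obtain ⟨ε, hε₁, hε⟩ := (((hbase.eventually_add_smul f₁).filter_mono
    (nhdsWithin_le_nhds (s := Set.Ioi 0))).and self_mem_nhdsWithin).exists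
  have hε0 : (ε : ℂ) ≠ 0 := by exact_mod_cast (Set.mem_Ioi.1 hε).ne'
  refine ⟨fun i => if i = q then 0 else s⁻¹ * d i, fun i => if i = q then 0 else ε * s⁻¹,
    fun M hM e he => ?_⟩
  have hMq : ∀ e, M e q = a (e q) + ∑ j, b j (e q - e j) := fun e => by simpa using hM e q
  have hMi : ∀ e i, i ≠ q → M e i = a (e i) + ((ε * s⁻¹ : ℝ) : ℂ) • r i (e i)
      + ((s⁻¹ * d i : ℝ) : ℂ) • graphLap adj e i + ∑ j, b j (e i - e j) := fun e i hi => by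
    simpa only [if_neg hi] using hM e i
  let T : (V → E) → (V → E) := fun e i => if i = q then e q else (ε : ℂ)⁻¹ • (e i - e q)
  have hTq : ∀ e, T e q = e q := fun e => if_pos rfl
  have hT : ∀ e i, i ≠ q → e i = e q + (ε : ℂ) • T e i := fun e i hi => by
    simp only [T, if_neg hi]
    rw [smul_inv_smul₀ hε0]
    abel
  have hT' : ∀ e i, e i = e q + (ε : ℂ) • eraseAt E q (T e) i := fun e i => by
    by_cases hi : i = q
    · rw [hi, eraseAt_self, smul_zero, add_zero]
    · rw [eraseAt_of_ne _ hi, ← hT e i hi]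
  have hconj : ∀ e, (f₀ + (ε : ℂ) • f₁) (T e) = T (M e) := by
    intro e
    funext i
    rw [LinearMap.add_apply, LinearMap.smul_apply, Pi.add_apply, Pi.smul_apply]
    by_cases hi : i = q
    · rw [hi]
      have h1 : ∀ j, b j (e q - e j) = -((ε : ℂ) • b j (eraseAt E q (T e) j)) := fun j => by
        conv_lhs => rw [hT' e j]
        rw [← map_smul, ← map_neg]
        congr 1
        abel
      rw [hTq, hMq, splitAt_self, splitAt_self, Finset.sum_congr rfl fun j _ => h1 j,
        Finset.sum_neg_distrib, ← Finset.smul_sum]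
      simp [p, hTq]
    · have hsum : ∑ j, b j (e i - e j) - ∑ j, b j (e q - e j) =
          (ε : ℂ) • (∑ j, b j) (T e i) := by
        rw [← Finset.sum_sub_distrib, LinearMap.sum_apply, Finset.smul_sum]
        refine Finset.sum_congr rfl fun j _ => ?_
        rw [← map_sub, ← map_smul, hT e i hi]
        congr 1
        abel
      have hlap : graphLap adj e i = (ε : ℂ) • graphLap adj (eraseAt E q (T e)) i := by
        rw [← graphLap_smul]
        simp only [graphLap]
        refine Finset.sum_congr rfl fun j _ => ?_
        split_ifs
        · conv_lhs => rw [hT' e i, hT' e j]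
          simp only [Pi.smul_apply]
          abel
        · rfl
      have hf₁ : f₁ (T e) i = (s : ℂ)⁻¹ • r i (T e i) := by
        simp only [f₁, splitAt_of_ne _ _ _ hi]
        rfl
      have hTM : T (M e) i = (ε : ℂ)⁻¹ • (M e i - M e q) := if_neg hi
      have hdiff : M e i - M e q = (ε : ℂ) • (a (T e i)) + ((ε : ℂ) * (s : ℂ)⁻¹) • r i (e i)
          + ((s : ℂ)⁻¹ * d i) • graphLap adj e i
          + (∑ j, b j (e i - e j) - ∑ j, b j (e q - e j)) := by
        rw [hMi e i hi, hMq, ← map_smul a, show (ε : ℂ) • T e i = e i - e q by rw [hT e i hi]; abel,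
          map_sub]
        push_cast
        abel
      rw [hTM, eq_inv_smul_iff₀ hε0, hdiff, hsum, hlap, hf₀ _ i hi, hf₁, hTq,
        show r i (e i) = r i (e q) + (ε : ℂ) • r i (T e i) by
          rw [← map_smul, ← map_add, ← hT e i hi],
        show a' (T e i) = a (T e i) + (∑ j, b j) (T e i) from rfl, smul_add (s : ℂ)⁻¹,
        inv_smul_smul₀ hs0]
      module
  have hpow : ∀ k, ((f₀ + (ε : ℂ) • f₁) ^ k) (T e) = T (M^[k] e) := fun k => by
    induction k with
    | zero => rfl
    | succ k ih => rw [pow_succ', Module.End.mul_apply, ih, hconj, Function.iterate_succ_apply']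
  have hTe : T e = 0 := hε₁ (T e) fun k _ => by
    rw [hpow, hg, hTq]
    refine ⟨(he k).1, fun j hj => ?_⟩
    by_cases hjq : j = q
    · rw [hjq, eraseAt_self]
    · rw [eraseAt_of_ne _ hjq]
      simp only [T, if_neg hjq]
      rw [(he k).2 j hj, sub_self, smul_zero]
  funext i
  have heq : e q = 0 := by rw [← hTq e, hTe, Pi.zero_apply]
  by_cases hi : i = q
  · rw [hi, heq, Pi.zero_apply]
  · rw [hT e i hi, heq, hTe]
    simp

end Cascade

end Graph

section ControllabilityMatrix

variable {ι κ : Type*} [Fintype ι] [DecidableEq ι] [Fintype κ]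

theorem ctrbMat_rank_eq_card_iff {A : Matrix ι ι ℝ} {B : Matrix ι κ ℝ} {k : ℕ} :
    (ctrbMat A B k).rank = Fintype.card ι ↔
      ∀ y : ι → ℝ, (∀ j < k, y ᵥ* (A ^ j * B) = 0) → y = 0 := by
  have hli : (ctrbMat A B k).rank = Fintype.card ι ↔ LinearIndependent ℝ (ctrbMat A B k).row := by
    rw [linearIndependent_iff_card_eq_finrank_span, Matrix.rank_eq_finrank_span_row, eq_comm]
    rfl
  rw [hli, ← Matrix.vecMul_injective_iff, ← Matrix.coe_vecMulLinear, injective_iff_map_eq_zero]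
  refine forall_congr' fun y => imp_congr_left ?_
  simp only [Matrix.vecMulLinear_apply, funext_iff, Prod.forall, Fin.forall_iff]
  rfl

theorem ctrbMat_rank_eq_card_of_le {A : Matrix ι ι ℝ} {B : Matrix ι κ ℝ} {k l : ℕ} (hkl : k ≤ l)
    (h : (ctrbMat A B k).rank = Fintype.card ι) : (ctrbMat A B l).rank = Fintype.card ι := by
  rw [ctrbMat_rank_eq_card_iff] at h ⊢
  exact fun y hy => h y fun j hj => hy j (hj.trans_le hkl)

/-- If `k` blocks of the controllability matrix suffice, and no smaller number can for dimension
reasons, then `k` is the controllability index. -/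
theorem ctrlIndex_eq_of_rank {A : Matrix ι ι ℝ} {B : Matrix ι κ ℝ} {k : ℕ} (hk : 0 < k)
    (hκ : 0 < Fintype.card κ) (hcard : Fintype.card ι = k * Fintype.card κ)
    (h : (ctrbMat A B k).rank = Fintype.card ι) : ctrlIndex A B = k := by
  refine le_antisymm (Nat.sInf_le ⟨hk, h⟩) (le_csInf ⟨k, hk, h⟩ fun l ⟨_, hl⟩ => ?_)
  have := (ctrbMat A B l).rank_le_card_width
  rw [hl, hcard, Fintype.card_prod, Fintype.card_fin] at this
  exact Nat.le_of_mul_le_mul_right this hκ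

theorem observable_iff {A : Matrix ι ι ℝ} {C : Matrix κ ι ℝ} :
    Observable C A ↔
      ∀ x : ι → ℝ, (∀ j < Fintype.card ι, C *ᵥ (A ^ j *ᵥ x) = 0) → x = 0 := by
  rw [Observable, Controllable, ctrbMat_rank_eq_card_iff]
  refine forall_congr' fun x => imp_congr_left <| forall₂_congr fun j _ => ?_
  rw [← Matrix.transpose_pow, ← Matrix.transpose_mul, Matrix.vecMul_transpose,
    Matrix.mulVec_mulVec]

theorem observable_of_forall {A : Matrix ι ι ℝ} {C : Matrix κ ι ℝ}
    (h : ∀ x : ι → ℝ, (∀ j, C *ᵥ (A ^ j *ᵥ x) = 0) → x = 0) : Observable C A := by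
  rw [observable_iff]
  have hpow : ∀ j, Matrix.mulVecLin A ^ j = Matrix.mulVecLin (A ^ j) := fun j => by
    rw [← Matrix.toLin'_apply', ← Matrix.toLin'_apply', Matrix.toLin'_pow]
  have := observesUpTo_finrank_of_forall (g := C.mulVecLin) (f := A.mulVecLin)
    (by simpa only [hpow, Matrix.mulVecLin_apply] using h)
  simpa only [ObservesUpTo, hpow, Matrix.mulVecLin_apply, Module.finrank_fintype_fun_eq_card]
    using this

end ControllabilityMatrix

section Genericity

/-- Along every line, `P` holds exactly off the zero set of a polynomial. -/
def PolynomiallyOpen {X : Type*} [AddCommGroup X] [Module ℝ X] (P : X → Prop) : Prop :=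
  ∀ a b, ∃ p : Polynomial ℝ, ∀ t : ℝ, P (a + t • b) ↔ p.eval t ≠ 0

theorem PolynomiallyOpen.and {X : Type*} [AddCommGroup X] [Module ℝ X] {P Q : X → Prop}
    (hP : PolynomiallyOpen P) (hQ : PolynomiallyOpen Q) :
    PolynomiallyOpen fun x => P x ∧ Q x := fun a b => by
  obtain ⟨p, hp⟩ := hP a b
  obtain ⟨q, hq⟩ := hQ a b
  exact ⟨p * q, fun t => by
    rw [Polynomial.eval_mul, mul_ne_zero_iff]
    exact and_congr (hp t) (hq t)⟩

theorem PolynomiallyOpen.exists_and {X : Type*} [AddCommGroup X] [Module ℝ X] {P Q : X → Prop}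
    (hP : PolynomiallyOpen P) (hQ : PolynomiallyOpen Q) (hPx : ∃ x, P x) (hQx : ∃ x, Q x) :
    ∃ x, P x ∧ Q x := by
  obtain ⟨x, hx⟩ := hPx
  obtain ⟨y, hy⟩ := hQx
  obtain ⟨p, hp⟩ := hP x (y - x)
  obtain ⟨q, hq⟩ := hQ x (y - x)
  have hp0 : p ≠ 0 := by
    rintro rfl
    exact (hp 0).1 (by simpa using hx) Polynomial.eval_zero
  have hq0 : q ≠ 0 := by
    rintro rfl
    exact (hq 1).1 (by simpa using hy) Polynomial.eval_zero
  obtain ⟨t, ht⟩ : ∃ t, (p * q).eval t ≠ 0 := by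
    by_contra! h
    exact mul_ne_zero hp0 hq0 (Polynomial.funext fun t => by rw [h t, Polynomial.eval_zero])
  rw [Polynomial.eval_mul, mul_ne_zero_iff] at ht
  exact ⟨_, (hp t).2 ht.1, (hq t).2 ht.2⟩

theorem PolynomiallyOpen.forall_mem {X ι : Type*} [AddCommGroup X] [Module ℝ X] {P : ι → X → Prop}
    (hP : ∀ i, PolynomiallyOpen (P i)) (hPx : ∀ i, ∃ x, P i x) (s : Finset ι) :
    (PolynomiallyOpen fun x => ∀ i ∈ s, P i x) ∧ ∃ x, ∀ i ∈ s, P i x := by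
  classical
  induction s using Finset.induction_on with
  | empty => exact ⟨fun _ _ => ⟨1, by simp⟩, 0, by simp⟩
  | insert i s _ ih =>
    simp only [Finset.forall_mem_insert]
    exact ⟨(hP i).and ih.1, (hP i).exists_and ih.1 (hPx i) ih.2⟩

/-- Full rank of the controllability matrix is a generic property on an affine family. -/
theorem polynomiallyOpen_rank_ctrbMat {X ι κ : Type*} [AddCommGroup X] [Module ℝ X] [Fintype ι]
    [DecidableEq ι] [Fintype κ] {M : X → Matrix ι ι ℝ} {L : X → Matrix ι ι ℝ}
    (hM : ∀ a b (t : ℝ), M (a + t • b) = M a + t • L b) (B : Matrix ι κ ℝ) (k : ℕ) :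
    PolynomiallyOpen fun x => (ctrbMat (M x) B k).rank = Fintype.card ι := by
  intro a b
  let N : Matrix ι ι (Polynomial ℝ) :=
    (M a).map Polynomial.C + (Polynomial.X : Polynomial ℝ) • (L b).map Polynomial.C
  let R : Matrix ι (Fin k × κ) (Polynomial ℝ) :=
    Matrix.of fun i p => (N ^ (p.1 : ℕ) * B.map Polynomial.C) i p.2
  refine ⟨(R * Rᵀ).det, fun t => ?_⟩
  let φ := Polynomial.evalRingHom t
  have hN : N.map φ = M (a + t • b) := by
    rw [hM]
    ext i j
    simp only [N, φ, Matrix.map_apply, Matrix.add_apply, Matrix.smul_apply, smul_eq_mul,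
      Polynomial.coe_evalRingHom, Polynomial.eval_add, Polynomial.eval_mul, Polynomial.eval_C,
      Polynomial.eval_X]
  have hR : R.map φ = ctrbMat (M (a + t • b)) B k := by
    ext i p
    have hB : (B.map Polynomial.C).map φ = B := by
      ext i j
      simp [φ]
    have : (N ^ (p.1 : ℕ) * B.map Polynomial.C).map φ = M (a + t • b) ^ (p.1 : ℕ) * B := by
      rw [Matrix.map_mul, hB, Matrix.map_pow, hN]
    exact congrFun₂ this i p.2
  have hdet : (R * Rᵀ).det.eval t = (ctrbMat (M (a + t • b)) B k *
      (ctrbMat (M (a + t • b)) B k)ᵀ).det := by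
    rw [← Polynomial.coe_evalRingHom, RingHom.map_det, RingHom.mapMatrix_apply, Matrix.map_mul,
      Matrix.transpose_map, hR]
  dsimp only
  rw [hdet, ← Matrix.rank_self_mul_transpose, ← isUnit_iff_ne_zero, ← Matrix.isUnit_iff_isUnit_det]
  refine ⟨fun h => ?_, Matrix.rank_of_isUnit _⟩
  rw [← Matrix.linearIndependent_rows_iff_isUnit, linearIndependent_iff_card_eq_finrank_span, ← h,
    Matrix.rank_eq_finrank_span_row]
  rfl

end Genericity

section ErrorSystem

variable {n m : ℕ} {mdim pdim : Fin m → ℕ}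

/-- The part of the error system matrix contributed by the gains `Kᵢ`, `H_{ij}`. -/
def gainMat (C : ∀ i : Fin m, Matrix (Fin (pdim i)) (Fin n) ℝ) (adj : Fin m → Fin m → Prop)
    [DecidableRel adj]
    (x : (∀ i : Fin m, Matrix (Fin n) (Fin (pdim i)) ℝ) ×
      (Fin m → Fin m → Matrix (Fin n) (Fin n) ℝ)) :
    Matrix (Fin m × Fin n) (Fin m × Fin n) ℝ :=
  ∑ i : Fin m, Btil n i * (x.1 i * (C i * (Btil n i)ᵀ) + Hblk adj x.2 i * Ctil n adj i)

theorem gainMat_add_smul (C : ∀ i : Fin m, Matrix (Fin (pdim i)) (Fin n) ℝ)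
    (adj : Fin m → Fin m → Prop) [DecidableRel adj]
    (x y : (∀ i : Fin m, Matrix (Fin n) (Fin (pdim i)) ℝ) ×
      (Fin m → Fin m → Matrix (Fin n) (Fin n) ℝ)) (t : ℝ) :
    gainMat C adj (x + t • y) = gainMat C adj x + t • gainMat C adj y := by
  have hH : ∀ i, Hblk adj (x + t • y).2 i = Hblk adj x.2 i + t • Hblk adj y.2 i := fun i => rfl
  simp only [gainMat, hH, Prod.fst_add, Prod.smul_fst, Pi.add_apply, Pi.smul_apply,
    Matrix.add_mul, Matrix.smul_mul, Matrix.mul_add, Matrix.mul_smul, Finset.smul_sum,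
    ← Finset.sum_add_distrib]
  refine Finset.sum_congr rfl fun i _ => ?_
  module

theorem Btil_mulVec (i j : Fin m) (v : Fin n → ℝ) (k : Fin n) :
    (Btil n i *ᵥ v) (j, k) = if j = i then v k else 0 := by
  simp [Btil, Matrix.mulVec, dotProduct, ite_and]

theorem Btil_transpose_mulVec (i : Fin m) (e : Fin m × Fin n → ℝ) :
    (Btil n i)ᵀ *ᵥ e = Function.curry e i := by
  funext k
  simp [Btil, Matrix.mulVec, dotProduct, ite_and, Fintype.sum_prod_type, Function.curry]

theorem Ctil_mulVec (adj : Fin m → Fin m → Prop) [DecidableRel adj] (i : Fin m)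
    (e : Fin m × Fin n → ℝ) (r : {j // adj j i} × Fin n) :
    (Ctil n adj i *ᵥ e) r = (Function.curry e i - Function.curry e r.1) r.2 := by
  simp [Ctil, Matrix.mulVec, dotProduct, Fintype.sum_prod_type, Function.curry, sub_mul,
    Finset.sum_sub_distrib]

theorem Hblk_mulVec (adj : Fin m → Fin m → Prop) [DecidableRel adj]
    (H : Fin m → Fin m → Matrix (Fin n) (Fin n) ℝ) (i : Fin m) (w : {j // adj j i} × Fin n → ℝ) :
    Hblk adj H i *ᵥ w = ∑ j : {j // adj j i}, H i j *ᵥ Function.curry w j := by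
  funext k
  simp [Hblk, Matrix.mulVec, dotProduct, Fintype.sum_prod_type, Function.curry]

theorem Atil_mulVec (A : Matrix (Fin n) (Fin n) ℝ)
    (B : ∀ i : Fin m, Matrix (Fin n) (Fin (mdim i)) ℝ)
    (F : ∀ i : Fin m, Matrix (Fin (mdim i)) (Fin n) ℝ) (e : Fin m × Fin n → ℝ) (i : Fin m) :
    Function.curry (Atil A B F *ᵥ e) i = A *ᵥ Function.curry e i +
      ∑ j, (B j * F j) *ᵥ (Function.curry e i - Function.curry e j) := by
  have h : Function.curry (Atil A B F *ᵥ e) i = (A + ∑ j, B j * F j) *ᵥ Function.curry e i -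
      ∑ j, (B j * F j) *ᵥ Function.curry e j := by
    funext k
    simp only [Atil, Matrix.mulVec, dotProduct, Function.curry, Matrix.of_apply,
      Fintype.sum_prod_type, sub_mul, Finset.sum_sub_distrib, Pi.sub_apply, Finset.sum_apply]
    simp
  rw [h, Matrix.add_mulVec, Matrix.sum_mulVec]
  simp only [Matrix.mulVec_sub, Finset.sum_sub_distrib, add_sub_assoc]

theorem gainMat_mulVec (C : ∀ i : Fin m, Matrix (Fin (pdim i)) (Fin n) ℝ)
    (adj : Fin m → Fin m → Prop) [DecidableRel adj]
    (x : (∀ i : Fin m, Matrix (Fin n) (Fin (pdim i)) ℝ) ×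
      (Fin m → Fin m → Matrix (Fin n) (Fin n) ℝ)) (e : Fin m × Fin n → ℝ) (i : Fin m) :
    Function.curry (gainMat C adj x *ᵥ e) i = x.1 i *ᵥ (C i *ᵥ Function.curry e i) +
      ∑ j, if adj j i then x.2 i j *ᵥ (Function.curry e i - Function.curry e j) else 0 := by
  funext k
  have h : ∀ c, Hblk adj x.2 c *ᵥ (Ctil n adj c *ᵥ e) =
      ∑ j, if adj j c then x.2 c j *ᵥ (Function.curry e c - Function.curry e j) else 0 := by
    intro c
    rw [Hblk_mulVec, ← Finset.sum_filter, Finset.sum_subtype (p := fun j => adj j c) _ (by simp)]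
    refine Finset.sum_congr rfl fun j _ => congrArg _ (funext fun l => ?_)
    exact Ctil_mulVec adj c e (j, l)
  simp only [Function.curry_apply, gainMat, Matrix.sum_mulVec, Finset.sum_apply,
    ← Matrix.mulVec_mulVec, Btil_mulVec, Matrix.add_mulVec, Finset.sum_ite_eq,
    Finset.mem_univ, if_true, Btil_transpose_mulVec, h]

/-- The error system in terms of the local error vectors. -/
theorem errorSystem_mulVec (A : Matrix (Fin n) (Fin n) ℝ)
    (B : ∀ i : Fin m, Matrix (Fin n) (Fin (mdim i)) ℝ)
    (C : ∀ i : Fin m, Matrix (Fin (pdim i)) (Fin n) ℝ)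
    (F : ∀ i : Fin m, Matrix (Fin (mdim i)) (Fin n) ℝ)
    (adj : Fin m → Fin m → Prop) [DecidableRel adj]
    (x : (∀ i : Fin m, Matrix (Fin n) (Fin (pdim i)) ℝ) ×
      (Fin m → Fin m → Matrix (Fin n) (Fin n) ℝ)) (e : Fin m × Fin n → ℝ) (i : Fin m) :
    Function.curry ((Atil A B F + gainMat C adj x) *ᵥ e) i =
      A *ᵥ Function.curry e i + x.1 i *ᵥ (C i *ᵥ Function.curry e i) +
      (∑ j, if adj j i then x.2 i j *ᵥ (Function.curry e i - Function.curry e j) else 0) +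
      ∑ j, (B j * F j) *ᵥ (Function.curry e i - Function.curry e j) := by
  rw [Matrix.add_mulVec, show ∀ u v : Fin m × Fin n → ℝ, Function.curry (u + v) i =
    Function.curry u i + Function.curry v i from fun _ _ => rfl, Atil_mulVec,
    gainMat_mulVec]
  abel

end ErrorSystem

section Complexification

theorem comp_map_ofReal_mulVec {κ ι : Type*} [Fintype ι] (ℓ : ℂ →ₗ[ℝ] ℝ) (A : Matrix κ ι ℝ)
    (v : ι → ℂ) : ⇑ℓ ∘ (A.map Complex.ofReal *ᵥ v) = A *ᵥ (⇑ℓ ∘ v) := by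
  funext k
  simp [Matrix.mulVec, dotProduct, ← Complex.real_smul]

theorem map_ofReal_mulVec {κ ι : Type*} [Fintype ι] (A : Matrix κ ι ℝ) (v : ι → ℝ) :
    A.map Complex.ofReal *ᵥ (fun k => (v k : ℂ)) = fun k => ((A *ᵥ v) k : ℂ) :=
  funext fun k => (RingHom.map_mulVec Complex.ofRealHom A v k).symm

/-- A real observable pair has no unobservable complex eigenvector. -/
theorem Observable.eigenvector_eq_zero {ι κ : Type*} [Fintype ι] [DecidableEq ι] [Fintype κ]
    {C : Matrix κ ι ℝ} {A : Matrix ι ι ℝ} (h : Observable C A) {μ : ℂ} {v : ι → ℂ}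
    (hv : A.map Complex.ofReal *ᵥ v = μ • v) (hC : C.map Complex.ofReal *ᵥ v = 0) : v = 0 := by
  rw [observable_iff] at h
  have hpow : ∀ j, (A ^ j).map Complex.ofReal *ᵥ v = μ ^ j • v := fun j => by
    induction j with
    | zero => simp [Matrix.map_one]
    | succ j ih =>
      have hA : (A ^ (j + 1)).map Complex.ofReal =
          A.map Complex.ofReal * (A ^ j).map Complex.ofReal := by
        rw [pow_succ']
        exact Matrix.map_mul (f := Complex.ofRealHom)
      rw [hA, ← Matrix.mulVec_mulVec, ih, Matrix.mulVec_smul, hv, smul_smul, pow_succ]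
  have hℓ : ∀ ℓ : ℂ →ₗ[ℝ] ℝ, ⇑ℓ ∘ v = 0 := fun ℓ => h _ fun j _ => by
    rw [← comp_map_ofReal_mulVec, ← comp_map_ofReal_mulVec, hpow, Matrix.mulVec_smul, hC, smul_zero]
    exact funext fun _ => map_zero ℓ
  exact funext fun k => Complex.ext (congrFun (hℓ Complex.reLm) k) (congrFun (hℓ Complex.imLm) k)

/-- The Popov-Belevitch-Hautus test for real pairs. -/
theorem observable_of_eigenvector {ι κ : Type*} [Fintype ι] [DecidableEq ι] [Fintype κ]
    {C : Matrix κ ι ℝ} {A : Matrix ι ι ℝ}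
    (h : ∀ (μ : ℂ) (v : ι → ℂ), A.map Complex.ofReal *ᵥ v = μ • v →
      C.map Complex.ofReal *ᵥ v = 0 → v = 0) : Observable C A := by
  rw [observable_iff]
  intro x hx
  have hobs := observesUpTo_finrank_of_eigenvector (f := (A.map Complex.ofReal).mulVecLin)
    (g := (C.map Complex.ofReal).mulVecLin) h
  rw [Module.finrank_fintype_fun_eq_card] at hobs
  have hpow : ∀ j, ((A.map Complex.ofReal).mulVecLin ^ j) (fun k => (x k : ℂ)) =
      fun k => ((A ^ j *ᵥ x) k : ℂ) := fun j => by
    induction j with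
    | zero => simp
    | succ j ih =>
      rw [pow_succ', Module.End.mul_apply, ih, Matrix.mulVecLin_apply, map_ofReal_mulVec,
        Matrix.mulVec_mulVec, ← pow_succ']
  have h0 := hobs (fun k => (x k : ℂ)) fun j hj => by
    rw [hpow, Matrix.mulVecLin_apply, map_ofReal_mulVec, hx j hj]
    exact funext fun _ => Complex.ofReal_zero
  exact funext fun k => Complex.ofReal_eq_zero.1 (congrFun h0 k)

open scoped ComplexOrder in
/-- A common quadratic form certifying that all the maps `CᴴC` act non-negatively on `v`. -/
theorem exists_nonneg_functional {ι : Type*} [Fintype ι] (v : ι → ℂ) :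
    ∃ φ : (ι → ℂ) →ₗ[ℝ] ℝ, ∀ (p : ℕ) (C : Matrix (Fin p) ι ℂ),
      0 ≤ φ ((Cᴴ * C) *ᵥ v) ∧ (φ ((Cᴴ * C) *ᵥ v) = 0 → (Cᴴ * C) *ᵥ v = 0) := by
  refine ⟨Complex.reLm ∘ₗ (dotProductBilin ℂ ℂ (star v)).restrictScalars ℝ, fun p C => ?_⟩
  have h : star v ⬝ᵥ ((Cᴴ * C) *ᵥ v) = star (C *ᵥ v) ⬝ᵥ (C *ᵥ v) := by
    rw [← Matrix.mulVec_mulVec, Matrix.dotProduct_mulVec, ← Matrix.star_mulVec]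
  have hnn := dotProduct_star_self_nonneg (C *ᵥ v)
  change 0 ≤ (star v ⬝ᵥ ((Cᴴ * C) *ᵥ v)).re ∧ ((star v ⬝ᵥ ((Cᴴ * C) *ᵥ v)).re = 0 → _)
  rw [h]
  refine ⟨(Complex.le_def.1 hnn).1, fun h0 => ?_⟩
  rw [Matrix.conjTranspose_mul_self_mulVec_eq_zero, ← dotProduct_star_self_eq_zero]
  exact Complex.ext h0 (Complex.le_def.1 hnn).2.symm

end Complexification

open scoped ComplexOrder in
/-- For each channel `q` there are gains making the error system observable through `ỹ_q`. -/
theorem exists_observable {n m : ℕ} {mdim pdim : Fin m → ℕ} (A : Matrix (Fin n) (Fin n) ℝ)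
    (B : ∀ i : Fin m, Matrix (Fin n) (Fin (mdim i)) ℝ)
    (C : ∀ i : Fin m, Matrix (Fin (pdim i)) (Fin n) ℝ)
    (F : ∀ i : Fin m, Matrix (Fin (mdim i)) (Fin n) ℝ)
    (adj : Fin m → Fin m → Prop) [DecidableRel adj] (hself : ∀ i, adj i i)
    (hconn : ∀ i j : Fin m, Relation.ReflTransGen adj i j)
    (hjo : Observable
      (Matrix.of fun (p : Σ i : Fin m, Fin (pdim i)) k => C p.1 p.2 k) A) (q : Fin m) :
    ∃ x, Observable (Matrix.fromRows (C q * (Btil n q)ᵀ) (Ctil n adj q))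
      (Atil A B F + gainMat C adj x) := by
  let c : ∀ i, Matrix (Fin (pdim i)) (Fin n) ℂ := fun i => (C i).map Complex.ofReal
  have hjoint : ∀ (μ : ℂ) (v : Fin n → ℂ), (A.map Complex.ofReal).mulVecLin v = μ • v →
      (∀ i, ((c i)ᴴ * c i).mulVecLin v = 0) → v = 0 := fun μ v hv hr =>
    hjo.eigenvector_eq_zero hv <| funext fun p =>
      congrFun ((Matrix.conjTranspose_mul_self_mulVec_eq_zero _ _).1 (hr p.1)) p.2
  obtain ⟨h, ρ, hobs⟩ := exists_gains_observed (q := q) (hself q) (hconn q) (fun i => hconn i q)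
    (r := fun i => ((c i)ᴴ * c i).mulVecLin)
    (fun v => (exists_nonneg_functional v).imp fun φ hφ i => hφ _ (c i)) hjoint
    fun j => ((B j * F j).map Complex.ofReal).mulVecLin
  refine ⟨(fun i => ρ i • (C i)ᵀ, fun i _ => h i • 1), ?_⟩
  set M := Atil A B F + gainMat C adj (fun i => ρ i • (C i)ᵀ, fun i _ => h i • 1)
  let cx : (Fin m × Fin n → ℝ) → Fin m → Fin n → ℂ := fun e i k => (e (i, k) : ℂ)
  have hcx : ∀ e i, cx e i = fun k => ((Function.curry e i k : ℝ) : ℂ) := fun _ _ => rfl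
  specialize hobs _ fun _ _ => rfl
  set M' : (Fin m → Fin n → ℂ) → Fin m → Fin n → ℂ := fun e i =>
    (A.map Complex.ofReal).mulVecLin (e i) + (ρ i : ℂ) • ((c i)ᴴ * c i).mulVecLin (e i) +
      (h i : ℂ) • graphLap adj e i +
      ∑ j, ((B j * F j).map Complex.ofReal).mulVecLin (e i - e j)
  have hcomm : ∀ e, M' (cx e) = cx (M *ᵥ e) := fun e => by
    funext i k
    have hrow := congrFun (errorSystem_mulVec A B C F adj
      (fun i => ρ i • (C i)ᵀ, fun i _ => h i • 1) e i) k
    have hsub : ∀ j, cx e i - cx e j =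
        fun k => (((Function.curry e i - Function.curry e j) k : ℝ) : ℂ) := fun j => by
      funext k
      simp [cx, Function.curry]
    have hc : (c i)ᴴ = ((C i)ᵀ).map Complex.ofReal := by
      ext
      simp [c]
    have hlap : graphLap adj (cx e) i k =
        ((∑ j, if adj j i then Function.curry e i - Function.curry e j else 0) k : ℝ) := by
      rw [graphLap, Finset.sum_apply, Finset.sum_apply, Complex.ofReal_sum]
      refine Finset.sum_congr rfl fun j _ => ?_
      rw [hsub]
      split_ifs <;> simp
    have hb : ∀ j, ((B j * F j).map Complex.ofReal).mulVecLin (cx e i - cx e j) = fun k =>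
        ((((B j * F j) *ᵥ (Function.curry e i - Function.curry e j)) k : ℝ) : ℂ) := fun j => by
      rw [hsub, Matrix.mulVecLin_apply, map_ofReal_mulVec]
    have hsmul : ∀ j, (if adj j i then
        (h i • (1 : Matrix (Fin n) (Fin n) ℝ)) *ᵥ (Function.curry e i - Function.curry e j) else 0) =
        h i • if adj j i then Function.curry e i - Function.curry e j else 0 := fun j => by
      rw [Matrix.smul_mulVec, Matrix.one_mulVec, smul_ite, smul_zero]
    change _ = ((Function.curry (M *ᵥ e) i k : ℝ) : ℂ)
    simp only [hsmul, ← Finset.smul_sum] at hrow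
    rw [hrow]
    simp only [M', Pi.add_apply, Pi.smul_apply, Finset.sum_apply k, hb, hlap]
    simp only [hcx e i, hc, c, Matrix.mulVecLin_apply, ← Matrix.mulVec_mulVec, map_ofReal_mulVec,
      Matrix.smul_mulVec]
    simp
  have hiter : ∀ e k, M'^[k] (cx e) = cx (M ^ k *ᵥ e) := fun e k => by
    induction k with
    | zero => simp
    | succ k ih => rw [Function.iterate_succ_apply', ih, hcomm, Matrix.mulVec_mulVec, ← pow_succ']
  refine observable_of_forall fun x hx => ?_
  have hzero : cx x = 0 := hobs _ fun k => by
    rw [hiter]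
    have hk := hx k
    rw [Matrix.fromRows_mulVec] at hk
    have h1 : C q *ᵥ Function.curry (M ^ k *ᵥ x) q = 0 := by
      rw [← Btil_transpose_mulVec, Matrix.mulVec_mulVec]
      exact funext fun l => congrFun hk (Sum.inl l)
    have h2 : ∀ r, (Ctil n adj q *ᵥ (M ^ k *ᵥ x)) r = 0 := fun r => congrFun hk (Sum.inr r)
    refine ⟨?_, fun j hj => funext fun l => ?_⟩
    · rw [Matrix.mulVecLin_apply, Matrix.conjTranspose_mul_self_mulVec_eq_zero, hcx,
        map_ofReal_mulVec, h1]
      exact funext fun _ => Complex.ofReal_zero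
    · have := h2 (⟨j, hj⟩, l)
      rw [Ctil_mulVec, Pi.sub_apply, sub_eq_zero] at this
      exact congrArg Complex.ofReal this
  exact funext fun p => Complex.ofReal_eq_zero.1 (congrFun₂ hzero p.1 p.2)

open scoped Kronecker in
/-- The transposed weighted tree Laplacian is observable from the root. -/
theorem tree_rank_ctrbMat {V κ : Type*} [Fintype V] [DecidableEq V] [Fintype κ] [DecidableEq κ]
    {q : V} {par : V → V} {dep : V → ℕ} (hpar : ∀ i, i ≠ q → dep (par i) + 1 = dep i)
    {d : V → ℝ} (hd : Function.Injective d) (hdq : d q = 0) :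
    (ctrbMat ((Matrix.of fun i j => d i * ((if j = i then 1 else 0) - if par i = j then 1 else 0))
      ⊗ₖ (1 : Matrix κ κ ℝ)) (Matrix.of fun (p : V × κ) l => if p.1 = q ∧ p.2 = l then (1 : ℝ) else 0)
      (Fintype.card V)).rank = Fintype.card (V × κ) := by
  set L : Matrix V V ℝ :=
    Matrix.of fun i j => d i * ((if j = i then 1 else 0) - if par i = j then 1 else 0) with hL
  let c : Matrix Unit V ℝ := Matrix.of fun _ i => if i = q then 1 else 0
  have hobs : Observable c Lᵀ := observable_of_eigenvector fun μ w hw hc => by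
    refine tree_left_eigenvector_eq_zero (q := q) hpar (d := fun i => (d i : ℂ))
      (fun i j hij => hd (Complex.ofReal_injective hij)) (by simp [hdq]) (μ := μ)
      (by simpa [c, Matrix.mulVec, dotProduct, apply_ite Complex.ofReal] using congrFun hc ()) fun j => ?_
    rw [← smul_eq_mul μ, ← Pi.smul_apply, ← hw]
    have hsum : ∀ i, (if i ≠ q ∧ par i = j then (d i : ℂ) * w i else 0) =
        if par i = j then (d i : ℂ) * w i else 0 := fun i => by
      by_cases hi : i = q
      · simp [hi, hdq]
      · simp [hi]
    simp only [hsum]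
    simp [hL, Matrix.mulVec, dotProduct, mul_sub, sub_mul, Finset.sum_sub_distrib,
      apply_ite Complex.ofReal]
  rw [observable_iff] at hobs
  rw [ctrbMat_rank_eq_card_iff]
  intro y hy
  have hpow : ∀ j, (L ⊗ₖ (1 : Matrix κ κ ℝ)) ^ j = (L ^ j) ⊗ₖ 1 := fun j => by
    induction j with
    | zero => rw [pow_zero, pow_zero, Matrix.one_kronecker_one]
    | succ j ih => rw [pow_succ, ih, ← Matrix.mul_kronecker_mul, ← pow_succ, Matrix.mul_one]
  have hcol : ∀ k, (fun i => y (i, k)) = 0 := fun k => hobs _ fun j hj => by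
    have hjk := congrFun (hy j hj) k
    rw [hpow, ← Matrix.vecMul_vecMul] at hjk
    funext u
    rw [← Matrix.transpose_pow]
    simpa [c, Matrix.mulVec, Matrix.vecMul, dotProduct, Fintype.sum_prod_type, ite_and,
      Matrix.one_apply, mul_comm] using hjk
  exact funext fun p => congrFun (hcol p.2) p.1

theorem rank_ctrbMat_smul {ι κ : Type*} [Fintype ι] [DecidableEq ι] [Fintype κ]
    {A : Matrix ι ι ℝ} {B : Matrix ι κ ℝ} {k : ℕ} {s : ℝ} (hs : s ≠ 0)
    (h : (ctrbMat A B k).rank = Fintype.card ι) :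
    (ctrbMat (s • A) B k).rank = Fintype.card ι := by
  rw [ctrbMat_rank_eq_card_iff] at h ⊢
  refine fun y hy => h y fun j hj => ?_
  have := hy j hj
  rwa [smul_pow, Matrix.smul_mul, Matrix.vecMul_smul, smul_eq_zero_iff_right (pow_ne_zero j hs)]
    at this

open scoped Kronecker in
/-- For each channel `q` there are gains making the error system controllable by `ũ_q` in `m`
steps. -/
theorem exists_rank_ctrbMat {n m : ℕ} {mdim pdim : Fin m → ℕ} (A : Matrix (Fin n) (Fin n) ℝ)
    (B : ∀ i : Fin m, Matrix (Fin n) (Fin (mdim i)) ℝ)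
    (C : ∀ i : Fin m, Matrix (Fin (pdim i)) (Fin n) ℝ)
    (F : ∀ i : Fin m, Matrix (Fin (mdim i)) (Fin n) ℝ)
    (adj : Fin m → Fin m → Prop) [DecidableRel adj]
    (hconn : ∀ i j : Fin m, Relation.ReflTransGen adj i j) (q : Fin m) :
    ∃ x, (ctrbMat (Atil A B F + gainMat C adj x) (Btil n q) m).rank =
      Fintype.card (Fin m × Fin n) := by
  obtain ⟨dep, par, hpar⟩ := exists_depth_parent adj q (hconn q)
  let d : Fin m → ℝ := fun i => (i : ℝ) - q
  have hd : Function.Injective d := fun i j hij => Fin.ext (by simpa [d] using hij)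
  have hdq : d q = 0 := sub_self _
  let x₁ : (∀ i : Fin m, Matrix (Fin n) (Fin (pdim i)) ℝ) ×
    (Fin m → Fin m → Matrix (Fin n) (Fin n) ℝ) := (0, fun i j => if par i = j then d i • 1 else 0)
  have hG : gainMat C adj x₁ = (Matrix.of fun i j =>
      d i * ((if j = i then 1 else 0) - if par i = j then 1 else 0)) ⊗ₖ 1 := by
    refine Matrix.ext_of_mulVec_single fun p => funext fun p' => ?_
    set e : Fin m × Fin n → ℝ := Pi.single p 1
    change Function.curry (gainMat C adj x₁ *ᵥ e) p'.1 p'.2 = _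
    have hterm : ∀ j, (if adj j p'.1 then
        x₁.2 p'.1 j *ᵥ (Function.curry e p'.1 - Function.curry e j) else 0) =
        if par p'.1 = j then d p'.1 • (Function.curry e p'.1 - Function.curry e j) else 0 := by
      intro j
      by_cases hj : par p'.1 = j
      · by_cases hq : p'.1 = q
        · simp [x₁, hq, hdq]
        · rw [if_pos (hj ▸ (hpar _ hq).1), if_pos hj]
          simp [x₁, hj, Matrix.smul_mulVec]
      · simp [x₁, hj]
    rw [gainMat_mulVec]
    simp only [hterm]
    simp [x₁, Matrix.mulVec, dotProduct, Fintype.sum_prod_type, Function.curry, mul_sub, sub_mul,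
      Finset.sum_sub_distrib, Matrix.one_apply]
  have hbase : (ctrbMat (gainMat C adj x₁) (Btil n q) m).rank = Fintype.card (Fin m × Fin n) := by
    have := tree_rank_ctrbMat (κ := Fin n) (fun i hi => (hpar i hi).2) hd hdq
    rwa [← hG, Fintype.card_fin] at this
  have hopen : PolynomiallyOpen fun s : ℝ =>
      (ctrbMat (gainMat C adj x₁ + s • Atil A B F) (Btil n q) m).rank =
        Fintype.card (Fin m × Fin n) :=
    polynomiallyOpen_rank_ctrbMat (L := fun b => b • Atil A B F)
      (fun a b t => by simp only [smul_eq_mul]; module) _ _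
  have hne : PolynomiallyOpen fun s : ℝ => s ≠ 0 := fun a b =>
    ⟨Polynomial.C a + Polynomial.X * Polynomial.C b, fun t => by simp [mul_comm t]⟩
  obtain ⟨s, hs, hs0⟩ := hopen.exists_and hne ⟨0, by simpa using hbase⟩ ⟨1, one_ne_zero⟩
  refine ⟨s⁻¹ • x₁, ?_⟩
  have h0 : gainMat C adj (s⁻¹ • x₁) = s⁻¹ • gainMat C adj x₁ := by
    have h1 := gainMat_add_smul C adj 0 0 1
    have h2 := gainMat_add_smul C adj 0 x₁ s⁻¹
    rw [one_smul, one_smul, add_zero, left_eq_add] at h1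
    rwa [h1, zero_add, zero_add] at h2
  convert rank_ctrbMat_smul (inv_ne_zero hs0) hs using 3
  rw [h0, smul_add, inv_smul_smul₀ hs0, add_comm]

/-- **Proposition 1.** There are matrices `Kᵢ`, `H_{ij}` (`j ∈ 𝒩ᵢ`)
such that for every `q`, the open-loop error system
`M = Ã + Σᵢ B̃ᵢ(KᵢĈᵢ + HᵢC̃ᵢ)` is controllable by `ũ_q` (through `B̃_q`) with
controllability index `m`, and observable through `ỹ_q = col{Ĉ_q, C̃_q}`. -/
theorem open_loop_error_system_ctrb_obs
    {n m : ℕ} (hn : 0 < n) (hm : 1 < m)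
    (mdim pdim : Fin m → ℕ)
    (A : Matrix (Fin n) (Fin n) ℝ)
    (B : ∀ i : Fin m, Matrix (Fin n) (Fin (mdim i)) ℝ)
    (C : ∀ i : Fin m, Matrix (Fin (pdim i)) (Fin n) ℝ)
    (adj : Fin m → Fin m → Prop) [DecidableRel adj]
    (hself : ∀ i, adj i i)
    (hconn : ∀ i j : Fin m, Relation.ReflTransGen adj i j)
    (hBne : ∀ i, B i ≠ 0) (hCne : ∀ i, C i ≠ 0)
    (hjc : Controllable A
      (Matrix.of fun k (p : Σ i : Fin m, Fin (mdim i)) => B p.1 k p.2))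
    (hjo : Observable
      (Matrix.of fun (p : Σ i : Fin m, Fin (pdim i)) k => C p.1 p.2 k) A)
    (F : ∀ i : Fin m, Matrix (Fin (mdim i)) (Fin n) ℝ) :
    ∃ (K : ∀ i : Fin m, Matrix (Fin n) (Fin (pdim i)) ℝ)
      (H : Fin m → Fin m → Matrix (Fin n) (Fin n) ℝ),
      ∀ q : Fin m,
        Controllable
          (Atil A B F
            + ∑ i : Fin m,
                Btil n i * (K i * (C i * (Btil n i)ᵀ) + Hblk adj H i * Ctil n adj i))
          (Btil n q)
        ∧ ctrlIndex
            (Atil A B F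
              + ∑ i : Fin m,
                  Btil n i * (K i * (C i * (Btil n i)ᵀ) + Hblk adj H i * Ctil n adj i))
            (Btil n q) = m
        ∧ Observable
            (Matrix.fromRows (C q * (Btil n q)ᵀ) (Ctil n adj q))
            (Atil A B F
              + ∑ i : Fin m,
                  Btil n i * (K i * (C i * (Btil n i)ᵀ) + Hblk adj H i * Ctil n adj i)) := by
  have hMC : ∀ a b (t : ℝ), Atil A B F + gainMat C adj (a + t • b) =
      Atil A B F + gainMat C adj a + t • gainMat C adj b := fun a b t => by
    rw [gainMat_add_smul, add_assoc]
  have hMO : ∀ a b (t : ℝ), (Atil A B F + gainMat C adj (a + t • b))ᵀ =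
      (Atil A B F + gainMat C adj a)ᵀ + t • (gainMat C adj b)ᵀ := fun a b t => by
    rw [hMC, Matrix.transpose_add, Matrix.transpose_smul]
  have hctrb := fun q => polynomiallyOpen_rank_ctrbMat
    (M := fun x => Atil A B F + gainMat C adj x) (L := fun x => gainMat C adj x) hMC (Btil n q) m
  have hobsv := fun q => polynomiallyOpen_rank_ctrbMat
    (M := fun x => (Atil A B F + gainMat C adj x)ᵀ) (L := fun x => (gainMat C adj x)ᵀ) hMO
    (Matrix.fromRows (C q * (Btil n q)ᵀ) (Ctil n adj q))ᵀ (Fintype.card (Fin m × Fin n))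
  obtain ⟨x, hx⟩ := (PolynomiallyOpen.forall_mem (fun q => (hctrb q).and (hobsv q))
    (fun q => (hctrb q).exists_and (hobsv q) (exists_rank_ctrbMat A B C F adj hconn q)
      (exists_observable A B C F adj hself hconn hjo q)) Finset.univ).2
  have hcard : Fintype.card (Fin m × Fin n) = m * Fintype.card (Fin n) := by
    rw [Fintype.card_prod, Fintype.card_fin]
  refine ⟨x.1, x.2, fun q => ?_⟩
  obtain ⟨hc, ho⟩ := hx q (Finset.mem_univ q)
  refine ⟨ctrbMat_rank_eq_card_of_le ?_ hc,
    ctrlIndex_eq_of_rank (by omega) (by rwa [Fintype.card_fin]) hcard hc, ho⟩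
  rw [hcard, Fintype.card_fin]
  exact Nat.le_mul_of_pos_right m hn
end
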